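/- Let p: ℝⁿ → [1,∞) be a measurable function satisfying 1 < p_- := ess inf p and p_+ := ess sup p < ∞, let the kernel K(x) = Ω(x)/|x|ⁿ have odd Ω, and let b be a locally integrable function belonging to L log L(Q) for every cube Q ⊂ ℝⁿ. If there is C ≥ 0 with ‖[b,T]f‖_{L^{p(·)}} ≤ C ‖f‖_{L^{p(·)}} for all f ∈ L^∞_c, then ‖[b,T]f‖_{L^{p'(·)}} ≤ r_p C ‖f‖_{L^{p'(·)}} for all f ∈ L^∞_c, where r_p := 1 + 1/p_- − 1/p_+; hence [b,T] extends to a bounded operator on L^{p'(·)}(ℝⁿ) with norm at most r_p C. -/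

import Mathlib

/-!
The commutator `[b,T]` of an odd Calderón–Zygmund operator is its own transpose: the oddness of `Ω`
makes each truncation `T_ε` antisymmetric, so that `∫ ([b,T]f) g = ∫ f ([b,T]g)`. A bound on
`L^{p(·)}` then gives one on the dual space `L^{p'(·)}`. Hölder's inequality for variable exponents,
proved from Young's inequality, has the constant `r_p` (`holder_rp`); conversely, the norm in
`L^{p'(·)}` is recovered with constant one by testing against the functions `sign(h) |h|^{p'-1}`
(`norm_conj`). This accounts for the factor `r_p`.

The analytic difficulty is to justify the duality for functions `b` that are only in `L log L`
locally. One needs the principal value `T(bf)` to exist a.e., and the limit `ε → 0` to pass under the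
integral sign in `∫ T_ε(bf) g = -∫ b f T_ε g`. The second point requires a locally integrable
majorant of `T_ε(bf)`, and the maximal truncated integral is one since `bf` is in `L log L`
(`Tsq_llogl`); this follows by interpolation between its weak type (1,1) and weak type (2,2) bounds
(`Tst_weak1`, `Tst_weak2`). These bounds come from a smooth dyadic decomposition of the kernel into
rescaled copies of one odd smooth function of compact support: the partial sums are uniformly bounded
on `L²` by the Fourier transform (`Fk_L2`), their maximal function is controlled by the
Hardy–Littlewood maximal function through an inequality of Cotlar type (`cotlar`), and a
Calderón–Zygmund decomposition built on a Vitali cover (`cz_decomp`) gives the weak type (1,1)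
(`Sst_weak1`). The weak type bound also yields the existence of the principal value (`Tsing_ae`).

The duality is proved for Lipschitz functions of compact support (`commutator_symm`), where `T_ε f` is
bounded uniformly in `ε`, and gives the theorem for such `f` (`commutator_nice`). A general bounded
`f` of compact support is the limit of Lipschitz functions along which the commutators converge a.e.
(`commutator_seq`, by the weak type bound and Borel–Cantelli), and the Fatou property of the Luxemburg
norm (`vNorm_fatou`) concludes.
-/

open MeasureTheory ENNReal Filter Set Topology

noncomputable section

namespace VarExp

/-- Euclidean space ℝⁿ. -/
abbrev E (n : ℕ) := EuclideanSpace ℝ (Fin n)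

/-- An axis-parallel cube in ℝⁿ. -/
def IsCube {n : ℕ} (Q : Set (E n)) : Prop :=
  ∃ (a : E n) (h : ℝ), 0 < h ∧ Q = {x : E n | ∀ i, a i ≤ x i ∧ x i ≤ a i + h}

/-- The average of `f` over a set `Q` (w.r.t. Lebesgue measure). -/
def cubeAvg {n : ℕ} (Q : Set (E n)) (f : E n → ℝ) : ℝ :=
  (volume Q).toReal⁻¹ * ∫ x in Q, f x

/-- The BMO seminorm `‖b‖_* = sup_Q |Q|⁻¹ ∫_Q |b - b_Q|`. -/
def bmoNorm {n : ℕ} (b : E n → ℝ) : ℝ≥0∞ :=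
  ⨆ (Q : Set (E n)) (_ : IsCube Q),
    (∫⁻ x in Q, ENNReal.ofReal |b x - cubeAvg Q b|) / volume Q

/-- `b ∈ BMO(ℝⁿ)`. -/
def MemBMO {n : ℕ} (b : E n → ℝ) : Prop :=
  LocallyIntegrable b volume ∧ bmoNorm b < ⊤

/-- Hardy-Littlewood maximal function (over axis-parallel cubes) of an
`ℝ≥0∞`-valued function. -/
def emaximal {n : ℕ} (f : E n → ℝ≥0∞) (x : E n) : ℝ≥0∞ :=
  ⨆ (Q : Set (E n)) (_ : IsCube Q ∧ x ∈ Q), (∫⁻ y in Q, f y) / volume Q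

/-- Hardy-Littlewood maximal function of a real function. -/
def maximal {n : ℕ} (f : E n → ℝ) : E n → ℝ≥0∞ :=
  emaximal (fun y => ENNReal.ofReal |f y|)

/-- Luxemburg-Nakano norm of an `ℝ≥0∞`-valued function for a variable exponent `p`. -/
def eLux {n : ℕ} (p : E n → ℝ) (f : E n → ℝ≥0∞) : ℝ≥0∞ :=
  sInf {lam : ℝ≥0∞ | lam ≠ 0 ∧ ∫⁻ x, (f x / lam) ^ (p x) ≤ 1}

/-- Luxemburg-Nakano norm `‖f‖_{L^{p(·)}}` of a real function. -/
def vNorm {n : ℕ} (p : E n → ℝ) (f : E n → ℝ) : ℝ≥0∞ :=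
  eLux p (fun x => ENNReal.ofReal |f x|)

/-- Membership `f ∈ L^{p(·)}(ℝⁿ)`: the modular of `λf` is finite for some `λ > 0`. -/
def MemVarLp {n : ℕ} (p : E n → ℝ) (f : E n → ℝ) : Prop :=
  AEStronglyMeasurable f volume ∧
    ∃ lam : ℝ, 0 < lam ∧ ∫⁻ x, (ENNReal.ofReal (lam * |f x|)) ^ (p x) < ⊤

/-- Condition (*): `p` measurable, `1 ≤ p`, `1 < p_- := essinf p` and
`p_+ := esssup p < ∞` (i.e. `p` essentially bounded above). -/
def GoodExp {n : ℕ} (p : E n → ℝ) : Prop :=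
  Measurable p ∧ (∀ x, 1 ≤ p x) ∧ 1 < essInf p volume ∧
    ∃ B : ℝ, ∀ᵐ x ∂(volume : Measure (E n)), p x ≤ B

/-- The constant `r_p := 1 + 1/p_- - 1/p_+`. -/
def rp {n : ℕ} (p : E n → ℝ) : ℝ :=
  1 + (essInf p volume)⁻¹ - (essSup p volume)⁻¹

/-- The conjugate exponent `p'(x) = p(x)/(p(x)-1)`. -/
def conjExp {n : ℕ} (p : E n → ℝ) : E n → ℝ := fun x => p x / (p x - 1)

/-- The class `𝓜(ℝⁿ)`: `p` satisfies (*) and the Hardy-Littlewood maximal operator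
is bounded on `L^{p(·)}(ℝⁿ)`. -/
def MemClassM {n : ℕ} (p : E n → ℝ) : Prop :=
  GoodExp p ∧ ∃ c : ℝ≥0∞, c ≠ ⊤ ∧ ∀ f : E n → ℝ, AEStronglyMeasurable f volume →
    eLux p (maximal f) ≤ c * vNorm p f

/-- Bounded measurable functions with compact support. -/
def MemLinftyC {n : ℕ} (f : E n → ℝ) : Prop :=
  Measurable f ∧ (∃ C : ℝ, ∀ x, |f x| ≤ C) ∧ HasCompactSupport f

/-- The Calderón-Zygmund kernel data: `Ω` is homogeneous of degree zero, infinitely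
differentiable away from the origin (equivalently, on the unit sphere), and has
mean value zero over the unit sphere (expressed, via homogeneity, as mean zero
over the annulus `1 ≤ ‖x‖ ≤ 2`). -/
structure IsCZKernel {n : ℕ} (Ω : E n → ℝ) : Prop where
  hom : ∀ (x : E n) (t : ℝ), 0 < t → Ω (t • x) = Ω x
  smooth : ContDiffOn ℝ (⊤ : ℕ∞) Ω {x : E n | x ≠ 0}
  mean : ∫ x in {x : E n | 1 ≤ ‖x‖ ∧ ‖x‖ ≤ 2}, Ω x = 0

/-- The kernel `K(x) = Ω(x)/|x|ⁿ`. -/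
def kernelFn {n : ℕ} (Ω : E n → ℝ) : E n → ℝ := fun x => Ω x / ‖x‖ ^ n

/-- The truncated kernel `K_ε = K·χ_{|y|>ε}`. -/
def kernelEps {n : ℕ} (Ω : E n → ℝ) (ε : ℝ) : E n → ℝ :=
  fun y => if ε < ‖y‖ then kernelFn Ω y else 0

/-- The truncated singular integral `T_ε f(x) = ∫_{|y|>ε} K(y) f(x-y) dy`. -/
def Teps {n : ℕ} (Ω : E n → ℝ) (ε : ℝ) (f : E n → ℝ) (x : E n) : ℝ :=
  ∫ y in {y : E n | ε < ‖y‖}, kernelFn Ω y * f (x - y)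

/-- The principal value singular integral `T f(x) = lim_{ε→0⁺} T_ε f(x)`. -/
def Tsing {n : ℕ} (Ω : E n → ℝ) (f : E n → ℝ) (x : E n) : ℝ :=
  limUnder (𝓝[>] (0 : ℝ)) (fun ε => Teps Ω ε f x)

/-- The commutator `[b,T]f = b·Tf - T(bf)`. -/
def commutator {n : ℕ} (b : E n → ℝ) (Ω : E n → ℝ) (f : E n → ℝ) : E n → ℝ :=
  fun x => b x * Tsing Ω f x - Tsing Ω (fun y => b y * f y) x

/-- The non-increasing rearrangement `f^*(t)` (ℝ≥0∞-valued, `t ∈ ℝ≥0∞`). -/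
def rearr {n : ℕ} (f : E n → ℝ) (t : ℝ≥0∞) : ℝ≥0∞ :=
  sInf {α : ℝ≥0∞ | volume {x : E n | α < ENNReal.ofReal |f x|} ≤ t}

/-- The local sharp maximal function
`M_λ^# f(x) = sup_{Q ∋ x} inf_c ((f-c)χ_Q)^*(λ|Q|)`. -/
def localSharp {n : ℕ} (lam : ℝ) (f : E n → ℝ) (x : E n) : ℝ≥0∞ :=
  ⨆ (Q : Set (E n)) (_ : IsCube Q ∧ x ∈ Q),
    ⨅ c : ℝ, rearr (Q.indicator (fun y => f y - c)) (ENNReal.ofReal lam * volume Q)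

/-- The sharp maximal function
`f_δ^#(x) = sup_{Q ∋ x} inf_c (|Q|⁻¹ ∫_Q |f-c|^δ)^{1/δ}`. -/
def sharpDelta {n : ℕ} (δ : ℝ) (f : E n → ℝ) (x : E n) : ℝ≥0∞ :=
  ⨆ (Q : Set (E n)) (_ : IsCube Q ∧ x ∈ Q),
    ⨅ c : ℝ, ((∫⁻ y in Q, ENNReal.ofReal (|f y - c| ^ δ)) / volume Q) ^ (1 / δ)

/-- `f ∈ L^δ_loc(ℝⁿ)` (local δ-integrability over cubes). -/
def MemLdeltaLoc {n : ℕ} (δ : ℝ) (f : E n → ℝ) : Prop :=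
  AEStronglyMeasurable f volume ∧
    ∀ Q : Set (E n), IsCube Q → ∫⁻ y in Q, ENNReal.ofReal (|f y| ^ δ) < ⊤

/-- `f ∈ L log L(Q)`: `∫_Q |f| log⁺|f| < ∞`. -/
def MemLlogL {n : ℕ} (Q : Set (E n)) (f : E n → ℝ) : Prop :=
  AEStronglyMeasurable f volume ∧
    ∫⁻ x in Q, ENNReal.ofReal (|f x| * Real.log (max |f x| 1)) < ⊤

/-- `g ∈ L_exp(Q)`: `∫_Q exp(λ|g|) < ∞` for some `λ > 0`. -/
def MemLexp {n : ℕ} (Q : Set (E n)) (g : E n → ℝ) : Prop :=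
  AEStronglyMeasurable g volume ∧
    ∃ lam : ℝ, 0 < lam ∧ ∫⁻ x in Q, ENNReal.ofReal (Real.exp (lam * |g x|)) < ⊤

/-- `f^{**}(t) = t⁻¹ ∫_0^t f^*(s) ds`. -/
def starStar {n : ℕ} (f : E n → ℝ) (t : ℝ) : ℝ≥0∞ :=
  (∫⁻ s in Set.Ioc (0 : ℝ) t, rearr f (ENNReal.ofReal s)) / ENNReal.ofReal t

/-- The Zygmund norm `‖f‖_{L log L(Q)} = ∫_0^{|Q|} (fχ_Q)^{**}(t) dt`. -/
def llogLNorm {n : ℕ} (Q : Set (E n)) (f : E n → ℝ) : ℝ≥0∞ :=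
  ∫⁻ t in Set.Ioc (0 : ℝ) (volume Q).toReal, starStar (Q.indicator f) t

/-- The norm `‖g‖_{L_exp(Q)} = sup_{0<t<|Q|} g^{**}(t)/(1 + log(|Q|/t))`. -/
def lexpNorm {n : ℕ} (Q : Set (E n)) (g : E n → ℝ) : ℝ≥0∞ :=
  ⨆ (t : ℝ) (_ : t ∈ Set.Ioo (0 : ℝ) (volume Q).toReal),
    starStar (Q.indicator g) t / ENNReal.ofReal (1 + Real.log ((volume Q).toReal / t))

/-- The Orlicz-type norm `‖f‖⁰ = sup {∫ |fg| : ‖g‖_{L^{p'(·)}} ≤ 1}`. -/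
def orliczNorm {n : ℕ} (p : E n → ℝ) (f : E n → ℝ) : ℝ≥0∞ :=
  ⨆ (g : E n → ℝ) (_ : MemVarLp (conjExp p) g ∧ vNorm (conjExp p) g ≤ 1),
    ∫⁻ x, ENNReal.ofReal |f x * g x|

/-- The associate (Köthe dual) norm of `L^{p(·)}`:
`‖g‖' = sup {∫ |gh| : ‖h‖_{L^{p(·)}} ≤ 1}`. -/
def assocNorm {n : ℕ} (p : E n → ℝ) (g : E n → ℝ) : ℝ≥0∞ :=
  ⨆ (h : E n → ℝ) (_ : MemVarLp p h ∧ vNorm p h ≤ 1),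
    ∫⁻ x, ENNReal.ofReal |g x * h x|

section

open Metric

/-! ### Vitali covering and the centred maximal function -/

/-- A Vitali selection at height `α`: countably many disjoint balls on which `|h|` has density
at least `α`, whose fivefold enlargements have density at most `α`, and such that every ball
centred outside the union of the enlargements has density at most `α`. -/
lemma exists_cover {n : ℕ} (hn : 0 < n) (h : E n → ℝ) (hh : Integrable h) (α : ℝ) (hα : 0 < α) :
    ∃ (u : Set (E n)) (r : E n → ℝ), u.Countable ∧ (∀ c ∈ u, 0 < r c) ∧
      u.PairwiseDisjoint (fun c => closedBall c (r c)) ∧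
      (∀ c ∈ u, ENNReal.ofReal (α * r c ^ n) ≤ ∫⁻ y in closedBall c (r c), ‖h y‖ₑ) ∧
      (∀ c ∈ u, ∫⁻ y in closedBall c (5 * r c), ‖h y‖ₑ ≤ ENNReal.ofReal (α * (5 * r c) ^ n)) ∧
      (∀ x ∉ ⋃ c ∈ u, closedBall c (5 * r c), ∀ ρ : ℝ, 0 < ρ →
        ∫⁻ y in closedBall x ρ, ‖h y‖ₑ ≤ ENNReal.ofReal (α * ρ ^ n)) := by
  -- `A x` is the set of heavy radii at `x`; it is bounded because `h` is integrable.
  set I : ℝ := (∫⁻ y, ‖h y‖ₑ).toReal with hI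
  have hIfin : ∫⁻ y, ‖h y‖ₑ ≠ ⊤ := hh.2.ne
  let A : E n → Set ℝ := fun x =>
    {ρ | 0 < ρ ∧ ENNReal.ofReal (α * ρ ^ n) < ∫⁻ y in closedBall x ρ, ‖h y‖ₑ}
  have hA : ∀ x, ∀ ρ ∈ A x, ρ ≤ max 1 (I / α) := by
    rintro x ρ ⟨h0, h1⟩
    rcases le_total ρ 1 with h2 | h2
    · exact le_max_of_le_left h2
    · apply le_max_of_le_right
      have h3 : ENNReal.ofReal (α * ρ ^ n) ≤ ∫⁻ y, ‖h y‖ₑ :=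
        h1.le.trans (setLIntegral_le_lintegral _ _)
      rw [ENNReal.ofReal_le_iff_le_toReal hIfin] at h3
      rw [le_div_iff₀ hα]
      have h4 : ρ ≤ ρ ^ n := le_self_pow₀ h2 hn.ne'
      nlinarith
  -- A radius beyond half the supremum is heavy while five times that radius is light.
  have hsel : ∀ x, ∃ ρ, (A x).Nonempty → ρ ∈ A x ∧ 5 * ρ ∉ A x := by
    intro x
    by_cases hx : (A x).Nonempty
    · have hb : BddAbove (A x) := ⟨_, hA x⟩
      have hpos : 0 < sSup (A x) := by
        obtain ⟨ρ, hρ⟩ := hx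
        exact hρ.1.trans_le (le_csSup hb hρ)
      obtain ⟨ρ, hρ, hρ2⟩ := exists_lt_of_lt_csSup hx (half_lt_self hpos)
      refine ⟨ρ, fun _ => ⟨hρ, fun h5 => ?_⟩⟩
      have := le_csSup hb h5
      linarith
    · exact ⟨0, fun h => absurd h hx⟩
  choose r hr using hsel
  obtain ⟨u, hut, hdisj, hcov⟩ := Vitali.exists_disjoint_subfamily_covering_enlargement_closedBall
    {x | (A x).Nonempty} (fun x => x) r (max 1 (I / α)) (fun a ha => hA a _ (hr a ha).1) 5
    (by norm_num)
  refine ⟨u, r, ?_, fun c hc => (hr c (hut hc)).1.1, hdisj, fun c hc => (hr c (hut hc)).1.2.le,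
    fun c hc => ?_, ?_⟩
  · refine hdisj.countable_of_nonempty_interior fun c hc => ?_
    exact ⟨c, ball_subset_interior_closedBall (mem_ball_self (hr c (hut hc)).1.1)⟩
  · have h1 := (hr c (hut hc)).2
    by_contra hcon
    push Not at hcon
    exact h1 ⟨by linarith [(hr c (hut hc)).1.1], hcon⟩
  · intro x hx ρ hρ
    by_contra hcon
    push Not at hcon
    have hne : (A x).Nonempty := ⟨ρ, hρ, hcon⟩
    obtain ⟨b, hb, hsub⟩ := hcov x hne
    apply hx
    simp only [mem_iUnion]
    exact ⟨b, hb, hsub (mem_closedBall_self (hr x hne).1.1.le)⟩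

/-- The volume of the closed unit ball, as a real number. -/
def vB (n : ℕ) : ℝ := (volume (closedBall (0 : E n) 1)).toReal

lemma vB_pos (n : ℕ) : 0 < vB n :=
  ENNReal.toReal_pos (measure_closedBall_pos _ _ one_pos).ne' measure_closedBall_lt_top.ne

lemma vol_closedBall {n : ℕ} (x : E n) {r : ℝ} (hr : 0 ≤ r) :
    volume (closedBall x r) = ENNReal.ofReal (vB n * r ^ n) := by
  rw [Measure.addHaar_closedBall' _ _ hr, mul_comm (vB n), ENNReal.ofReal_mul (by positivity), vB,
    ENNReal.ofReal_toReal measure_closedBall_lt_top.ne]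
  simp

/-- The Hardy–Littlewood maximal function over centred balls, normalised by `r ^ n` instead of the
volume of the ball. -/
def bMax {n : ℕ} (h : E n → ℝ) (x : E n) : ℝ≥0∞ :=
  ⨆ (r : ℝ) (_ : 0 < r), (∫⁻ y in closedBall x r, ‖h y‖ₑ) / ENNReal.ofReal (r ^ n)

lemma le_bMax {n : ℕ} (h : E n → ℝ) (x : E n) {r : ℝ} (hr : 0 < r) :
    ∫⁻ y in closedBall x r, ‖h y‖ₑ ≤ ENNReal.ofReal (r ^ n) * bMax h x := by
  have : (∫⁻ y in closedBall x r, ‖h y‖ₑ) / ENNReal.ofReal (r ^ n) ≤ bMax h x :=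
    le_iSup₂_of_le r hr le_rfl
  rw [ENNReal.div_le_iff (by simp; positivity) ENNReal.ofReal_ne_top] at this
  rwa [mul_comm]

/-- Disjoint balls of density at least `α`, enlarged `κ` times, have total measure controlled by
`‖h‖₁ / α`. -/
lemma cover_sum {n : ℕ} {h : E n → ℝ} {α : ℝ} (hα : 0 < α) {u : Set (E n)} {r : E n → ℝ}
    (hu : u.Countable) (hr : ∀ c ∈ u, 0 < r c)
    (hd : u.PairwiseDisjoint (fun c => closedBall c (r c)))
    (h1 : ∀ c ∈ u, ENNReal.ofReal (α * r c ^ n) ≤ ∫⁻ y in closedBall c (r c), ‖h y‖ₑ) (κ : ℝ)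
    (hκ : 0 ≤ κ) :
    volume (⋃ c ∈ u, closedBall c (κ * r c)) ≤
      ENNReal.ofReal (vB n * κ ^ n / α) * ∫⁻ y, ‖h y‖ₑ := by
  have := hu.to_subtype
  calc volume (⋃ c ∈ u, closedBall c (κ * r c)) ≤ ∑' c : u, volume (closedBall c.1 (κ * r c)) :=
        measure_biUnion_le _ hu _
    _ ≤ ∑' c : u, ENNReal.ofReal (vB n * κ ^ n / α) * ∫⁻ y in closedBall c.1 (r c), ‖h y‖ₑ := by
        gcongr with c
        have hrc := hr c c.2
        rw [vol_closedBall _ (by positivity)]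
        grw [← h1 c c.2]
        rw [← ENNReal.ofReal_mul (by have := vB_pos n; positivity)]
        apply le_of_eq
        congr 1
        field_simp
        ring
    _ = ENNReal.ofReal (vB n * κ ^ n / α) * ∫⁻ y in ⋃ c ∈ u, closedBall c (r c), ‖h y‖ₑ := by
        rw [ENNReal.tsum_mul_left, lintegral_biUnion hu (fun c _ => measurableSet_closedBall) hd]
    _ ≤ _ := by gcongr; exact Measure.restrict_le_self

lemma bMax_weak {n : ℕ} (hn : 0 < n) (h : E n → ℝ) (hh : Integrable h) (α : ℝ) (hα : 0 < α) :
    volume {x | ENNReal.ofReal α < bMax h x} ≤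
      ENNReal.ofReal (vB n * 5 ^ n / α) * ∫⁻ y, ‖h y‖ₑ := by
  obtain ⟨u, r, hu, hr, hd, h1, h2, h3⟩ := exists_cover hn h hh α hα
  refine (measure_mono ?_).trans (cover_sum hα hu hr hd h1 5 (by norm_num))
  intro x hx
  by_contra hcon
  have := h3 x hcon
  have hx' : ENNReal.ofReal α < bMax h x := hx
  refine absurd hx' (not_lt.2 (iSup₂_le fun ρ hρ => ?_))
  rw [ENNReal.div_le_iff (by simp; positivity) ENNReal.ofReal_ne_top, ← ENNReal.ofReal_mul hα.le]
  exact this ρ hρ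

/-- Cauchy–Schwarz on each ball. -/
lemma bMax_sq {n : ℕ} (h : E n → ℝ) (hm : AEStronglyMeasurable h) (x : E n) :
    bMax h x ^ 2 ≤ ENNReal.ofReal (vB n) * bMax (fun y => h y ^ 2) x := by
  suffices hs : bMax h x ≤ (ENNReal.ofReal (vB n) * bMax (fun y => h y ^ 2) x) ^ (2⁻¹ : ℝ) by
    rw [ENNReal.le_rpow_inv_iff two_pos] at hs
    exact_mod_cast hs
  refine iSup₂_le fun r hr => ?_
  rw [ENNReal.le_rpow_inv_iff two_pos]
  norm_cast
  refine le_trans ?_ (mul_le_mul_right (le_iSup₂_of_le r hr le_rfl) _)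
  have hcs : (∫⁻ y in closedBall x r, ‖h y‖ₑ) ^ 2 ≤
      volume (closedBall x r) * ∫⁻ y in closedBall x r, ‖h y ^ 2‖ₑ := by
    have := ENNReal.lintegral_mul_le_Lp_mul_Lq (volume.restrict (closedBall x r))
      (Real.HolderConjugate.two_two) (f := fun _ => 1) (g := fun y => ‖h y‖ₑ) aemeasurable_const
      hm.restrict.enorm
    simp only [Pi.mul_apply, one_mul, ENNReal.one_rpow, lintegral_const, Measure.restrict_apply,
      MeasurableSet.univ, univ_inter] at this
    calc _ ≤ _ := pow_le_pow_left₀ zero_le this 2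
      _ = _ := by
        rw [mul_pow, ← ENNReal.rpow_mul_natCast, ← ENNReal.rpow_mul_natCast]
        norm_num
  have hr' : ENNReal.ofReal (r ^ n) ≠ 0 := by simp; positivity
  rw [ENNReal.div_eq_inv_mul, ENNReal.div_eq_inv_mul, mul_pow]
  grw [hcs]
  rw [vol_closedBall x hr.le, ENNReal.ofReal_mul (vB_pos n).le]
  apply le_of_eq
  calc _ = (ENNReal.ofReal (r ^ n))⁻¹ * ENNReal.ofReal (r ^ n) * (ENNReal.ofReal (vB n) *
        ((ENNReal.ofReal (r ^ n))⁻¹ * ∫⁻ y in closedBall x r, ‖h y ^ 2‖ₑ)) := by ring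
    _ = _ := by rw [ENNReal.inv_mul_cancel hr' ENNReal.ofReal_ne_top, one_mul]

lemma bMax_weak2 {n : ℕ} (hn : 0 < n) (h : E n → ℝ) (hm : AEStronglyMeasurable h)
    (hh : Integrable (fun x => h x ^ 2)) (α : ℝ) (hα : 0 < α) :
    volume {x | ENNReal.ofReal α < bMax h x} ≤
      ENNReal.ofReal (vB n ^ 2 * 5 ^ n / α ^ 2) * ∫⁻ y, ‖h y‖ₑ ^ 2 := by
  have hv := vB_pos n
  refine (measure_mono ?_).trans ((bMax_weak hn _ hh (α ^ 2 / vB n) (by positivity)).trans ?_)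
  · intro x hx
    have h1 := bMax_sq h hm x
    have h2 : ENNReal.ofReal α ^ 2 < bMax h x ^ 2 := ENNReal.pow_lt_pow_left two_ne_zero hx
    have h3 := h2.trans_le h1
    simp only [mem_ofPred_eq]
    rw [ENNReal.ofReal_div_of_pos hv, ENNReal.ofReal_pow hα.le]
    refine ENNReal.div_lt_of_lt_mul' h3
  · apply le_of_eq
    simp only [enorm_pow]
    congr 2
    field_simp

/-! ### Sums of dyadic dilations of a mother kernel -/

/-- A mother kernel: smooth, supported in the ball of radius `2`, and of integral zero. -/
structure GoodPsi {n : ℕ} (ψ : E n → ℝ) : Prop where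
  smooth : ContDiff ℝ (⊤ : ℕ∞) ψ
  supp : ∀ x, 2 < ‖x‖ → ψ x = 0
  int : ∫ x, ψ x = 0

/-- The dilation `s⁻ⁿ ψ(x / s)`, normalised in `L¹`. -/
def dil {n : ℕ} (s : ℝ) (ψ : E n → ℝ) (x : E n) : ℝ := (s ^ n)⁻¹ * ψ (s⁻¹ • x)

/-- The sum of the `k` dyadic dilations of `ψ` at the scales `R, R / 2, …, R / 2 ^ (k - 1)`. The
kernel of a smoothly truncated singular integral has this form. -/
def Fk {n : ℕ} (R : ℝ) (ψ : E n → ℝ) (k : ℕ) (x : E n) : ℝ :=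
  ∑ j ∈ Finset.range k, dil (R / 2 ^ j) ψ x

/-- The convolution of `k` and `h`, as a Bochner integral; it is `0` at the points where the
integrand is not integrable. -/
def cv {n : ℕ} (k h : E n → ℝ) (x : E n) : ℝ := ∫ y, k (x - y) * h y

lemma hcs_of_supp {n : ℕ} {ψ : E n → ℝ} {r : ℝ} (h : ∀ x, r < ‖x‖ → ψ x = 0) :
    HasCompactSupport ψ := by
  refine HasCompactSupport.intro (isCompact_closedBall (0 : E n) r) fun x hx => h x ?_
  simpa using hx

lemma GoodPsi.hcs {n : ℕ} {ψ : E n → ℝ} (hψ : GoodPsi ψ) : HasCompactSupport ψ :=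
  hcs_of_supp hψ.supp

lemma GoodPsi.lip {n : ℕ} {ψ : E n → ℝ} (hψ : GoodPsi ψ) :
    ∃ L : ℝ, 0 < L ∧ ∀ x y, |ψ x - ψ y| ≤ L * ‖x - y‖ := by
  obtain ⟨C, hC⟩ := hψ.smooth.lipschitzWith_of_hasCompactSupport hψ.hcs (by simp)
  refine ⟨C + 1, by positivity, fun x y => ?_⟩
  have := hC.dist_le_mul x y
  rw [Real.dist_eq, dist_eq_norm] at this
  nlinarith [norm_nonneg (x - y)]

lemma dil_supp {n : ℕ} {ψ : E n → ℝ} (hψ : GoodPsi ψ) {s : ℝ} (hs : 0 < s) {x : E n}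
    (hx : 2 * s < ‖x‖) : dil s ψ x = 0 := by
  unfold dil
  rw [hψ.supp, mul_zero]
  rw [norm_smul, norm_inv, Real.norm_of_nonneg hs.le, lt_inv_mul_iff₀ hs]
  linarith

lemma dil_smooth {n : ℕ} {ψ : E n → ℝ} (hψ : GoodPsi ψ) (s : ℝ) :
    ContDiff ℝ (⊤ : ℕ∞) (dil s ψ) := by
  have := hψ.smooth
  unfold dil
  fun_prop

lemma dil_lip {n : ℕ} {ψ : E n → ℝ} {L : ℝ} (hL : ∀ x y, |ψ x - ψ y| ≤ L * ‖x - y‖)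
    {s : ℝ} (hs : 0 < s) (x y : E n) :
    |dil s ψ x - dil s ψ y| ≤ L * (s ^ n)⁻¹ * (‖x - y‖ / s) := by
  unfold dil
  rw [← mul_sub, abs_mul, abs_of_pos (by positivity)]
  have := hL (s⁻¹ • x) (s⁻¹ • y)
  rw [← smul_sub, norm_smul, norm_inv, Real.norm_of_nonneg hs.le] at this
  calc _ ≤ (s ^ n)⁻¹ * (L * (s⁻¹ * ‖x - y‖)) := by gcongr
    _ = _ := by ring

lemma dil_integral {n : ℕ} (ψ : E n → ℝ) {s : ℝ} (hs : 0 < s) :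
    ∫ x, dil s ψ x = ∫ x, ψ x := by
  unfold dil
  rw [integral_const_mul, Measure.integral_comp_inv_smul_of_nonneg _ _ hs.le]
  simp only [finrank_euclideanSpace, Fintype.card_fin, smul_eq_mul]
  field_simp

lemma Fk_smooth {n : ℕ} {ψ : E n → ℝ} (hψ : GoodPsi ψ) (R : ℝ) (k : ℕ) :
    ContDiff ℝ (⊤ : ℕ∞) (Fk R ψ k) := by
  unfold Fk
  exact ContDiff.sum fun j _ => dil_smooth hψ _

lemma Fk_supp {n : ℕ} {ψ : E n → ℝ} (hψ : GoodPsi ψ) {R : ℝ} (hR : 0 < R) (k : ℕ) {x : E n}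
    (hx : 2 * R < ‖x‖) : Fk R ψ k x = 0 := by
  refine Finset.sum_eq_zero fun j _ => dil_supp hψ (by positivity) (lt_of_le_of_lt ?_ hx)
  have : R / 2 ^ j ≤ R := div_le_self hR.le (one_le_pow₀ (by norm_num))
  linarith

lemma Fk_hcs {n : ℕ} {ψ : E n → ℝ} (hψ : GoodPsi ψ) {R : ℝ} (hR : 0 < R) (k : ℕ) :
    HasCompactSupport (Fk R ψ k) := hcs_of_supp fun _ hx => Fk_supp hψ hR k hx

/-! ### Geometric sums -/

lemma geo1 (X : ℝ) (k : ℕ) (hX : 0 ≤ X) :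
    ∑ j ∈ (Finset.range k).filter (fun j => (2 : ℝ) ^ j ≤ X), (2 : ℝ) ^ j ≤ 2 * X := by
  induction k with
  | zero => simpa using hX
  | succ k ih =>
    rw [Finset.range_add_one, Finset.filter_insert]
    split_ifs with h
    · rw [Finset.sum_insert (by simp)]
      have h1 : ∑ j ∈ (Finset.range k).filter (fun j => (2 : ℝ) ^ j ≤ X), (2 : ℝ) ^ j ≤
          ∑ j ∈ Finset.range k, (2 : ℝ) ^ j :=
        Finset.sum_le_sum_of_subset_of_nonneg (Finset.filter_subset _ _) (by intros; positivity)
      have h2 := geom_sum_eq (show (2 : ℝ) ≠ 1 by norm_num) k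
      rw [h2] at h1
      norm_num at h1
      linarith
    · exact ih

lemma geo2 (X : ℝ) (k : ℕ) (hX : 0 ≤ X) :
    ∑ j ∈ (Finset.range k).filter (fun j => X < (2 : ℝ) ^ j), X / (2 : ℝ) ^ j ≤ 2 := by
  suffices h : ∑ j ∈ (Finset.range k).filter (fun j => X < (2 : ℝ) ^ j), X / (2 : ℝ) ^ j +
      (if X < 2 ^ k then 2 * X / 2 ^ k else 0) ≤ 2 by
    have : 0 ≤ (if X < 2 ^ k then 2 * X / 2 ^ k else 0) := by split_ifs <;> positivity
    linarith
  induction k with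
  | zero =>
    simp only [Finset.range_zero, Finset.filter_empty, Finset.sum_empty, pow_zero, zero_add]
    split_ifs <;> linarith
  | succ k ih =>
    rw [Finset.range_add_one, Finset.filter_insert]
    have e : 2 * X / 2 ^ (k + 1) = X / 2 ^ k := by rw [pow_succ]; field_simp
    by_cases h : X < 2 ^ k
    · have h' : X < 2 ^ (k + 1) := h.trans (by rw [pow_succ]; linarith [show (0:ℝ) < 2 ^ k by positivity])
      rw [if_pos h, Finset.sum_insert (by simp), if_pos h', e]
      rw [if_pos h] at ih
      have : 2 * X / 2 ^ k = X / 2 ^ k + X / 2 ^ k := by ring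
      linarith
    · have h0 : (Finset.range k).filter (fun j => X < (2 : ℝ) ^ j) = ∅ := by
        refine Finset.filter_eq_empty_iff.2 fun j hj => ?_
        push Not at h ⊢
        exact (pow_le_pow_right₀ (by norm_num) (Finset.mem_range.1 hj).le).trans h
      rw [if_neg h, h0, Finset.sum_empty, zero_add]
      split_ifs with h2
      · rw [div_le_iff₀ (by positivity), pow_succ]
        rw [pow_succ] at h2
        linarith
      · norm_num

lemma geo3 (a : ℝ) (k : ℕ) (ha : 0 < a) :
    ∑ j ∈ Finset.range k, min (a / 2 ^ j) (2 ^ j / a) ≤ 4 := by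
  rw [← Finset.sum_filter_add_sum_filter_not _ (fun j => (2 : ℝ) ^ j ≤ a)]
  have h1 := geo1 a k ha.le
  have h2 := geo2 a k ha.le
  have h3 : ∑ j ∈ (Finset.range k).filter (fun j => (2 : ℝ) ^ j ≤ a), min (a / 2 ^ j) (2 ^ j / a)
      ≤ 2 := by
    calc _ ≤ ∑ j ∈ (Finset.range k).filter (fun j => (2 : ℝ) ^ j ≤ a), 2 ^ j / a :=
          Finset.sum_le_sum fun j _ => min_le_right _ _
      _ = (∑ j ∈ (Finset.range k).filter (fun j => (2 : ℝ) ^ j ≤ a), 2 ^ j) / a := by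
          rw [Finset.sum_div]
      _ ≤ _ := by rw [div_le_iff₀ ha]; exact h1
  have h4 : ∑ j ∈ (Finset.range k).filter (fun j => ¬ (2 : ℝ) ^ j ≤ a),
      min (a / 2 ^ j) (2 ^ j / a) ≤ 2 := by
    simp only [not_le]
    exact (Finset.sum_le_sum fun j _ => min_le_left _ _).trans h2
  linarith

section

open FourierTransform SchwartzMap

/-! ### Fourier transforms and the uniform `L²` bound -/

lemma cpx_smooth {n : ℕ} {f : E n → ℝ} (hf : ContDiff ℝ (⊤ : ℕ∞) f) :
    ContDiff ℝ (⊤ : ℕ∞) (fun x => (f x : ℂ)) :=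
  Complex.ofRealCLM.contDiff.comp hf

lemma cpx_hcs {n : ℕ} {f : E n → ℝ} (hf : HasCompactSupport f) :
    HasCompactSupport (fun x => (f x : ℂ)) :=
  hf.comp_left (g := fun t : ℝ => (t : ℂ)) (by simp)

/-- The Fourier transform of a mother kernel is `O(‖ξ‖)` at the origin, because the integral
vanishes, and `O(1 / ‖ξ‖)` at infinity, by smoothness. -/
lemma psi_hat_bound {n : ℕ} {ψ : E n → ℝ} (hψ : GoodPsi ψ) :
    ∃ c : ℝ, 0 < c ∧ ∀ ξ : E n, ‖𝓕 (fun x => (ψ x : ℂ)) ξ‖ ≤ c * ‖ξ‖ ∧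
      ‖ξ‖ * ‖𝓕 (fun x => (ψ x : ℂ)) ξ‖ ≤ c := by
  set Ψ : 𝓢(E n, ℂ) := (cpx_hcs hψ.hcs).toSchwartzMap (cpx_smooth hψ.smooth) with hΨ
  have hF : 𝓕 (fun x => (ψ x : ℂ)) = ((𝓕 Ψ : 𝓢(E n, ℂ)) : E n → ℂ) := by
    rw [fourier_coe]; rfl
  rw [hF]
  obtain ⟨C1, h1, hC1⟩ := (𝓕 Ψ : 𝓢(E n, ℂ)).decay 1 0
  obtain ⟨C2, h2, hC2⟩ := (𝓕 Ψ : 𝓢(E n, ℂ)).decay 0 1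
  refine ⟨max C1 C2, lt_max_of_lt_left h1, fun ξ => ⟨?_, ?_⟩⟩
  · have hz : (𝓕 Ψ : 𝓢(E n, ℂ)) 0 = 0 := by
      rw [← hF, Real.fourier_eq]
      simp only [inner_zero_right, neg_zero, AddChar.map_zero_eq_one, one_smul]
      rw [integral_complex_ofReal, hψ.int]; simp
    have hl : LipschitzWith ⟨C2, h2.le⟩ (𝓕 Ψ : 𝓢(E n, ℂ)) := by
      refine lipschitzWith_of_nnnorm_fderiv_le (𝕜 := ℝ) (𝓕 Ψ : 𝓢(E n, ℂ)).differentiable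
        fun x => ?_
      have := hC2 x
      rw [pow_zero, one_mul, norm_iteratedFDeriv_one] at this
      exact_mod_cast this
    have := hl.dist_le_mul ξ 0
    rw [hz, dist_zero_right, dist_zero_right] at this
    exact this.trans (by gcongr; exact le_max_right _ _)
  · have := hC1 ξ
    rw [pow_one, norm_iteratedFDeriv_zero] at this
    exact this.trans (le_max_left _ _)

lemma dil_hat {n : ℕ} (ψ : E n → ℝ) {s : ℝ} (hs : 0 < s) (ξ : E n) :
    𝓕 (fun x => (dil s ψ x : ℂ)) ξ = 𝓕 (fun x => (ψ x : ℂ)) (s • ξ) := by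
  rw [Real.fourier_eq, Real.fourier_eq]
  have := Measure.integral_comp_inv_smul_of_nonneg (volume : Measure (E n))
    (fun v => Real.fourierChar (-(inner ℝ v (s • ξ))) • (ψ v : ℂ)) hs.le
  simp only [finrank_euclideanSpace, Fintype.card_fin] at this
  have h2 : ∀ v : E n, Real.fourierChar (-(inner ℝ v ξ)) • (dil s ψ v : ℂ) = ((s ^ n)⁻¹ : ℝ) •
      (Real.fourierChar (-(inner ℝ (s⁻¹ • v) (s • ξ))) • (ψ (s⁻¹ • v) : ℂ)) := by
    intro v
    have h3 : inner ℝ (s⁻¹ • v) (s • ξ) = inner ℝ v ξ := by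
      rw [inner_smul_left, inner_smul_right]; simp; field_simp
    rw [h3, smul_comm]
    congr 1
    simp [dil]
  simp_rw [h2]
  rw [integral_smul, this, smul_smul, inv_mul_cancel₀ (by positivity), one_smul]

/-- The multipliers of the dyadic sums are bounded uniformly in the number of terms and in the
largest scale: at each frequency the contributions of the scales form a two-sided geometric
series. -/
lemma Fk_hat_bound {n : ℕ} {ψ : E n → ℝ} (hψ : GoodPsi ψ) :
    ∃ c : ℝ, 0 < c ∧ ∀ (R : ℝ) (k : ℕ) (ξ : E n), 0 < R →
      ‖𝓕 (fun x => (Fk R ψ k x : ℂ)) ξ‖ ≤ c := by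
  obtain ⟨c, hc, hb⟩ := psi_hat_bound hψ
  refine ⟨4 * c, by positivity, fun R k ξ hR => ?_⟩
  have hint : ∀ j, Integrable (fun x => (dil (R / 2 ^ j) ψ x : ℂ)) := fun j =>
    ((cpx_smooth (dil_smooth hψ _)).continuous).integrable_of_hasCompactSupport
      (cpx_hcs (hcs_of_supp fun x hx => dil_supp hψ (by positivity) hx))
  have hsum : 𝓕 (fun x => (Fk R ψ k x : ℂ)) ξ =
      ∑ j ∈ Finset.range k, 𝓕 (fun x => (ψ x : ℂ)) ((R / 2 ^ j) • ξ) := by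
    have : ∀ j, 𝓕 (fun x => (ψ x : ℂ)) ((R / 2 ^ j) • ξ) =
        𝓕 (fun x => (dil (R / 2 ^ j) ψ x : ℂ)) ξ := fun j => (dil_hat ψ (by positivity) ξ).symm
    simp_rw [this, Real.fourier_eq]
    rw [← integral_finset_sum]
    · congr 1; ext v
      rw [← Finset.smul_sum]
      simp [Fk]
    · intro j _
      exact (Real.fourierIntegral_convergent_iff (V := E n) ξ).2 (hint j)
  rw [hsum]
  refine (norm_sum_le _ _).trans ?_
  rcases eq_or_ne ξ 0 with rfl | hξ
  · refine le_trans (Finset.sum_le_sum fun j _ => (hb _).1) ?_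
    simp; positivity
  have hξ' : 0 < ‖ξ‖ := norm_pos_iff.2 hξ
  calc _ ≤ ∑ j ∈ Finset.range k, c * min ((R * ‖ξ‖) / 2 ^ j) (2 ^ j / (R * ‖ξ‖)) := by
        refine Finset.sum_le_sum fun j _ => ?_
        have hn : ‖(R / 2 ^ j) • ξ‖ = R * ‖ξ‖ / 2 ^ j := by
          rw [norm_smul, Real.norm_of_nonneg (by positivity)]; ring
        have h1 := (hb ((R / 2 ^ j) • ξ)).1
        have h2 := (hb ((R / 2 ^ j) • ξ)).2
        rw [hn] at h1 h2
        rw [mul_min_of_nonneg _ _ hc.le]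
        refine le_min h1 ?_
        have : c * (2 ^ j / (R * ‖ξ‖)) = c / (R * ‖ξ‖ / 2 ^ j) := by field_simp
        rw [this, le_div_iff₀ (by positivity)]
        linarith
    _ ≤ c * 4 := by rw [← Finset.mul_sum]; gcongr; exact geo3 _ _ (by positivity)
    _ = _ := by ring

lemma memLp_shift {n : ℕ} {k : E n → ℝ} (hk : Continuous k) (hs : HasCompactSupport k)
    (p : ℝ≥0∞) (x : E n) : MemLp (fun y => k (x - y)) p := by
  refine Continuous.memLp_of_hasCompactSupport (by fun_prop) ?_
  exact hs.comp_homeomorph (Homeomorph.subLeft x)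

lemma integrable_kh {n : ℕ} {k h : E n → ℝ} (hk : Measurable k) {C : ℝ} (hC : ∀ x, |k x| ≤ C)
    (hh : Integrable h) (x : E n) : Integrable (fun y => k (x - y) * h y) :=
  hh.bdd_mul (hk.comp (by fun_prop : Measurable fun y => x - y)).aestronglyMeasurable
    (Eventually.of_forall fun y => hC _)

lemma schwartz_plancherel {n : ℕ} (H : 𝓢(E n, ℂ)) :
    eLpNorm (𝓕 H : 𝓢(E n, ℂ)) 2 volume = eLpNorm H 2 volume := by
  have h1 := SchwartzMap.norm_fourier_toL2_eq H
  have h2 := SchwartzMap.norm_toLp (f := H) (p := 2) (μ := volume)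
  have h3 := SchwartzMap.norm_toLp (f := 𝓕 H) (p := 2) (μ := volume)
  have h4 : (eLpNorm (𝓕 H : 𝓢(E n, ℂ)) 2 volume).toReal = (eLpNorm H 2 volume).toReal :=
    h3.symm.trans (h1.trans h2)
  have h5 := (H.memLp 2 volume).2.ne
  have h6 := ((𝓕 H : 𝓢(E n, ℂ)).memLp 2 volume).2.ne
  exact (ENNReal.toReal_eq_toReal_iff' h6 h5).1 h4

/-- Plancherel: a kernel with Fourier transform bounded by `c` convolves test functions with
`L²` norm at most `c`. -/
lemma cv_schwartz {n : ℕ} {F g : E n → ℝ} (hF : ContDiff ℝ (⊤ : ℕ∞) F) (hFs : HasCompactSupport F)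
    (hg : ContDiff ℝ (⊤ : ℕ∞) g) (hgs : HasCompactSupport g) {c : ℝ} (hc : 0 ≤ c)
    (hb : ∀ ξ, ‖𝓕 (fun x => (F x : ℂ)) ξ‖ ≤ c) :
    eLpNorm (cv F g) 2 volume ≤ ENNReal.ofReal c * eLpNorm g 2 volume := by
  obtain ⟨FS, hFS⟩ : ∃ H : 𝓢(E n, ℂ), (H : E n → ℂ) = fun x => (F x : ℂ) :=
    ⟨(cpx_hcs hFs).toSchwartzMap (cpx_smooth hF), rfl⟩
  obtain ⟨G, hG⟩ : ∃ H : 𝓢(E n, ℂ), (H : E n → ℂ) = fun x => (g x : ℂ) :=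
    ⟨(cpx_hcs hgs).toSchwartzMap (cpx_smooth hg), rfl⟩
  obtain ⟨V, hV⟩ : ∃ V, V = SchwartzMap.convolution (ContinuousLinearMap.mul ℂ ℂ) G FS := ⟨_, rfl⟩
  have hVx : ∀ x, V x = (cv F g x : ℂ) := by
    intro x
    rw [hV, SchwartzMap.convolution_apply, convolution_def, cv, ← integral_complex_ofReal]
    congr 1; ext y
    rw [ContinuousLinearMap.mul_apply', hFS, hG]
    simp only [Complex.ofReal_mul]
    exact mul_comm _ _
  have e1 : eLpNorm (cv F g) 2 volume = eLpNorm V 2 volume := by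
    refine eLpNorm_congr_norm_ae (Eventually.of_forall fun x => ?_)
    rw [hVx, Complex.norm_real]
  have e2 : eLpNorm g 2 volume = eLpNorm G 2 volume := by
    refine eLpNorm_congr_norm_ae (Eventually.of_forall fun x => ?_)
    rw [hG, Complex.norm_real]
  rw [e1, e2, ← schwartz_plancherel V, ← schwartz_plancherel G]
  refine eLpNorm_le_mul_eLpNorm_of_ae_le_mul (Eventually.of_forall fun ξ => ?_) 2
  rw [hV, SchwartzMap.fourier_convolution, pairing_apply_apply, ContinuousLinearMap.mul_apply',
    norm_mul, mul_comm]
  gcongr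
  have := hb ξ
  rw [SchwartzMap.fourier_coe, hFS]
  exact this

lemma cv_aesm {n : ℕ} {k h : E n → ℝ} (hk : Measurable k) (hh : AEStronglyMeasurable h) :
    AEStronglyMeasurable (cv k h) := by
  unfold cv
  have : AEStronglyMeasurable (fun p : E n × E n => k (p.1 - p.2) * h p.2)
      (volume.prod volume) :=
    (by fun_prop : Measurable fun p : E n × E n => k (p.1 - p.2)).aestronglyMeasurable.mul
      (hh.comp_snd)
  exact this.integral_prod_right'

/-- The bound of `cv_schwartz` on all of `L²`: for test functions `g k → h` in `L²` the
convolutions converge pointwise, and Fatou's lemma applies. -/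
lemma cv_L2 {n : ℕ} {F : E n → ℝ} (hF : ContDiff ℝ (⊤ : ℕ∞) F) (hFs : HasCompactSupport F)
    {c : ℝ} (hc : 0 ≤ c) (hb : ∀ ξ, ‖𝓕 (fun x => (F x : ℂ)) ξ‖ ≤ c)
    {h : E n → ℝ} (hh : MemLp h 2) :
    eLpNorm (cv F h) 2 volume ≤ ENNReal.ofReal c * eLpNorm h 2 volume := by
  have hcont := hF.continuous
  have hex : ∀ k : ℕ, ∃ g : E n → ℝ, HasCompactSupport g ∧ ContDiff ℝ (⊤ : ℕ∞) g ∧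
      eLpNorm (h - g) 2 volume ≤ ENNReal.ofReal (1 / ((k : ℝ) + 1)) := fun k =>
    hh.exist_eLpNorm_sub_le (by norm_num) (by norm_num) (by positivity)
  choose g hgs hg hgh using hex
  have hz : Tendsto (fun k : ℕ => ENNReal.ofReal (1 / ((k : ℝ) + 1))) atTop (𝓝 0) := by
    have := ENNReal.tendsto_ofReal (tendsto_one_div_add_atTop_nhds_zero_nat (𝕜 := ℝ))
    simpa using this
  have hgm : ∀ k, MemLp (g k) 2 := fun k => (hg k).continuous.memLp_of_hasCompactSupport (hgs k)
  -- Pointwise convergence is Cauchy–Schwarz against `F (x - ·)`, which is in `L²`.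
  have hlim : ∀ x, Tendsto (fun k => cv F (g k) x) atTop (𝓝 (cv F h x)) := by
    intro x
    have hFx := memLp_shift hcont hFs 2 x
    rw [tendsto_iff_edist_tendsto_0]
    have hle : ∀ k, edist (cv F (g k) x) (cv F h x) ≤
        eLpNorm (fun y => F (x - y)) 2 volume * ENNReal.ofReal (1 / ((k : ℝ) + 1)) := by
      intro k
      rw [edist_comm, edist_eq_enorm_sub]
      have : cv F h x - cv F (g k) x = ∫ y, F (x - y) * (h - g k) y := by
        have e := integral_sub (hFx.integrable_mul hh) (hFx.integrable_mul (hgm k))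
        simp only [Pi.mul_apply] at e
        unfold cv
        rw [← e]
        congr 1; ext y; simp; ring
      rw [this]
      refine (enorm_integral_le_lintegral_enorm _).trans ?_
      have h2 := eLpNorm_smul_le_mul_eLpNorm (p := 2) (q := 2) (r := 1)
        (hh.sub (hgm k)).aestronglyMeasurable hFx.aestronglyMeasurable
      rw [eLpNorm_one_eq_lintegral_enorm] at h2
      exact h2.trans (by gcongr; exact hgh k)
    refine tendsto_of_tendsto_of_tendsto_of_le_of_le tendsto_const_nhds ?_ (fun _ => zero_le) hle
    simpa using ENNReal.Tendsto.const_mul hz (Or.inr hFx.2.ne)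
  refine (Lp.eLpNorm_lim_le_liminf_eLpNorm (fun k => cv_aesm hcont.measurable
    (hgm k).aestronglyMeasurable) _ (Eventually.of_forall hlim)).trans ?_
  have hle : ∀ k, eLpNorm (cv F (g k)) 2 volume ≤
      ENNReal.ofReal c * (eLpNorm h 2 volume + ENNReal.ofReal (1 / ((k : ℝ) + 1))) := by
    intro k
    refine (cv_schwartz hF hFs (hg k) (hgs k) hc hb).trans ?_
    gcongr
    calc eLpNorm (g k) 2 volume = eLpNorm (h - (h - g k)) 2 volume := by simp
      _ ≤ _ := (eLpNorm_sub_le hh.aestronglyMeasurable (hh.sub (hgm k)).aestronglyMeasurable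
          (by norm_num)).trans (by gcongr; exact hgh k)
  have ht : Tendsto (fun k : ℕ => ENNReal.ofReal c * (eLpNorm h 2 volume +
      ENNReal.ofReal (1 / ((k : ℝ) + 1)))) atTop (𝓝 (ENNReal.ofReal c * eLpNorm h 2 volume)) := by
    have := ENNReal.Tendsto.const_mul (a := ENNReal.ofReal c)
      (hz.const_add (eLpNorm h 2 volume)) (Or.inr ENNReal.ofReal_ne_top)
    simpa using this
  calc _ ≤ liminf (fun k : ℕ => ENNReal.ofReal c * (eLpNorm h 2 volume +
      ENNReal.ofReal (1 / ((k : ℝ) + 1)))) atTop := liminf_le_liminf (Eventually.of_forall hle)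
    _ = _ := ht.liminf_eq

lemma eLpNorm2_sq {n : ℕ} (f : E n → ℝ) : eLpNorm f 2 volume ^ 2 = ∫⁻ x, ‖f x‖ₑ ^ 2 := by
  have := eLpNorm_nnreal_pow_eq_lintegral (f := f) (μ := volume) (p := 2) two_ne_zero
  simpa using this

lemma Fk_L2 {n : ℕ} {ψ : E n → ℝ} (hψ : GoodPsi ψ) :
    ∃ c : ℝ, 0 < c ∧ ∀ (R : ℝ) (k : ℕ) (h : E n → ℝ), 0 < R → MemLp h 2 →
      MemLp (cv (Fk R ψ k) h) 2 ∧
      ∫⁻ x, ‖cv (Fk R ψ k) h x‖ₑ ^ 2 ≤ ENNReal.ofReal c * ∫⁻ x, ‖h x‖ₑ ^ 2 := by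
  obtain ⟨c, hc, hb⟩ := Fk_hat_bound hψ
  refine ⟨c ^ 2, by positivity, fun R k h hR hh => ?_⟩
  have := cv_L2 (Fk_smooth hψ R k) (Fk_hcs hψ hR k) hc.le (fun ξ => hb R k ξ hR) hh
  refine ⟨⟨cv_aesm (Fk_smooth hψ R k).continuous.measurable hh.aestronglyMeasurable,
    this.trans_lt (ENNReal.mul_lt_top ENNReal.ofReal_lt_top hh.2)⟩, ?_⟩
  rw [← eLpNorm2_sq, ← eLpNorm2_sq, ENNReal.ofReal_pow hc.le, ← mul_pow]
  exact pow_le_pow_left₀ zero_le this 2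

end

/-! ### Cotlar's inequality and the weak type (2,2) bound -/

/-- Cauchy–Schwarz on a ball. -/
lemma lintegral_cs {n : ℕ} (h : E n → ℝ) (hm : AEStronglyMeasurable h) (x : E n) {r : ℝ}
    (hr : 0 < r) : (∫⁻ y in closedBall x r, ‖h y‖ₑ) ^ 2 ≤
      ENNReal.ofReal (vB n * r ^ n) * ∫⁻ y in closedBall x r, ‖h y‖ₑ ^ 2 := by
  have hcs := ENNReal.lintegral_mul_le_Lp_mul_Lq (volume.restrict (closedBall x r))
    Real.HolderConjugate.two_two (f := fun y => ‖h y‖ₑ) (g := fun _ => 1) hm.restrict.enorm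
    aemeasurable_const
  simp only [Pi.mul_apply, mul_one, lintegral_const, Measure.restrict_apply,
    MeasurableSet.univ, univ_inter, ENNReal.rpow_two, vol_closedBall x hr.le] at hcs
  calc _ ≤ _ := pow_le_pow_left₀ zero_le hcs 2
    _ = _ := by
      rw [mul_pow, ← ENNReal.rpow_natCast, ← ENNReal.rpow_natCast, ← ENNReal.rpow_mul,
        ← ENNReal.rpow_mul]
      norm_num
      rw [mul_comm]

lemma cv_enorm_le {n : ℕ} {k h : E n → ℝ} (x c : E n) {A ρ : ℝ}
    (hk : ∀ y, |k (x - y)| ≤ A) (hs : ∀ y, ρ < ‖y - c‖ → k (x - y) = 0) :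
    ∫⁻ y, ‖k (x - y) * h y‖ₑ ≤ ENNReal.ofReal A * ∫⁻ y in closedBall c ρ, ‖h y‖ₑ := by
  rw [← lintegral_const_mul' _ _ ENNReal.ofReal_ne_top,
    ← lintegral_indicator measurableSet_closedBall]
  refine lintegral_mono fun y => ?_
  by_cases hy : y ∈ closedBall c ρ
  · rw [indicator_of_mem hy, enorm_mul]
    gcongr
    rw [Real.enorm_eq_ofReal_abs]
    exact ENNReal.ofReal_le_ofReal (hk y)
  · rw [mem_closedBall, dist_eq_norm, not_le] at hy
    rw [hs y hy]; simp

lemma GoodPsi.bdd {n : ℕ} {ψ : E n → ℝ} (hψ : GoodPsi ψ) : ∃ M : ℝ, 0 < M ∧ ∀ x, |ψ x| ≤ M := by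
  obtain ⟨M, hM⟩ := hψ.hcs.exists_bound_of_continuous hψ.smooth.continuous
  refine ⟨M + 1, ?_, fun x => ?_⟩
  · have := (norm_nonneg _).trans (hM 0); linarith
  · have := hM x
    rw [Real.norm_eq_abs] at this; linarith

lemma sum_geo_pow {n : ℕ} (hn : 0 < n) (k : ℕ) :
    ∑ j ∈ Finset.range k, ((2 : ℝ) ^ j) ^ n ≤ (2 ^ k) ^ n := by
  induction k with
  | zero => simp
  | succ k ih =>
    rw [Finset.sum_range_succ, pow_succ, mul_pow]
    have : (2 : ℝ) ≤ 2 ^ n := by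
      calc (2 : ℝ) = 2 ^ 1 := by norm_num
        _ ≤ _ := pow_le_pow_right₀ (by norm_num) hn
    have h0 : (0 : ℝ) < (2 ^ k) ^ n := by positivity
    nlinarith

lemma Fk_bound {n : ℕ} (hn : 0 < n) {ψ : E n → ℝ} {M : ℝ} (hM : 0 < M) (hb : ∀ x, |ψ x| ≤ M)
    {R : ℝ} (hR : 0 < R) (k : ℕ) (w : E n) : |Fk R ψ k w| ≤ M * ((R / 2 ^ k) ^ n)⁻¹ := by
  calc |Fk R ψ k w| ≤ ∑ j ∈ Finset.range k, |dil (R / 2 ^ j) ψ w| := Finset.abs_sum_le_sum_abs _ _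
    _ ≤ ∑ j ∈ Finset.range k, M * (R ^ n)⁻¹ * ((2 : ℝ) ^ j) ^ n := by
      refine Finset.sum_le_sum fun j _ => ?_
      unfold dil
      rw [abs_mul, abs_of_pos (by positivity), div_pow, inv_div]
      have := hb ((R / 2 ^ j)⁻¹ • w)
      calc _ ≤ (2 ^ j) ^ n / R ^ n * M := by gcongr
        _ = _ := by ring
    _ = M * (R ^ n)⁻¹ * ∑ j ∈ Finset.range k, ((2 : ℝ) ^ j) ^ n := by rw [Finset.mul_sum]
    _ ≤ M * (R ^ n)⁻¹ * (2 ^ k) ^ n := by gcongr; exact sum_geo_pow hn k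
    _ = _ := by rw [div_pow, inv_div]; ring

/-- Far from the origin the dilations at small scales vanish. -/
lemma Fk_eq {n : ℕ} {ψ : E n → ℝ} (hψ : GoodPsi ψ) {R : ℝ} (hR : 0 < R) {k N : ℕ} (hk : k ≤ N)
    {w : E n} (hw : 2 * (R / 2 ^ k) < ‖w‖) : Fk R ψ N w = Fk R ψ k w := by
  symm
  refine Finset.sum_subset (Finset.range_mono hk) fun j _ hj => ?_
  rw [Finset.mem_range, not_lt] at hj
  refine dil_supp hψ (by positivity) (lt_of_le_of_lt ?_ hw)
  have : (2 : ℝ) ^ k ≤ 2 ^ j := pow_le_pow_right₀ (by norm_num) hj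
  gcongr

/-- The convolution of the `k`-th dyadic sum with `h` oscillates by at most a multiple of the
maximal function of `h` over distances up to `R / 2 ^ k`, its smallest scale. -/
lemma Fk_diff {n : ℕ} {ψ : E n → ℝ} (hψ : GoodPsi ψ) {L : ℝ} (hL0 : 0 < L)
    (hL : ∀ x y, |ψ x - ψ y| ≤ L * ‖x - y‖) {R : ℝ} (hR : 0 < R) (k : ℕ) {h : E n → ℝ}
    (hm : AEStronglyMeasurable h) {x z : E n} (hz : ‖z - x‖ ≤ R / 2 ^ k) :
    ∫⁻ y, ‖(Fk R ψ k (x - y) - Fk R ψ k (z - y)) * h y‖ₑ ≤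
      ENNReal.ofReal (L * 3 ^ n) * bMax h x := by
  have hmz : ∀ j, AEMeasurable (fun y =>
      ‖(dil (R / 2 ^ j) ψ (x - y) - dil (R / 2 ^ j) ψ (z - y)) * h y‖ₑ) := by
    intro j
    have hc := (dil_smooth hψ (R / 2 ^ j)).continuous
    exact (((by fun_prop : Continuous fun y => dil (R / 2 ^ j) ψ (x - y) -
      dil (R / 2 ^ j) ψ (z - y))).aestronglyMeasurable.mul hm).enorm
  have hterm : ∀ j ∈ Finset.range k,
      ∫⁻ y, ‖(dil (R / 2 ^ j) ψ (x - y) - dil (R / 2 ^ j) ψ (z - y)) * h y‖ₑ ≤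
      ENNReal.ofReal (L * 3 ^ n * (2 ^ j / 2 ^ k)) * bMax h x := by
    intro j hj
    rw [Finset.mem_range] at hj
    set s := R / 2 ^ j with hs
    have hs0 : 0 < s := by positivity
    have hsk : R / 2 ^ k ≤ s := by
      have : (2 : ℝ) ^ j ≤ 2 ^ k := pow_le_pow_right₀ (by norm_num) hj.le
      rw [hs]; gcongr
    have e := cv_enorm_le (k := fun w => dil s ψ w - dil s ψ (w + (z - x))) (h := h) x x
      (A := L * (s ^ n)⁻¹ * (R / 2 ^ k / s)) (ρ := 3 * s) ?_ ?_
    · have e3 : ∀ y, x - y + (z - x) = z - y := fun y => by abel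
      simp only [e3] at e
      refine e.trans ?_
      refine (mul_le_mul_right (le_bMax h x (by positivity)) _).trans ?_
      rw [← mul_assoc, ← ENNReal.ofReal_mul (by positivity)]
      refine le_of_eq ?_
      congr 2
      rw [mul_pow, hs]; field_simp
    · intro y
      refine (dil_lip hL hs0 _ _).trans ?_
      have : ‖x - y - (x - y + (z - x))‖ = ‖z - x‖ := by
        rw [← norm_neg]; congr 1; abel
      rw [this]
      gcongr
    · intro y hy
      have h1 : 2 * s < ‖x - y‖ := by rw [norm_sub_rev]; linarith
      have h2 : 2 * s < ‖x - y + (z - x)‖ := by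
        have := norm_sub_le (x - y + (z - x)) (z - x)
        rw [add_sub_cancel_right, norm_sub_rev x y] at this
        linarith
      simp only [dil_supp hψ hs0 h1, dil_supp hψ hs0 h2, sub_zero]
  calc _ ≤ ∫⁻ y, ∑ j ∈ Finset.range k,
        ‖(dil (R / 2 ^ j) ψ (x - y) - dil (R / 2 ^ j) ψ (z - y)) * h y‖ₑ := by
        refine lintegral_mono fun y => ?_
        simp only [Fk]
        rw [← Finset.sum_sub_distrib, Finset.sum_mul]
        exact enorm_sum_le _ _
    _ = ∑ j ∈ Finset.range k, _ := lintegral_finsetSum' _ fun j _ => hmz j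
    _ ≤ ∑ j ∈ Finset.range k, ENNReal.ofReal (L * 3 ^ n * (2 ^ j / 2 ^ k)) * bMax h x :=
        Finset.sum_le_sum hterm
    _ = ENNReal.ofReal (∑ j ∈ Finset.range k, L * 3 ^ n * (2 ^ j / 2 ^ k)) * bMax h x := by
        rw [← Finset.sum_mul, ENNReal.ofReal_sum_of_nonneg]
        intros; positivity
    _ ≤ _ := by
        gcongr
        rw [← Finset.mul_sum, ← Finset.sum_div]
        have := sum_geo_pow (n := 1) one_pos k
        simp only [pow_one] at this
        have h1 : (∑ j ∈ Finset.range k, (2 : ℝ) ^ j) / 2 ^ k ≤ 1 := by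
          rw [div_le_one (by positivity)]; exact this
        exact mul_le_of_le_one_right (by positivity) h1

lemma bMax_le_sqrt {n : ℕ} (h : E n → ℝ) (hm : AEStronglyMeasurable h) (x : E n) :
    bMax h x ≤ (ENNReal.ofReal (vB n) * bMax (fun y => h y ^ 2) x) ^ (2⁻¹ : ℝ) := by
  rw [ENNReal.le_rpow_inv_iff two_pos]
  have := bMax_sq h hm x
  simpa using this

lemma Fk_int {n : ℕ} {ψ : E n → ℝ} (hψ : GoodPsi ψ) {R : ℝ} (hR : 0 < R) (k : ℕ) {h : E n → ℝ}
    (hh : MemLp h 2) (x : E n) : Integrable (fun y => Fk R ψ k (x - y) * h y) :=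
  (memLp_shift (Fk_smooth hψ R k).continuous (Fk_hcs hψ hR k) 2 x).integrable_mul hh

lemma ofReal_mul_sqrt {a : ℝ} (ha : 0 ≤ a) (Q : ℝ≥0∞) :
    (ENNReal.ofReal a * Q) ^ (2⁻¹ : ℝ) = ENNReal.ofReal (√a) * Q ^ (2⁻¹ : ℝ) := by
  rw [ENNReal.mul_rpow_of_nonneg _ _ (by norm_num), ENNReal.ofReal_rpow_of_nonneg ha (by norm_num),
    Real.sqrt_eq_rpow, one_div]

/-- Cotlar's inequality: the partial sum at level `k` is controlled at `x` by the maximal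
functions of a longer partial sum and of `h ^ 2`. The point value at `x` is compared with the
values at `z` in the ball of radius `R / 2 ^ k`, and the comparison is averaged over `z`. -/
lemma cotlar {n : ℕ} (hn : 0 < n) {ψ : E n → ℝ} (hψ : GoodPsi ψ) :
    ∃ A : ℝ, 0 < A ∧ ∀ (R : ℝ) (k N : ℕ) (h : E n → ℝ) (x : E n), 0 < R → k ≤ N → MemLp h 2 →
      ‖cv (Fk R ψ k) h x‖ₑ ≤ ENNReal.ofReal A *
        (bMax (cv (Fk R ψ N) h) x + (bMax (fun y => h y ^ 2) x) ^ (2⁻¹ : ℝ)) := by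
  obtain ⟨c, hc, hL2⟩ := Fk_L2 hψ
  obtain ⟨L, hL0, hL⟩ := hψ.lip
  obtain ⟨M, hM0, hM⟩ := hψ.bdd
  have hv := vB_pos n
  set D := L * 3 ^ n + M * 4 ^ n with hD
  refine ⟨(vB n)⁻¹ + (D * √(vB n) + (vB n)⁻¹ * √(vB n * c * 4 ^ n)), by positivity,
    fun R k N h x hR hkN hh => ?_⟩
  have hm := hh.aestronglyMeasurable
  set s := R / 2 ^ k with hs
  have hs0 : 0 < s := by positivity
  set h1 := (closedBall x (4 * s)).indicator h with hh1
  have h1L : MemLp h1 2 := hh.indicator measurableSet_closedBall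
  set Q := bMax (fun y => h y ^ 2) x with hQ
  have hloc : ∫⁻ y, ‖h1 y‖ₑ = ∫⁻ y in closedBall x (4 * s), ‖h y‖ₑ := by
    rw [← lintegral_indicator measurableSet_closedBall]
    congr 1; ext y; rw [hh1, enorm_indicator_eq_indicator_enorm]
  have hloc2 : ∫⁻ y, ‖h1 y‖ₑ ^ 2 = ∫⁻ y in closedBall x (4 * s), ‖h y ^ 2‖ₑ := by
    rw [← lintegral_indicator measurableSet_closedBall]
    congr 1; ext y
    by_cases hy : y ∈ closedBall x (4 * s)
    · rw [hh1, indicator_of_mem hy, indicator_of_mem hy, enorm_pow]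
    · rw [hh1, indicator_of_notMem hy, indicator_of_notMem hy]; simp
  -- Away from the ball of radius `4 * s` the kernels of levels `k` and `N` agree, so the two
  -- partial sums differ only through `h1`, the part of `h` in that ball.
  have hpt : ∀ z ∈ closedBall x s, ‖cv (Fk R ψ k) h x‖ₑ ≤ ‖cv (Fk R ψ N) h z‖ₑ +
      (‖cv (Fk R ψ N) h1 z‖ₑ + ENNReal.ofReal D * bMax h x) := by
    intro z hz
    rw [mem_closedBall, dist_eq_norm] at hz
    have e1 : ‖cv (Fk R ψ k) h x - cv (Fk R ψ k) h z‖ₑ ≤ ENNReal.ofReal (L * 3 ^ n) * bMax h x := by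
      refine le_trans ?_ (Fk_diff hψ hL0 hL hR k hm hz)
      have e : cv (Fk R ψ k) h x - cv (Fk R ψ k) h z =
          ∫ y, (Fk R ψ k (x - y) - Fk R ψ k (z - y)) * h y := by
        unfold cv
        rw [← integral_sub (Fk_int hψ hR k hh x) (Fk_int hψ hR k hh z)]
        congr 1; ext y; ring
      rw [e]
      exact enorm_integral_le_lintegral_enorm _
    have e2 : cv (Fk R ψ k) h z = cv (Fk R ψ N) h z - cv (Fk R ψ N) h1 z +
        cv (Fk R ψ k) h1 z := by
      rw [← sub_eq_iff_eq_add]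
      unfold cv
      rw [← integral_sub (Fk_int hψ hR k hh z) (Fk_int hψ hR k h1L z),
        ← integral_sub (Fk_int hψ hR N hh z) (Fk_int hψ hR N h1L z)]
      congr 1; ext y
      by_cases hy : y ∈ closedBall x (4 * s)
      · rw [hh1, indicator_of_mem hy]; ring
      · have hy' : 2 * s < ‖z - y‖ := by
          rw [mem_closedBall, dist_eq_norm, not_le] at hy
          have := norm_sub_le (z - x) (z - y)
          have e : z - x - (z - y) = y - x := by abel
          rw [e] at this
          linarith
        rw [Fk_eq hψ hR hkN hy']
    have e3 : ‖cv (Fk R ψ k) h1 z‖ₑ ≤ ENNReal.ofReal (M * 4 ^ n) * bMax h x := by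
      refine (enorm_integral_le_lintegral_enorm _).trans ?_
      refine (cv_enorm_le z z (A := M * (s ^ n)⁻¹) (ρ := 2 * R)
        (fun y => Fk_bound hn hM0 hM hR k _) fun y hy => Fk_supp hψ hR k ?_).trans ?_
      · rwa [norm_sub_rev]
      · refine (mul_le_mul_right (setLIntegral_le_lintegral _ _) _).trans ?_
        rw [hloc]
        refine (mul_le_mul_right (le_bMax h x (by positivity)) _).trans ?_
        rw [← mul_assoc, ← ENNReal.ofReal_mul (by positivity)]
        refine le_of_eq ?_
        congr 2
        rw [mul_pow]; field_simp
    calc ‖cv (Fk R ψ k) h x‖ₑ = ‖cv (Fk R ψ N) h z + (-cv (Fk R ψ N) h1 z +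
          ((cv (Fk R ψ k) h x - cv (Fk R ψ k) h z) + cv (Fk R ψ k) h1 z))‖ₑ := by
          rw [e2]; congr 1; ring
      _ ≤ ‖cv (Fk R ψ N) h z‖ₑ + (‖cv (Fk R ψ N) h1 z‖ₑ +
          (‖cv (Fk R ψ k) h x - cv (Fk R ψ k) h z‖ₑ + ‖cv (Fk R ψ k) h1 z‖ₑ)) := by
          refine (enorm_add_le _ _).trans ?_
          gcongr
          refine (enorm_add_le _ _).trans ?_
          rw [enorm_neg]
          gcongr
          exact enorm_add_le _ _
      _ ≤ _ := by
          gcongr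
          rw [hD, ENNReal.ofReal_add (by positivity) (by positivity), add_mul]
          gcongr
  -- In the average over `z`, the local term is estimated by the `L²` bound applied to `h1`.
  have hmS : ∀ g : E n → ℝ, AEStronglyMeasurable g → AEStronglyMeasurable (cv (Fk R ψ N) g) :=
    fun g hg => cv_aesm (Fk_smooth hψ R N).continuous.measurable hg
  have hloc3 : ∫⁻ z in closedBall x s, ‖cv (Fk R ψ N) h1 z‖ₑ ≤
      ENNReal.ofReal (s ^ n) * (ENNReal.ofReal (√(vB n * c * 4 ^ n)) * Q ^ (2⁻¹ : ℝ)) := by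
    have e : ENNReal.ofReal (s ^ n) * (ENNReal.ofReal (√(vB n * c * 4 ^ n)) * Q ^ (2⁻¹ : ℝ)) =
        (ENNReal.ofReal ((s ^ n) ^ 2 * (vB n * c * 4 ^ n)) * Q) ^ (2⁻¹ : ℝ) := by
      rw [ofReal_mul_sqrt (by positivity), Real.sqrt_mul (by positivity : 0 ≤ (s ^ n) ^ 2),
        Real.sqrt_sq (by positivity), ENNReal.ofReal_mul (by positivity : 0 ≤ s ^ n),
        mul_assoc (ENNReal.ofReal (s ^ n))]
    rw [e, ENNReal.le_rpow_inv_iff two_pos, ENNReal.rpow_two]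
    calc _ ≤ _ := lintegral_cs _ (hmS h1 h1L.aestronglyMeasurable) x hs0
      _ ≤ ENNReal.ofReal (vB n * s ^ n) * (ENNReal.ofReal c *
          (ENNReal.ofReal ((4 * s) ^ n) * Q)) := by
        gcongr
        refine (setLIntegral_le_lintegral _ _).trans ((hL2 R N h1 hR h1L).2.trans ?_)
        rw [hloc2]
        gcongr
        exact le_bMax _ x (by positivity)
      _ = _ := by
        rw [← mul_assoc, ← mul_assoc, ← ENNReal.ofReal_mul (by positivity),
          ← ENNReal.ofReal_mul (by positivity)]
        congr 2
        rw [mul_pow]; ring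
  have hint := lintegral_mono_ae (μ := volume.restrict (closedBall x s))
    (f := fun _ => ‖cv (Fk R ψ k) h x‖ₑ) (g := fun z => ‖cv (Fk R ψ N) h z‖ₑ +
      (‖cv (Fk R ψ N) h1 z‖ₑ + ENNReal.ofReal D * bMax h x))
    ((ae_restrict_iff' measurableSet_closedBall).2 (Eventually.of_forall hpt))
  rw [lintegral_add_left' (hmS h hm).restrict.enorm,
    lintegral_add_left' (hmS h1 h1L.aestronglyMeasurable).restrict.enorm] at hint
  simp only [lintegral_const, Measure.restrict_apply, MeasurableSet.univ, univ_inter] at hint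
  rw [vol_closedBall x hs0.le] at hint
  have hb1 := le_bMax (cv (Fk R ψ N) h) x hs0
  have hb2 := bMax_le_sqrt h hm x
  rw [ofReal_mul_sqrt hv.le] at hb2
  set S := ENNReal.ofReal (s ^ n) with hS
  have hS0 : S ≠ 0 := by rw [hS]; simp; positivity
  have hSt : S ≠ ⊤ := ENNReal.ofReal_ne_top
  set V := ENNReal.ofReal (vB n) with hV
  have hV0 : V ≠ 0 := by rw [hV]; simpa using hv
  have hVt : V ≠ ⊤ := ENNReal.ofReal_ne_top
  set W := bMax (cv (Fk R ψ N) h) x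
  set q := Q ^ (2⁻¹ : ℝ)
  rw [ENNReal.ofReal_mul hv.le] at hint
  have hfin : (V * S) * ‖cv (Fk R ψ k) h x‖ₑ ≤
      (V * S) * (ENNReal.ofReal ((vB n)⁻¹ + (D * √(vB n) +
        (vB n)⁻¹ * √(vB n * c * 4 ^ n))) * (W + q)) := by
    calc _ = ‖cv (Fk R ψ k) h x‖ₑ * (V * S) := mul_comm _ _
      _ ≤ _ := hint
      _ ≤ S * W + (S * (ENNReal.ofReal (√(vB n * c * 4 ^ n)) * q) +
          ENNReal.ofReal D * (ENNReal.ofReal (√(vB n)) * q) * (V * S)) := by gcongr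
      _ = (V * S) * (V⁻¹ * W + (ENNReal.ofReal D * ENNReal.ofReal (√(vB n)) +
          V⁻¹ * ENNReal.ofReal (√(vB n * c * 4 ^ n))) * q) := by
        have : V * V⁻¹ = 1 := ENNReal.mul_inv_cancel hV0 hVt
        calc _ = S * (1 * W) + (S * (1 * ENNReal.ofReal (√(vB n * c * 4 ^ n)) * q) +
              ENNReal.ofReal D * (ENNReal.ofReal (√(vB n)) * q) * (V * S)) := by simp
          _ = _ := by rw [← this]; ring
      _ ≤ _ := by
        have hA : ENNReal.ofReal ((vB n)⁻¹ + (D * √(vB n) + (vB n)⁻¹ * √(vB n * c * 4 ^ n))) =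
            V⁻¹ + (ENNReal.ofReal D * ENNReal.ofReal (√(vB n)) +
              V⁻¹ * ENNReal.ofReal (√(vB n * c * 4 ^ n))) := by
          rw [ENNReal.ofReal_add (by positivity) (by positivity),
            ENNReal.ofReal_add (by positivity) (by positivity),
            ENNReal.ofReal_mul (by positivity : 0 ≤ D),
            ENNReal.ofReal_mul (by positivity : 0 ≤ (vB n)⁻¹), ENNReal.ofReal_inv_of_pos hv]
        rw [hA, mul_add _ W q]
        refine mul_le_mul_right (add_le_add (mul_le_mul_left le_self_add _)
          (mul_le_mul_left le_add_self _)) _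
  exact (ENNReal.mul_le_mul_iff_right (mul_ne_zero hV0 hS0) (ENNReal.mul_ne_top hVt hSt)).1 hfin

/-- The maximal partial sum `sup_k |Fk R ψ k * h|`. -/
def Sst {n : ℕ} (R : ℝ) (ψ : E n → ℝ) (h : E n → ℝ) (x : E n) : ℝ≥0∞ :=
  ⨆ k, ‖cv (Fk R ψ k) h x‖ₑ

/-- Cotlar's inequality reduces the weak type (2,2) of the maximal partial sum to that of the
maximal function. The supremum over `k ≤ N` is bounded first, with a constant independent of `N`. -/
lemma Sst_weak2 {n : ℕ} (hn : 0 < n) {ψ : E n → ℝ} (hψ : GoodPsi ψ) :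
    ∃ A : ℝ, 0 < A ∧ ∀ (R : ℝ) (h : E n → ℝ) (α : ℝ), 0 < R → 0 < α → MemLp h 2 →
      volume {x | ENNReal.ofReal α < Sst R ψ h x} ≤
        ENNReal.ofReal (A / α ^ 2) * ∫⁻ y, ‖h y‖ₑ ^ 2 := by
  obtain ⟨c, hc, hL2⟩ := Fk_L2 hψ
  obtain ⟨A, hA, hcot⟩ := cotlar hn hψ
  have hv := vB_pos n
  refine ⟨(vB n ^ 2 * 5 ^ n * c + vB n * 5 ^ n) * (4 * A ^ 2), by positivity,
    fun R h α hR hα hh => ?_⟩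
  set T : ℕ → Set (E n) := fun N => {x | ∃ k ≤ N, ENNReal.ofReal α < ‖cv (Fk R ψ k) h x‖ₑ} with hT
  have hsub : {x | ENNReal.ofReal α < Sst R ψ h x} ⊆ ⋃ N, T N := by
    intro x hx
    have hx' : ENNReal.ofReal α < Sst R ψ h x := hx
    obtain ⟨k, hk⟩ := lt_iSup_iff.1 hx'
    exact mem_iUnion.2 ⟨k, k, le_rfl, hk⟩
  have hmono : Monotone T := fun a b hab x ⟨k, hk, h⟩ => ⟨k, hk.trans hab, h⟩
  refine (measure_mono hsub).trans ?_
  rw [hmono.measure_iUnion]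
  refine iSup_le fun N => ?_
  set β := α / (2 * A) with hβ
  have hβ0 : 0 < β := by positivity
  have hTN : T N ⊆ {x | ENNReal.ofReal β < bMax (cv (Fk R ψ N) h) x} ∪
      {x | ENNReal.ofReal (β ^ 2) < bMax (fun y => h y ^ 2) x} := by
    rintro x ⟨k, hk, hx⟩
    by_contra hcon
    simp only [mem_union, mem_ofPred_eq, not_or, not_lt] at hcon
    obtain ⟨h1, h2⟩ := hcon
    refine absurd hx (not_lt.2 ((hcot R k N h x hR hk hh).trans ?_))
    have h3 : (bMax (fun y => h y ^ 2) x) ^ (2⁻¹ : ℝ) ≤ ENNReal.ofReal β := by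
      rw [ENNReal.rpow_inv_le_iff two_pos, ENNReal.rpow_two, ← ENNReal.ofReal_pow hβ0.le]
      exact h2
    refine (mul_le_mul_right (add_le_add h1 h3) _).trans ?_
    rw [← ENNReal.ofReal_add hβ0.le hβ0.le, ← ENNReal.ofReal_mul hA.le]
    apply ENNReal.ofReal_le_ofReal
    apply le_of_eq
    rw [hβ]; field_simp; norm_num
  refine (measure_mono hTN).trans ((measure_union_le _ _).trans ?_)
  obtain ⟨hS, hSb⟩ := hL2 R N h hR hh
  have e1 := bMax_weak2 hn _ hS.aestronglyMeasurable hS.integrable_sq β hβ0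
  have e2 := bMax_weak hn _ hh.integrable_sq (β ^ 2) (by positivity)
  simp only [enorm_pow] at e2
  calc _ ≤ ENNReal.ofReal (vB n ^ 2 * 5 ^ n / β ^ 2) * (ENNReal.ofReal c * ∫⁻ y, ‖h y‖ₑ ^ 2) +
        ENNReal.ofReal (vB n * 5 ^ n / β ^ 2) * ∫⁻ y, ‖h y‖ₑ ^ 2 := by
        refine add_le_add (e1.trans ?_) e2
        gcongr
    _ = _ := by
        rw [← mul_assoc, ← ENNReal.ofReal_mul (by positivity), ← add_mul,
          ← ENNReal.ofReal_add (by positivity) (by positivity)]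
        congr 2
        rw [hβ]; field_simp; norm_num

/-! ### Hörmander's condition and atoms -/

/-- Hörmander's integral condition, summed over all scales. Scales small compared with `r` do not
contribute, because both dilations vanish outside the ball of radius `10 * r`; at larger scales
the Lipschitz bound gains a factor `r / scale`. -/
lemma hormander {n : ℕ} {ψ : E n → ℝ} (hψ : GoodPsi ψ) :
    ∃ H : ℝ, 0 < H ∧ ∀ (R r : ℝ) (c y : E n), 0 < R → 0 < r → ‖y - c‖ ≤ 5 * r →
      ∑' j, ∫⁻ x in (closedBall c (10 * r))ᶜ,
        ‖dil (R / 2 ^ j) ψ (x - y) - dil (R / 2 ^ j) ψ (x - c)‖ₑ ≤ ENNReal.ofReal H := by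
  obtain ⟨L, hL0, hL⟩ := hψ.lip
  have hv := vB_pos n
  refine ⟨L * (vB n * 4 ^ n) * 4, by positivity, fun R r c y hR hr hy => ?_⟩
  have hterm : ∀ j, ∫⁻ x in (closedBall c (10 * r))ᶜ,
      ‖dil (R / 2 ^ j) ψ (x - y) - dil (R / 2 ^ j) ψ (x - c)‖ₑ ≤
      if (2 : ℝ) ^ j ≤ 2 * R / (5 * r) then
        ENNReal.ofReal (L * (vB n * 4 ^ n) * (5 * r / R * 2 ^ j)) else 0 := by
    intro j
    set s := R / 2 ^ j with hs
    have hs0 : 0 < s := by positivity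
    split_ifs with hj
    · have hsr : 5 * r ≤ 2 * s := by
        rw [le_div_iff₀ (by positivity)] at hj
        rw [hs, mul_div_assoc', le_div_iff₀ (by positivity)]
        linarith
      calc _ ≤ ∫⁻ x in closedBall c (4 * s), ENNReal.ofReal (L * (s ^ n)⁻¹ * (5 * r / s)) := by
            rw [← lintegral_indicator measurableSet_closedBall]
            refine (setLIntegral_le_lintegral _ _).trans (lintegral_mono fun x => ?_)
            by_cases hx : x ∈ closedBall c (4 * s)
            · rw [indicator_of_mem hx, Real.enorm_eq_ofReal_abs]
              apply ENNReal.ofReal_le_ofReal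
              refine (dil_lip hL hs0 _ _).trans ?_
              have e : x - y - (x - c) = -(y - c) := by abel
              rw [e, norm_neg]
              gcongr
            · rw [indicator_of_notMem hx]
              rw [mem_closedBall, dist_eq_norm, not_le] at hx
              have h1 : 2 * s < ‖x - c‖ := by linarith
              have h2 : 2 * s < ‖x - y‖ := by
                have := norm_add_le (x - y) (y - c)
                rw [sub_add_sub_cancel] at this
                linarith
              rw [dil_supp hψ hs0 h1, dil_supp hψ hs0 h2]; simp
        _ = _ := by
            rw [setLIntegral_const, vol_closedBall c (by positivity),
              ← ENNReal.ofReal_mul (by positivity)]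
            congr 1
            rw [mul_pow, hs]
            field_simp
    · refine le_of_eq ?_
      have hsr : 2 * s < 5 * r := by
        rw [not_le, div_lt_iff₀ (by positivity)] at hj
        rw [hs, mul_div_assoc', div_lt_iff₀ (by positivity)]
        linarith
      have : ∀ x ∈ (closedBall c (10 * r))ᶜ,
          ‖dil s ψ (x - y) - dil s ψ (x - c)‖ₑ = 0 := by
        intro x hx
        rw [mem_compl_iff, mem_closedBall, dist_eq_norm, not_le] at hx
        have h1 : 2 * s < ‖x - c‖ := by linarith
        have h2 : 2 * s < ‖x - y‖ := by
          have := norm_add_le (x - y) (y - c)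
          rw [sub_add_sub_cancel] at this
          linarith
        rw [dil_supp hψ hs0 h1, dil_supp hψ hs0 h2]; simp
      rw [setLIntegral_congr_fun measurableSet_closedBall.compl this]; simp
  refine (ENNReal.tsum_le_tsum hterm).trans ?_
  rw [ENNReal.tsum_eq_iSup_nat]
  refine iSup_le fun k => ?_
  rw [← Finset.sum_filter, ← ENNReal.ofReal_sum_of_nonneg (fun _ _ => by positivity)]
  apply ENNReal.ofReal_le_ofReal
  rw [← Finset.mul_sum, ← Finset.mul_sum]
  have := geo1 (2 * R / (5 * r)) k (by positivity)
  have h2 : 5 * r / R * ∑ i ∈ Finset.range k with (2 : ℝ) ^ i ≤ 2 * R / (5 * r), (2 : ℝ) ^ i ≤ 4 := by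
    calc _ ≤ 5 * r / R * (2 * (2 * R / (5 * r))) := by gcongr
      _ = _ := by field_simp; norm_num
  gcongr

/-- A common majorant of the convolutions of all the dyadic sums with an atom `b`, a function of
integral zero concentrated near `c`. -/
def Wat {n : ℕ} (R : ℝ) (ψ b : E n → ℝ) (c x : E n) : ℝ≥0∞ :=
  ∑' j : ℕ, ∫⁻ y, ‖(dil (R / 2 ^ j) ψ (x - y) - dil (R / 2 ^ j) ψ (x - c)) * b y‖ₑ

lemma Wat_aux {n : ℕ} {ψ : E n → ℝ} (hψ : GoodPsi ψ) (s : ℝ) {b : E n → ℝ}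
    (hb : AEStronglyMeasurable b) (c : E n) :
    AEMeasurable (fun q : E n × E n => ‖(dil s ψ (q.1 - q.2) - dil s ψ (q.1 - c)) * b q.2‖ₑ)
      (volume.prod volume) := by
  have hc := (dil_smooth hψ s).continuous
  exact ((by fun_prop : Continuous fun q : E n × E n => dil s ψ (q.1 - q.2) -
    dil s ψ (q.1 - c)).aestronglyMeasurable.mul hb.comp_snd).enorm

lemma Wat_meas {n : ℕ} {ψ : E n → ℝ} (hψ : GoodPsi ψ) (R : ℝ) {b : E n → ℝ}
    (hb : AEStronglyMeasurable b) (c : E n) : AEMeasurable (Wat R ψ b c) :=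
  AEMeasurable.tsum fun j => (Wat_aux hψ (R / 2 ^ j) hb c).lintegral_prod_right'

lemma Wat_bound {n : ℕ} {ψ : E n → ℝ} (hψ : GoodPsi ψ) (R : ℝ) (hR : 0 < R) {b : E n → ℝ}
    (hb : Integrable b) (hb0 : ∫ y, b y = 0) (c x : E n) (k : ℕ) :
    ‖cv (Fk R ψ k) b x‖ₑ ≤ Wat R ψ b c x := by
  obtain ⟨C, hC⟩ := (Fk_hcs hψ hR k).exists_bound_of_continuous (Fk_smooth hψ R k).continuous
  have h1 := integrable_kh (Fk_smooth hψ R k).continuous.measurable hC hb x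
  -- Since `b` has integral zero, the constant `Fk R ψ k (x - c)` may be subtracted from the kernel.
  have e : cv (Fk R ψ k) b x = ∫ y, (Fk R ψ k (x - y) - Fk R ψ k (x - c)) * b y := by
    have := integral_sub h1 (hb.const_mul (Fk R ψ k (x - c)))
    rw [integral_const_mul, hb0, mul_zero, sub_zero] at this
    unfold cv
    rw [← this]
    congr 1; ext y; ring
  rw [e]
  refine (enorm_integral_le_lintegral_enorm _).trans ?_
  calc _ ≤ ∫⁻ y, ∑ j ∈ Finset.range k,
        ‖(dil (R / 2 ^ j) ψ (x - y) - dil (R / 2 ^ j) ψ (x - c)) * b y‖ₑ := by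
        refine lintegral_mono fun y => ?_
        simp only [Fk]
        rw [← Finset.sum_sub_distrib, Finset.sum_mul]
        exact enorm_sum_le _ _
    _ = ∑ j ∈ Finset.range k, _ := by
        refine lintegral_finsetSum' _ fun j _ => ?_
        have hc := (dil_smooth hψ (R / 2 ^ j)).continuous
        exact ((by fun_prop : Continuous fun y => dil (R / 2 ^ j) ψ (x - y) -
          dil (R / 2 ^ j) ψ (x - c)).aestronglyMeasurable.mul hb.aestronglyMeasurable).enorm
    _ ≤ _ := ENNReal.sum_le_tsum _

lemma Wat_int {n : ℕ} {ψ : E n → ℝ} (hψ : GoodPsi ψ) :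
    ∃ H : ℝ, 0 < H ∧ ∀ (R r : ℝ) (c : E n) (b : E n → ℝ), 0 < R → 0 < r → Integrable b →
      (∀ y ∉ closedBall c (5 * r), b y = 0) →
      ∫⁻ x in (closedBall c (10 * r))ᶜ, Wat R ψ b c x ≤ ENNReal.ofReal H * ∫⁻ y, ‖b y‖ₑ := by
  obtain ⟨H, hH, hh⟩ := hormander hψ
  refine ⟨H, hH, fun R r c b hR hr hb hbs => ?_⟩
  have hm := hb.aestronglyMeasurable
  set D : Set (E n) := (closedBall c (10 * r))ᶜ with hD
  have hpm : ∀ j : ℕ, AEMeasurable (fun q : E n × E n =>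
      ‖(dil (R / 2 ^ j) ψ (q.1 - q.2) - dil (R / 2 ^ j) ψ (q.1 - c)) * b q.2‖ₑ)
      ((volume.restrict D).prod volume) := by
    intro j
    refine (Wat_aux hψ (R / 2 ^ j) hm c).mono_measure ?_
    exact Measure.prod_mono Measure.restrict_le_self le_rfl
  unfold Wat
  rw [lintegral_tsum (fun j => (hpm j).lintegral_prod_right')]
  calc _ = ∑' j : ℕ, ∫⁻ y, ∫⁻ x in D,
        ‖(dil (R / 2 ^ j) ψ (x - y) - dil (R / 2 ^ j) ψ (x - c)) * b y‖ₑ :=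
        tsum_congr fun j => lintegral_lintegral_swap (hpm j)
    _ = ∑' j : ℕ, ∫⁻ y, (∫⁻ x in D,
        ‖dil (R / 2 ^ j) ψ (x - y) - dil (R / 2 ^ j) ψ (x - c)‖ₑ) * ‖b y‖ₑ := by
        congr 1; ext j; congr 1; ext y
        simp only [enorm_mul]
        rw [lintegral_mul_const' _ _ enorm_ne_top]
    _ = ∫⁻ y, ∑' j : ℕ, (∫⁻ x in D,
        ‖dil (R / 2 ^ j) ψ (x - y) - dil (R / 2 ^ j) ψ (x - c)‖ₑ) * ‖b y‖ₑ := by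
        symm
        refine lintegral_tsum fun j => ?_
        have hc := (dil_smooth hψ (R / 2 ^ j)).continuous
        refine AEMeasurable.mul ?_ hm.enorm
        have : Measurable (fun q : E n × E n =>
            ‖dil (R / 2 ^ j) ψ (q.1 - q.2) - dil (R / 2 ^ j) ψ (q.1 - c)‖ₑ) := by fun_prop
        exact this.lintegral_prod_left'.aemeasurable
    _ ≤ ∫⁻ y, ENNReal.ofReal H * ‖b y‖ₑ := by
        refine lintegral_mono fun y => ?_
        simp only
        rw [ENNReal.tsum_mul_right]
        by_cases hy : y ∈ closedBall c (5 * r)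
        · rw [mem_closedBall, dist_eq_norm] at hy
          exact mul_le_mul_left (hh R r c y hR hr hy) _
        · rw [hbs y hy]; simp
    _ = _ := lintegral_const_mul' _ _ ENNReal.ofReal_ne_top

/-! ### Calderón–Zygmund decomposition and the weak type (1,1) bound -/

lemma hasSum_disj {ι X : Type*} {s : ι → Set X} (hs : Pairwise fun i j => Disjoint (s i) (s j))
    (f : ι → X → ℝ) (y : X) :
    ∃ v, HasSum (fun i => (s i).indicator (f i) y) v ∧
      ((∃ i, y ∈ s i ∧ v = f i y) ∨ ((∀ i, y ∉ s i) ∧ v = 0)) := by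
  by_cases h : ∃ i, y ∈ s i
  · obtain ⟨i, hi⟩ := h
    refine ⟨f i y, ?_, Or.inl ⟨i, hi, rfl⟩⟩
    have := hasSum_single (f := fun i => (s i).indicator (f i) y) i fun j hj =>
      indicator_of_notMem (fun hyj => (hs hj).le_bot ⟨hyj, hi⟩) _
    simpa [indicator_of_mem hi] using this
  · push Not at h
    refine ⟨0, ?_, Or.inr ⟨h, rfl⟩⟩
    have : (fun i => (s i).indicator (f i) y) = fun _ => 0 := by
      ext i; exact indicator_of_notMem (h i) _
    rw [this]; exact hasSum_zero

/-- By Lebesgue differentiation, a function whose density on all balls centred at `x` is at most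
`α` is bounded by `α / vB n` at almost every such `x`. -/
lemma abs_le_of_ball_bound {n : ℕ} (h : E n → ℝ) (hh : Integrable h) (α : ℝ)
    (hα : 0 < α) : ∀ᵐ x, (∀ ρ : ℝ, 0 < ρ → ∫⁻ y in closedBall x ρ, ‖h y‖ₑ ≤
      ENNReal.ofReal (α * ρ ^ n)) → |h x| ≤ α / vB n := by
  have hv := vB_pos n
  filter_upwards [IsUnifLocDoublingMeasure.ae_tendsto_average volume hh.locallyIntegrable 1]
    with x hx hb
  have hδ : Tendsto (fun k : ℕ => 1 / ((k : ℝ) + 1)) atTop (𝓝[>] 0) := by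
    rw [tendsto_nhdsWithin_iff]
    exact ⟨tendsto_one_div_add_atTop_nhds_zero_nat, Eventually.of_forall fun k => by
      rw [mem_Ioi]; positivity⟩
  have ht := hx (fun _ : ℕ => x) _ hδ (Eventually.of_forall fun k => by
    rw [mem_closedBall, dist_self]; positivity)
  refine le_of_tendsto ht.abs (Eventually.of_forall fun k => ?_)
  set ρ : ℝ := 1 / ((k : ℝ) + 1)
  have hρ : 0 < ρ := by positivity
  rw [average_eq, smul_eq_mul, abs_mul, measureReal_def, Measure.restrict_apply_univ,
    vol_closedBall x hρ.le, ENNReal.toReal_ofReal (by positivity), abs_of_pos (by positivity)]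
  have h1 : |∫ y in closedBall x ρ, h y| ≤ α * ρ ^ n := by
    have := (enorm_integral_le_lintegral_enorm _).trans (hb ρ hρ)
    rw [Real.enorm_eq_ofReal_abs] at this
    exact (ENNReal.ofReal_le_ofReal_iff (by positivity)).1 this
  calc _ ≤ (vB n * ρ ^ n)⁻¹ * (α * ρ ^ n) := by gcongr
    _ = _ := by field_simp

/-- The Calderón–Zygmund decomposition at height `α`, with balls in place of cubes. The enlarged
balls `closedBall c (5 * r c)` overlap; they are disjointified into sets `S c`, and the atom `b c`
is `h` on `S c` minus a constant on the smaller ball `closedBall c (r c)`, chosen so that the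
integral vanishes. The smaller balls are disjoint, so the subtracted constants remain bounded by a
multiple of `α`. -/
lemma cz_decomp {n : ℕ} (hn : 0 < n) (h : E n → ℝ) (hh : Integrable h) (α : ℝ) (hα : 0 < α) :
    ∃ (u : Set (E n)) (r : E n → ℝ) (b : u → E n → ℝ), u.Countable ∧ (∀ c ∈ u, 0 < r c) ∧
      (∀ c : u, Integrable (b c) ∧ ∫ y, b c y = 0 ∧
        ∀ y ∉ closedBall (c : E n) (5 * r c), b c y = 0) ∧
      (∑' c : u, ∫⁻ y, ‖b c y‖ₑ ≤ 2 * ∫⁻ y, ‖h y‖ₑ) ∧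
      (volume (⋃ c ∈ u, closedBall c (10 * r c)) ≤
        ENNReal.ofReal (vB n * 10 ^ n / α) * ∫⁻ y, ‖h y‖ₑ) ∧
      (∀ᵐ y, |h y - ∑' c : u, b c y| ≤ (1 + 5 ^ n) / vB n * α) ∧
      Integrable (fun y => ∑' c : u, b c y) := by
  have hv := vB_pos n
  obtain ⟨u, r, hu, hr, hd, h1, h2, h3⟩ := exists_cover hn h hh α hα
  obtain ⟨e, he⟩ := countable_iff_exists_injOn.1 hu
  have : Countable u := hu.to_subtype
  -- A point belongs to `S c` when `c` is the first centre, in the enumeration `e`, whose enlarged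
  -- ball contains it.
  set S : u → Set (E n) := fun c => closedBall (c : E n) (5 * r c) \
    ⋃ d : u, ⋃ (_ : e d < e c), closedBall (d : E n) (5 * r d) with hS
  have hSm : ∀ c, MeasurableSet (S c) := fun c =>
    measurableSet_closedBall.diff (MeasurableSet.iUnion fun d => MeasurableSet.iUnion fun _ =>
      measurableSet_closedBall)
  have hSs : ∀ c, S c ⊆ closedBall (c : E n) (5 * r c) := fun c => sdiff_subset
  have hSd : Pairwise fun i j => Disjoint (S i) (S j) := by
    have key : ∀ i j : u, e i < e j → Disjoint (S i) (S j) := by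
      intro i j hij
      rw [Set.disjoint_left]
      intro y hy hy2
      exact hy2.2 (mem_iUnion.2 ⟨i, mem_iUnion.2 ⟨hij, hSs i hy⟩⟩)
    intro i j hij
    rcases lt_trichotomy (e i) (e j) with h | h | h
    · exact key i j h
    · exact absurd (Subtype.ext (he i.2 j.2 h)) hij
    · exact (key j i h).symm
  have hSc : ∀ y, y ∈ ⋃ c ∈ u, closedBall c (5 * r c) → ∃ c, y ∈ S c := by
    intro y hy
    obtain ⟨c, hc, hyc⟩ := mem_iUnion₂.1 hy
    have hex : ∃ m, ∃ d : u, e d = m ∧ y ∈ closedBall (d : E n) (5 * r d) := ⟨_, ⟨c, hc⟩, rfl, hyc⟩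
    classical
    obtain ⟨d, hd1, hd2⟩ := Nat.find_spec hex
    refine ⟨d, hd2, fun hcon => ?_⟩
    obtain ⟨d', hd'⟩ := mem_iUnion.1 hcon
    obtain ⟨hlt, hmem⟩ := mem_iUnion.1 hd'
    rw [hd1] at hlt
    exact Nat.find_min hex hlt ⟨d', rfl, hmem⟩
  have hBd : Pairwise fun i j : u =>
      Disjoint (closedBall (i : E n) (r i)) (closedBall (j : E n) (r j)) :=
    fun i j hij => hd i.2 j.2 (fun h => hij (Subtype.ext h))
  set a : u → ℝ := fun c => (vB n * r c ^ n)⁻¹ * ∫ y in S c, h y with ha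
  set b : u → E n → ℝ := fun c y => (S c).indicator h y -
    (closedBall (c : E n) (r c)).indicator (fun _ => a c) y with hb
  have hrc : ∀ c : u, 0 < r c := fun c => hr c c.2
  have hIi : ∀ c : u, Integrable ((closedBall (c : E n) (r c)).indicator (fun _ => a c)) := fun c =>
    (integrableOn_const measure_closedBall_lt_top.ne).integrable_indicator measurableSet_closedBall
  have hbi : ∀ c, Integrable (b c) := fun c => (hh.indicator (hSm c)).sub (hIi c)
  have hsumS : ∑' c : u, ∫⁻ y in S c, ‖h y‖ₑ ≤ ∫⁻ y, ‖h y‖ₑ := by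
    rw [← lintegral_iUnion hSm hSd]
    exact setLIntegral_le_lintegral _ _
  have hac : ∀ c : u, ENNReal.ofReal (vB n * r c ^ n) * ‖a c‖ₑ ≤ ∫⁻ y in S c, ‖h y‖ₑ := by
    intro c
    have := hrc c
    rw [ha]
    simp only
    rw [enorm_mul, Real.enorm_of_nonneg (by positivity), ← mul_assoc,
      ← ENNReal.ofReal_mul (by positivity), mul_inv_cancel₀ (by positivity), ENNReal.ofReal_one,
      one_mul]
    exact enorm_integral_le_lintegral_enorm _
  have hb1 : ∀ c : u, ∫⁻ y, ‖b c y‖ₑ ≤ 2 * ∫⁻ y in S c, ‖h y‖ₑ := by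
    intro c
    calc ∫⁻ y, ‖b c y‖ₑ ≤ ∫⁻ y, ((S c).indicator (fun y => ‖h y‖ₑ) y +
          (closedBall (c : E n) (r c)).indicator (fun _ => ‖a c‖ₑ) y) := by
          refine lintegral_mono fun y => ?_
          rw [hb]
          refine enorm_sub_le.trans ?_
          rw [enorm_indicator_eq_indicator_enorm, enorm_indicator_eq_indicator_enorm]
      _ = (∫⁻ y in S c, ‖h y‖ₑ) + ENNReal.ofReal (vB n * r c ^ n) * ‖a c‖ₑ := by
          rw [lintegral_add_right _ (measurable_const.indicator measurableSet_closedBall),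
            lintegral_indicator (hSm c), lintegral_indicator measurableSet_closedBall,
            setLIntegral_const, vol_closedBall _ (hrc c).le, mul_comm]
      _ ≤ _ := by rw [two_mul]; gcongr; exact hac c
  -- This holds because the mean of `|h|` over the enlarged ball is controlled by `α`.
  have hab : ∀ c, |a c| ≤ 5 ^ n / vB n * α := by
    intro c
    have hc := hrc c
    have e1 := (hac c).trans ((lintegral_mono_set (hSs c)).trans (h2 c c.2))
    rw [Real.enorm_eq_ofReal_abs, ← ENNReal.ofReal_mul (by positivity),
      ENNReal.ofReal_le_ofReal_iff (by positivity), mul_pow] at e1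
    rw [div_mul_eq_mul_div, le_div_iff₀ hv]
    have : 0 < r c ^ n := by positivity
    by_contra hcon
    push Not at hcon
    nlinarith
  -- Here `v` is the contribution of the disjoint sets `S c` and `w` that of the subtracted
  -- constants; each of the two series has at most one nonzero term at `y`.
  have hpt : ∀ y, ∃ v w, HasSum (fun c => b c y) (v - w) ∧
      ((∃ i, y ∈ S i ∧ v = h y) ∨ ((∀ i, y ∉ S i) ∧ v = 0)) ∧ |w| ≤ 5 ^ n / vB n * α := by
    intro y
    obtain ⟨v, hv1, hv2⟩ := hasSum_disj hSd (fun _ => h) y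
    obtain ⟨w, hw1, hw2⟩ := hasSum_disj hBd (fun c _ => a c) y
    refine ⟨v, w, hv1.sub hw1, hv2, ?_⟩
    rcases hw2 with ⟨i, _, rfl⟩ | ⟨_, rfl⟩
    · exact hab i
    · simp; positivity
  have hsum2 : ∑' c : u, ∫⁻ y, ‖b c y‖ₑ ≤ 2 * ∫⁻ y, ‖h y‖ₑ := by
    refine (ENNReal.tsum_le_tsum hb1).trans ?_
    rw [ENNReal.tsum_mul_left]
    gcongr
  refine ⟨u, r, b, hu, hr, fun c => ⟨hbi c, ?_, fun y hy => ?_⟩, hsum2,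
    cover_sum hα hu hr hd h1 10 (by norm_num), ?_, ?_, ?_⟩
  · rw [hb]
    simp only
    rw [integral_sub (hh.indicator (hSm c)) (hIi c), integral_indicator (hSm c),
      integral_indicator measurableSet_closedBall, setIntegral_const, measureReal_def,
      vol_closedBall _ (hrc c).le, ENNReal.toReal_ofReal (by have := hrc c; positivity), smul_eq_mul,
      ha]
    have := hrc c
    simp only
    rw [mul_inv_cancel_left₀ (by positivity), sub_self]
  · rw [hb]
    simp only
    rw [indicator_of_notMem (fun h => hy (hSs c h)), indicator_of_notMem, sub_zero]
    refine fun h => hy (closedBall_subset_closedBall ?_ h)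
    have := hrc c
    linarith
  · filter_upwards [abs_le_of_ball_bound h hh α hα] with y hy
    obtain ⟨v, w, hs, hvv, hw⟩ := hpt y
    rw [hs.tsum_eq]
    rcases hvv with ⟨i, _, rfl⟩ | ⟨hno, rfl⟩
    · rw [_root_.sub_sub_cancel]
      refine hw.trans ?_
      gcongr; linarith
    · have h4 : |h y| ≤ α / vB n := hy (h3 y fun hcon => by
        obtain ⟨c, hc⟩ := hSc y hcon
        exact hno c hc)
      have := abs_add_le (h y) w
      rw [zero_sub, sub_neg_eq_add]
      calc _ ≤ _ := this
        _ ≤ α / vB n + 5 ^ n / vB n * α := by gcongr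
        _ = _ := by ring
  · refine aestronglyMeasurable_of_tendsto_ae (atTop : Filter (Finset u))
      (f := fun s y => ∑ c ∈ s, b c y) (fun s => ?_) (Eventually.of_forall fun y => ?_)
    · exact Finset.aestronglyMeasurable_fun_sum _ fun c _ => (hbi c).aestronglyMeasurable
    · obtain ⟨v, w, hs, -⟩ := hpt y
      rw [hs.tsum_eq]
      exact hs
  · refine lt_of_le_of_lt (lintegral_mono fun y => enorm_tsum_le_tsum_enorm) ?_
    rw [lintegral_tsum fun c => (hbi c).aestronglyMeasurable.enorm]
    exact hsum2.trans_lt (ENNReal.mul_lt_top (by norm_num) hh.2)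

/-- The maximal partial sum is of weak type (1,1), uniformly in the largest scale `R`: the good
part of the Calderón–Zygmund decomposition is handled by the weak type (2,2), and the bad part by
the majorants `Wat` outside the union of the enlarged balls. -/
lemma Sst_weak1 {n : ℕ} (hn : 0 < n) {ψ : E n → ℝ} (hψ : GoodPsi ψ) :
    ∃ A : ℝ, 0 < A ∧ ∀ (R : ℝ) (h : E n → ℝ) (α : ℝ), 0 < R → 0 < α → Integrable h →
      volume {x | ENNReal.ofReal α < Sst R ψ h x} ≤
        ENNReal.ofReal (A / α) * ∫⁻ y, ‖h y‖ₑ := by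
  obtain ⟨A2, hA2, hw2⟩ := Sst_weak2 hn hψ
  obtain ⟨H, hH, hW⟩ := Wat_int hψ
  have hv := vB_pos n
  set G := (1 + 5 ^ n) / vB n with hG
  refine ⟨A2 * 4 * (G * 3) + (vB n * 10 ^ n + 2 * (H * 2)), by positivity,
    fun R h α hR hα hh => ?_⟩
  obtain ⟨u, r, b, hu, hr, hb, hbs, hvol, hg, hB⟩ := cz_decomp hn h hh α hα
  have : Countable u := hu.to_subtype
  set B : E n → ℝ := fun y => ∑' c : u, b c y with hBdef
  set g : E n → ℝ := fun y => h y - B y with hgdef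
  set N := ∫⁻ y, ‖h y‖ₑ with hN
  have hgi : Integrable g := hh.sub hB
  have hB1 : ∫⁻ y, ‖B y‖ₑ ≤ 2 * N := by
    refine (lintegral_mono fun y => enorm_tsum_le_tsum_enorm).trans ?_
    rwa [lintegral_tsum fun c => (hb c).1.aestronglyMeasurable.enorm]
  have hg1 : ∫⁻ y, ‖g y‖ₑ ≤ 3 * N := by
    calc _ ≤ ∫⁻ y, (‖h y‖ₑ + ‖B y‖ₑ) := lintegral_mono fun y => enorm_sub_le
      _ = N + ∫⁻ y, ‖B y‖ₑ := lintegral_add_left' hh.aestronglyMeasurable.enorm _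
      _ ≤ N + 2 * N := by gcongr
      _ = _ := by ring
  have hG0 : 0 < G := by positivity
  have hg2 : ∫⁻ y, ‖g y‖ₑ ^ 2 ≤ ENNReal.ofReal (G * α) * (3 * N) := by
    calc _ ≤ ∫⁻ y, ENNReal.ofReal (G * α) * ‖g y‖ₑ := by
          refine lintegral_mono_ae ?_
          filter_upwards [hg] with y hy
          rw [sq]
          gcongr
          rw [Real.enorm_eq_ofReal_abs]
          exact ENNReal.ofReal_le_ofReal hy
      _ = ENNReal.ofReal (G * α) * ∫⁻ y, ‖g y‖ₑ := lintegral_const_mul' _ _ ENNReal.ofReal_ne_top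
      _ ≤ _ := by gcongr
  have hgL2 : MemLp g 2 := by
    rw [memLp_two_iff_integrable_sq hgi.aestronglyMeasurable]
    refine ⟨hgi.aestronglyMeasurable.pow 2, ?_⟩
    simp only [HasFiniteIntegral, enorm_pow]
    exact hg2.trans_lt (ENNReal.mul_lt_top ENNReal.ofReal_lt_top
      (ENNReal.mul_lt_top (by norm_num) hh.2))
  set W : E n → ℝ≥0∞ := fun x => ∑' c : u, Wat R ψ (b c) c x with hWdef
  have hWm : AEMeasurable W :=
    AEMeasurable.tsum fun c => Wat_meas hψ R (hb c).1.aestronglyMeasurable c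
  have hSW : ∀ x, Sst R ψ h x ≤ Sst R ψ g x + W x := by
    intro x
    refine iSup_le fun k => ?_
    obtain ⟨C, hC⟩ := (Fk_hcs hψ hR k).exists_bound_of_continuous (Fk_smooth hψ R k).continuous
    have hFm := (Fk_smooth hψ R k).continuous.measurable
    have hC0 : 0 ≤ C := (norm_nonneg _).trans (hC 0)
    have hkx : AEStronglyMeasurable (fun y => Fk R ψ k (x - y)) :=
      (hFm.comp (by fun_prop : Measurable fun y : E n => x - y)).aestronglyMeasurable
    have e1 : cv (Fk R ψ k) h x = cv (Fk R ψ k) g x + cv (Fk R ψ k) B x := by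
      unfold cv
      rw [← integral_add (integrable_kh hFm hC hgi x) (integrable_kh hFm hC hB x)]
      congr 1; ext y; rw [hgdef]; ring
    have e2 : cv (Fk R ψ k) B x = ∑' c : u, cv (Fk R ψ k) (b c) x := by
      unfold cv
      rw [← integral_tsum]
      · congr 1; ext y; rw [hBdef, tsum_mul_left]
      · exact fun c => hkx.mul (hb c).1.aestronglyMeasurable
      · refine ne_top_of_le_ne_top (b := ENNReal.ofReal C * (2 * N)) (ENNReal.mul_ne_top
          ENNReal.ofReal_ne_top (ENNReal.mul_ne_top (by norm_num) hh.2.ne)) ?_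
        calc _ ≤ ∑' c : u, ENNReal.ofReal C * ∫⁻ y, ‖b c y‖ₑ := by
              refine ENNReal.tsum_le_tsum fun c => ?_
              rw [← lintegral_const_mul' _ _ ENNReal.ofReal_ne_top]
              refine lintegral_mono fun y => ?_
              rw [enorm_mul]
              gcongr
              rw [← ofReal_norm]
              exact ENNReal.ofReal_le_ofReal (hC _)
          _ ≤ _ := by rw [ENNReal.tsum_mul_left]; gcongr
    rw [e1]
    refine (enorm_add_le _ _).trans (add_le_add (le_iSup (fun k => ‖cv (Fk R ψ k) g x‖ₑ) k) ?_)
    rw [e2]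
    refine enorm_tsum_le_tsum_enorm.trans (ENNReal.tsum_le_tsum fun c => ?_)
    exact Wat_bound hψ R hR (hb c).1 (hb c).2.1 c x k
  set U := ⋃ c ∈ u, closedBall c (10 * r c) with hU
  have hUm : MeasurableSet U := MeasurableSet.biUnion hu fun _ _ => measurableSet_closedBall
  have hWU : ∫⁻ x in Uᶜ, W x ≤ ENNReal.ofReal H * (2 * N) := by
    rw [hWdef, lintegral_tsum fun c => (Wat_meas hψ R (hb c).1.aestronglyMeasurable c).restrict]
    calc _ ≤ ∑' c : u, ENNReal.ofReal H * ∫⁻ y, ‖b c y‖ₑ := by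
          refine ENNReal.tsum_le_tsum fun c => ?_
          refine (lintegral_mono_set ?_).trans
            (hW R (r c) c (b c) hR (hr c c.2) (hb c).1 (hb c).2.2)
          exact compl_subset_compl.2 (subset_biUnion_of_mem (u := fun c => closedBall c (10 * r c)) c.2)
      _ ≤ _ := by rw [ENNReal.tsum_mul_left]; gcongr
  have hsub : {x | ENNReal.ofReal α < Sst R ψ h x} ⊆
      {x | ENNReal.ofReal (α / 2) < Sst R ψ g x} ∪ (U ∪ (Uᶜ ∩ {x | ENNReal.ofReal (α / 2) ≤ W x})) := by
    intro x hx
    have hx' : ENNReal.ofReal α < Sst R ψ h x := hx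
    by_cases hxU : x ∈ U
    · exact Or.inr (Or.inl hxU)
    by_cases hxg : ENNReal.ofReal (α / 2) < Sst R ψ g x
    · exact Or.inl hxg
    refine Or.inr (Or.inr ⟨hxU, ?_⟩)
    by_contra hcon
    have hcon' : W x < ENNReal.ofReal (α / 2) := not_le.1 hcon
    refine absurd (hx'.trans_le (hSW x)) (not_lt.2 ?_)
    calc _ ≤ ENNReal.ofReal (α / 2) + ENNReal.ofReal (α / 2) := add_le_add (not_lt.1 hxg) hcon'.le
      _ = _ := by rw [← ENNReal.ofReal_add (by positivity) (by positivity), add_halves]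
  have hmk : volume (Uᶜ ∩ {x | ENNReal.ofReal (α / 2) ≤ W x}) ≤
      ENNReal.ofReal (2 / α) * (ENNReal.ofReal H * (2 * N)) := by
    have h0 := meas_ge_le_lintegral_div (hWm.restrict (s := Uᶜ)) (ε := ENNReal.ofReal (α / 2))
      (by simpa using hα) ENNReal.ofReal_ne_top
    rw [inter_comm]
    refine (Measure.le_restrict_apply _ _).trans (h0.trans ?_)
    rw [ENNReal.div_eq_inv_mul, ← ENNReal.ofReal_inv_of_pos (by positivity), inv_div]
    gcongr
  refine (measure_mono hsub).trans ((measure_union_le _ _).trans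
    ((add_le_add (hw2 R g (α / 2) hR (by positivity) hgL2)
    ((measure_union_le _ _).trans (add_le_add hvol hmk))).trans ?_))
  calc _ ≤ ENNReal.ofReal (A2 / (α / 2) ^ 2) * (ENNReal.ofReal (G * α) * (3 * N)) +
        (ENNReal.ofReal (vB n * 10 ^ n / α) * N +
          ENNReal.ofReal (2 / α) * (ENNReal.ofReal H * (2 * N))) := by gcongr
    _ = _ := by
      have e3 : (3 : ℝ≥0∞) = ENNReal.ofReal 3 := by simp
      have e2 : (2 : ℝ≥0∞) = ENNReal.ofReal 2 := by simp
      rw [e3, e2]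
      simp only [← mul_assoc]
      rw [← ENNReal.ofReal_mul (by positivity), ← ENNReal.ofReal_mul (by positivity),
        ← ENNReal.ofReal_mul (by positivity), ← ENNReal.ofReal_mul (by positivity), ← add_mul,
        ← add_mul, ← ENNReal.ofReal_add (by positivity) (by positivity),
        ← ENNReal.ofReal_add (by positivity) (by positivity)]
      congr 2
      field_simp
      ring

/-! ### Smooth dyadic decomposition of the kernel -/

lemma IsCZKernel.meas {n : ℕ} {Ω : E n → ℝ} (hK : IsCZKernel Ω) : Measurable Ω :=
  measurable_of_continuousOn_compl_singleton 0 hK.smooth.continuousOn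

lemma IsCZKernel.bdd {n : ℕ} {Ω : E n → ℝ} (hK : IsCZKernel Ω) :
    ∃ M : ℝ, 0 < M ∧ ∀ x, |Ω x| ≤ M := by
  have hc : ContinuousOn Ω (sphere (0 : E n) 1) := hK.smooth.continuousOn.mono fun x hx => by
    have hx' : ‖x‖ = 1 := by simpa using hx
    have : x ≠ 0 := by rintro rfl; simp at hx'
    exact this
  obtain ⟨M, hM⟩ := (isCompact_sphere (0 : E n) 1).exists_bound_of_continuousOn hc
  refine ⟨|M| + |Ω 0| + 1, by positivity, fun x => ?_⟩
  by_cases hx : x = 0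
  · subst hx; have := abs_nonneg M; linarith
  · have h1 : Ω x = Ω (‖x‖⁻¹ • x) := (hK.hom x _ (by positivity)).symm
    have h2 := hM (‖x‖⁻¹ • x) (by simp [norm_smul, hx])
    rw [← h1, Real.norm_eq_abs] at h2
    have := le_abs_self M
    have := abs_nonneg (Ω 0)
    linarith

lemma kernelFn_meas {n : ℕ} {Ω : E n → ℝ} (hK : IsCZKernel Ω) : Measurable (kernelFn Ω) := by
  have := hK.meas
  unfold kernelFn
  fun_prop

lemma kernelFn_le {n : ℕ} {Ω : E n → ℝ} {M : ℝ} (hM : ∀ x, |Ω x| ≤ M) (x : E n) :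
    |kernelFn Ω x| ≤ M / ‖x‖ ^ n := by
  unfold kernelFn
  rw [abs_div, abs_of_nonneg (a := ‖x‖ ^ n) (by positivity)]
  gcongr
  exact hM x

lemma kernelFn_smul {n : ℕ} {Ω : E n → ℝ} (hK : IsCZKernel Ω) {t : ℝ} (ht : 0 < t) (x : E n) :
    kernelFn Ω (t • x) = (t ^ n)⁻¹ * kernelFn Ω x := by
  unfold kernelFn
  rw [hK.hom x t ht, norm_smul, Real.norm_of_nonneg ht.le, mul_pow]
  field_simp

lemma kernelFn_odd {n : ℕ} {Ω : E n → ℝ} (hodd : ∀ x, Ω (-x) = -Ω x) (x : E n) :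
    kernelFn Ω (-x) = - kernelFn Ω x := by
  unfold kernelFn
  rw [hodd, norm_neg, neg_div]

lemma kernelEps_meas {n : ℕ} {Ω : E n → ℝ} (hK : IsCZKernel Ω) (ε : ℝ) :
    Measurable (kernelEps Ω ε) :=
  Measurable.ite (measurableSet_lt measurable_const measurable_norm) (kernelFn_meas hK)
    measurable_const

lemma kernelEps_le {n : ℕ} {Ω : E n → ℝ} {M : ℝ} (hM0 : 0 ≤ M) (hM : ∀ x, |Ω x| ≤ M) {ε : ℝ}
    (hε : 0 < ε) (x : E n) : |kernelEps Ω ε x| ≤ M / ε ^ n := by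
  unfold kernelEps
  split_ifs with h
  · refine (kernelFn_le hM x).trans ?_
    gcongr
  · rw [abs_zero]; positivity

lemma kernelEps_odd {n : ℕ} {Ω : E n → ℝ} (hodd : ∀ x, Ω (-x) = -Ω x) (ε : ℝ) (x : E n) :
    kernelEps Ω ε (-x) = - kernelEps Ω ε x := by
  unfold kernelEps
  rw [norm_neg, kernelFn_odd hodd]
  split_ifs <;> simp

lemma Teps_eq {n : ℕ} (Ω : E n → ℝ) (ε : ℝ) (h : E n → ℝ) (x : E n) :
    Teps Ω ε h x = ∫ y, kernelEps Ω ε y * h (x - y) := by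
  unfold Teps
  rw [← integral_indicator (measurableSet_lt measurable_const measurable_norm)]
  congr 1
  ext y
  unfold kernelEps
  by_cases hy : ε < ‖y‖
  · rw [indicator_of_mem (by exact hy), if_pos hy]
  · rw [indicator_of_notMem (by exact hy), if_neg hy, zero_mul]

lemma Teps_eq_cv {n : ℕ} (Ω : E n → ℝ) (ε : ℝ) (h : E n → ℝ) (x : E n) :
    Teps Ω ε h x = cv (kernelEps Ω ε) h x := by
  rw [Teps_eq]
  unfold cv
  rw [← integral_sub_left_eq_self _ _ x]
  simp

/-- An even smooth bump function, equal to `1` on the unit ball and supported in the ball of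
radius `2`. -/
def bmp (n : ℕ) : ContDiffBump (0 : E n) := ⟨1, 2, one_pos, one_lt_two⟩

lemma bmp_one {n : ℕ} {x : E n} (hx : ‖x‖ ≤ 1) : bmp n x = 1 :=
  (bmp n).one_of_mem_closedBall (by simpa [bmp] using hx)

lemma bmp_zero {n : ℕ} {x : E n} (hx : 2 ≤ ‖x‖) : bmp n x = 0 :=
  (bmp n).zero_of_le_dist (by simpa [bmp] using hx)

/-- The piece of the kernel living on the annulus `1/2 ≤ ‖x‖ ≤ 2`. -/
def kPsi {n : ℕ} (Ω : E n → ℝ) (x : E n) : ℝ :=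
  kernelFn Ω x * (bmp n x - bmp n ((2 : ℝ) • x))

/-- The two bumps agree near the origin and both vanish far from it, so the piece is smooth with
compact support; its integral vanishes because it is odd. -/
lemma kPsi_good {n : ℕ} {Ω : E n → ℝ} (hK : IsCZKernel Ω) (hodd : ∀ x, Ω (-x) = -Ω x) :
    GoodPsi (kPsi Ω) where
  smooth := by
    rw [contDiff_iff_contDiffAt]
    intro x
    by_cases hx : x = 0
    · subst hx
      refine (contDiffAt_const (c := (0 : ℝ))).congr_of_eventuallyEq ?_
      filter_upwards [ball_mem_nhds (0 : E n) (by norm_num : (0 : ℝ) < 1 / 2)] with x hx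
      have hx' : ‖x‖ < 1 / 2 := by simpa using hx
      unfold kPsi
      rw [bmp_one (by linarith), bmp_one (by rw [norm_smul]; norm_num; linarith), sub_self,
        mul_zero]
    · have h1 : ContDiffAt ℝ (⊤ : ℕ∞) Ω x :=
        hK.smooth.contDiffAt (isOpen_compl_singleton.mem_nhds hx)
      have h2 : ContDiffAt ℝ (⊤ : ℕ∞) (fun x : E n => ‖x‖) x := contDiffAt_norm ℝ hx
      have h3 : ContDiff ℝ (⊤ : ℕ∞) (bmp n : E n → ℝ) := (bmp n).contDiff
      have h4 : ContDiff ℝ (⊤ : ℕ∞) (fun x : E n => bmp n ((2 : ℝ) • x)) :=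
        h3.comp (contDiff_const_smul 2)
      unfold kPsi kernelFn
      exact (h1.div (h2.pow n) (by positivity)).mul (h3.contDiffAt.sub h4.contDiffAt)
  supp x hx := by
    unfold kPsi
    rw [bmp_zero hx.le, bmp_zero (by rw [norm_smul]; norm_num; linarith), sub_self, mul_zero]
  int := by
    have h1 := integral_neg_eq_self (kPsi Ω) volume
    have h2 : ∀ x, kPsi Ω (-x) = - kPsi Ω x := by
      intro x
      unfold kPsi
      rw [kernelFn_odd hodd, smul_neg, (bmp n).neg, (bmp n).neg, neg_mul]
    simp only [h2, integral_neg] at h1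
    linarith

lemma dil_kPsi {n : ℕ} {Ω : E n → ℝ} (hK : IsCZKernel Ω) {s : ℝ} (hs : 0 < s) (x : E n) :
    dil s (kPsi Ω) x = kernelFn Ω x * (bmp n (s⁻¹ • x) - bmp n ((2 * s⁻¹) • x)) := by
  unfold dil kPsi
  rw [kernelFn_smul hK (by positivity), smul_smul, inv_pow, inv_inv]
  field_simp

/-- The dyadic sum telescopes: it is the kernel smoothly truncated to the scales between `R / 2 ^ k`
and `R`. -/
lemma Fk_kPsi {n : ℕ} {Ω : E n → ℝ} (hK : IsCZKernel Ω) {R : ℝ} (hR : 0 < R) (k : ℕ) (x : E n) :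
    Fk R (kPsi Ω) k x = kernelFn Ω x * (bmp n (R⁻¹ • x) - bmp n ((R / 2 ^ k)⁻¹ • x)) := by
  unfold Fk
  have : ∀ j, dil (R / 2 ^ j) (kPsi Ω) x = kernelFn Ω x *
      (bmp n ((R / 2 ^ j)⁻¹ • x) - bmp n ((R / 2 ^ (j + 1))⁻¹ • x)) := by
    intro j
    rw [dil_kPsi hK (by positivity)]
    have : 2 * (R / 2 ^ j)⁻¹ = (R / 2 ^ (j + 1))⁻¹ := by
      rw [pow_succ]; field_simp
    rw [this]
  simp only [this]
  rw [← Finset.mul_sum, Finset.sum_range_sub']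
  simp

/-- The sharp truncation at `ε` differs from a smooth truncation at a comparable scale only on the
annulus `ε < ‖x - y‖ ≤ 4 * ε`, where the kernel is at most `M / ε ^ n`; the error is therefore
bounded by the maximal function. -/
lemma Teps_le {n : ℕ} {Ω : E n → ℝ} (hK : IsCZKernel Ω) (hodd : ∀ x, Ω (-x) = -Ω x) :
    ∃ A : ℝ, 0 < A ∧ ∀ (R : ℝ) (h : E n → ℝ) (x : E n) (ε : ℝ), 0 < R → 0 < ε →
      Integrable h → (∀ y, R < ‖x - y‖ → h y = 0) →
      ‖Teps Ω ε h x‖ₑ ≤ Sst R (kPsi Ω) h x + ENNReal.ofReal A * bMax h x := by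
  obtain ⟨M, hM0, hM⟩ := hK.bdd
  refine ⟨M * 4 ^ n, by positivity, fun R h x ε hR hε hh hsupp => ?_⟩
  rw [Teps_eq_cv]
  by_cases hεR : R < ε
  · have : cv (kernelEps Ω ε) h x = 0 := by
      unfold cv
      refine integral_eq_zero_of_ae (Eventually.of_forall fun y => ?_)
      simp only [Pi.zero_apply]
      by_cases hy : R < ‖x - y‖
      · rw [hsupp y hy, mul_zero]
      · unfold kernelEps
        rw [if_neg (by linarith), zero_mul]
    rw [this]; simp
  push Not at hεR
  -- the comparable dyadic scale `s = R / 2 ^ k` satisfies `ε ≤ s < 2 * ε`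
  obtain ⟨k, hk1, hk2⟩ := exists_nat_pow_near ((one_le_div hε).2 hεR) one_lt_two
  have hs1 : ε ≤ R / 2 ^ k := by
    rw [le_div_iff₀ (by positivity)] at hk1 ⊢; linarith
  have hs2 : R / 2 ^ k < 2 * ε := by
    rw [div_lt_iff₀ hε, pow_succ] at hk2
    rw [div_lt_iff₀ (by positivity)]; linarith
  set s := R / 2 ^ k with hs
  have hs0 : 0 < s := by positivity
  obtain ⟨B, hB⟩ : ∃ B : ℝ, ∀ x, |Fk R (kPsi Ω) k x| ≤ B :=
    (Fk_hcs (kPsi_good hK hodd) hR k).exists_bound_of_continuous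
      (Fk_smooth (kPsi_good hK hodd) R k).continuous
  have hi1 := integrable_kh (Fk_smooth (kPsi_good hK hodd) R k).continuous.measurable hB hh x
  have hi2 := integrable_kh (kernelEps_meas hK ε) (kernelEps_le hM0.le hM hε) hh x
  have hdec : cv (kernelEps Ω ε) h x = cv (Fk R (kPsi Ω) k) h x +
      ∫ y, (kernelEps Ω ε (x - y) - Fk R (kPsi Ω) k (x - y)) * h y := by
    unfold cv
    rw [← integral_add hi1 ((hi2.sub hi1).congr (Eventually.of_forall fun y => by
      simp only [Pi.sub_apply]; ring))]
    congr 1; ext y; ring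
  rw [hdec]
  refine (enorm_add_le _ _).trans (add_le_add (le_iSup (fun k => ‖cv (Fk R (kPsi Ω) k) h x‖ₑ) k) ?_)
  refine (enorm_integral_le_lintegral_enorm _).trans ?_
  have key : ∫⁻ y, ‖(kernelEps Ω ε (x - y) - Fk R (kPsi Ω) k (x - y)) * h y‖ₑ ≤
      ENNReal.ofReal (M / ε ^ n) * ∫⁻ y in closedBall x (4 * ε), ‖h y‖ₑ := by
    rw [← lintegral_const_mul' _ _ ENNReal.ofReal_ne_top,
      ← lintegral_indicator measurableSet_closedBall]
    refine lintegral_mono fun y => ?_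
    by_cases hy : R < ‖x - y‖
    · rw [hsupp y hy]; simp
    push Not at hy
    have hF : Fk R (kPsi Ω) k (x - y) = kernelFn Ω (x - y) * (1 - bmp n (s⁻¹ • (x - y))) := by
      rw [Fk_kPsi hK hR, bmp_one]
      rw [norm_smul, norm_inv, Real.norm_of_nonneg hR.le, inv_mul_le_iff₀ hR]; linarith
    rw [hF]
    have hnsm : ‖s⁻¹ • (x - y)‖ = ‖x - y‖ / s := by
      rw [norm_smul, norm_inv, Real.norm_of_nonneg hs0.le]; ring
    by_cases h1 : ‖x - y‖ ≤ ε
    · have : kernelEps Ω ε (x - y) = 0 := by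
        unfold kernelEps; rw [if_neg (not_lt.2 h1)]
      rw [this, bmp_one (by rw [hnsm, div_le_one hs0]; linarith)]
      simp
    push Not at h1
    have hke : kernelEps Ω ε (x - y) = kernelFn Ω (x - y) := by
      unfold kernelEps; rw [if_pos h1]
    by_cases h2 : y ∈ closedBall x (4 * ε)
    · rw [indicator_of_mem h2, enorm_mul]
      gcongr
      rw [Real.enorm_eq_ofReal_abs]
      refine ENNReal.ofReal_le_ofReal ?_
      rw [hke]
      have e : kernelFn Ω (x - y) - kernelFn Ω (x - y) * (1 - bmp n (s⁻¹ • (x - y))) =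
        kernelFn Ω (x - y) * bmp n (s⁻¹ • (x - y)) := by ring
      rw [e, abs_mul, abs_of_nonneg (bmp n).nonneg]
      have a1 := (kernelFn_le hM (x - y)).trans (by gcongr : M / ‖x - y‖ ^ n ≤ M / ε ^ n)
      calc _ ≤ (M / ε ^ n) * 1 := by
            exact mul_le_mul a1 (bmp n).le_one (bmp n).nonneg (by positivity)
        _ = _ := mul_one _
    · have h3 : 4 * ε < ‖x - y‖ := by
        rw [mem_closedBall, dist_comm, dist_eq_norm] at h2
        linarith
      rw [hke, bmp_zero (by rw [hnsm, le_div_iff₀ hs0]; linarith)]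
      simp
  refine key.trans ((mul_le_mul_right (le_bMax h x (by positivity : 0 < 4 * ε)) _).trans ?_)
  rw [← mul_assoc, ← ENNReal.ofReal_mul (by positivity)]
  have e : M / ε ^ n * (4 * ε) ^ n = M * 4 ^ n := by
    rw [mul_pow]; field_simp
  rw [e]

/-- The maximal truncated singular integral `sup_{ε > 0} |T_ε h|`. -/
def Tst {n : ℕ} (Ω : E n → ℝ) (h : E n → ℝ) (x : E n) : ℝ≥0∞ :=
  ⨆ (ε : ℝ) (_ : 0 < ε), ‖Teps Ω ε h x‖ₑ

lemma le_Tst {n : ℕ} (Ω : E n → ℝ) (h : E n → ℝ) (x : E n) {ε : ℝ} (hε : 0 < ε) :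
    ‖Teps Ω ε h x‖ₑ ≤ Tst Ω h x := le_iSup₂_of_le ε hε le_rfl

/-- For `x` and the support of `h` in the ball of radius `R`, all distances `‖x - y‖` that matter are
at most `2 * R`, so `2 * R` may serve as the largest dyadic scale. -/
lemma Tst_sub {n : ℕ} {Ω : E n → ℝ} (hK : IsCZKernel Ω) (hodd : ∀ x, Ω (-x) = -Ω x) :
    ∃ A : ℝ, 0 < A ∧ ∀ (R α : ℝ) (h : E n → ℝ), 0 < R → 0 < α →
      Integrable h → (∀ y, R < ‖y‖ → h y = 0) →
      {x | ENNReal.ofReal α < Tst Ω h x} ∩ closedBall 0 R ⊆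
        {x | ENNReal.ofReal (α / 2) < Sst (2 * R) (kPsi Ω) h x} ∪
        {x | ENNReal.ofReal (α / (2 * A)) < bMax h x} := by
  obtain ⟨A, hA, hT⟩ := Teps_le hK hodd
  refine ⟨A, hA, fun R α h hR hα hh hsupp => ?_⟩
  rintro x ⟨hx, hxR⟩
  by_contra hcon
  rw [mem_union, not_or] at hcon
  obtain ⟨h1, h2⟩ := hcon
  have h1' : Sst (2 * R) (kPsi Ω) h x ≤ ENNReal.ofReal (α / 2) := not_lt.1 h1
  have h2' : bMax h x ≤ ENNReal.ofReal (α / (2 * A)) := not_lt.1 h2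
  have hx' : ENNReal.ofReal α < Tst Ω h x := hx
  refine absurd hx' (not_lt.2 (iSup₂_le fun ε hε => ?_))
  have hxn : ‖x‖ ≤ R := by simpa using hxR
  refine (hT (2 * R) h x ε (by positivity) hε hh fun y hy => hsupp y ?_).trans ?_
  · have := norm_sub_le x y
    linarith
  calc _ ≤ ENNReal.ofReal (α / 2) + ENNReal.ofReal A * ENNReal.ofReal (α / (2 * A)) := by gcongr
    _ = _ := by
      rw [← ENNReal.ofReal_mul hA.le, ← ENNReal.ofReal_add (by positivity) (by positivity)]
      congr 1
      field_simp
      norm_num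

/-- Local weak type (1,1) of the maximal truncated singular integral. -/
lemma Tst_weak1 {n : ℕ} (hn : 0 < n) {Ω : E n → ℝ} (hK : IsCZKernel Ω)
    (hodd : ∀ x, Ω (-x) = -Ω x) :
    ∃ A : ℝ, 0 < A ∧ ∀ (R α : ℝ) (h : E n → ℝ), 0 < R → 0 < α →
      Integrable h → (∀ y, R < ‖y‖ → h y = 0) →
      volume ({x | ENNReal.ofReal α < Tst Ω h x} ∩ closedBall 0 R) ≤
        ENNReal.ofReal (A / α) * ∫⁻ y, ‖h y‖ₑ := by
  obtain ⟨A, hA, hsub⟩ := Tst_sub hK hodd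
  obtain ⟨B, hB, hw⟩ := Sst_weak1 hn (kPsi_good hK hodd)
  have hv := vB_pos n
  refine ⟨2 * B + vB n * 5 ^ n * (2 * A), by positivity, fun R α h hR hα hh hs => ?_⟩
  refine (measure_mono (hsub R α h hR hα hh hs)).trans ((measure_union_le _ _).trans
    ((add_le_add (hw (2 * R) h (α / 2) (by positivity) (by positivity) hh)
      (bMax_weak hn h hh (α / (2 * A)) (by positivity))).trans ?_))
  rw [← add_mul, ← ENNReal.ofReal_add (by positivity) (by positivity)]
  gcongr
  apply le_of_eq
  field_simp

/-- Local weak type (2,2) of the maximal truncated singular integral. -/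
lemma Tst_weak2 {n : ℕ} (hn : 0 < n) {Ω : E n → ℝ} (hK : IsCZKernel Ω)
    (hodd : ∀ x, Ω (-x) = -Ω x) :
    ∃ A : ℝ, 0 < A ∧ ∀ (R α : ℝ) (h : E n → ℝ), 0 < R → 0 < α →
      Integrable h → MemLp h 2 → (∀ y, R < ‖y‖ → h y = 0) →
      volume ({x | ENNReal.ofReal α < Tst Ω h x} ∩ closedBall 0 R) ≤
        ENNReal.ofReal (A / α ^ 2) * ∫⁻ y, ‖h y‖ₑ ^ 2 := by
  obtain ⟨A, hA, hsub⟩ := Tst_sub hK hodd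
  obtain ⟨B, hB, hw⟩ := Sst_weak2 hn (kPsi_good hK hodd)
  have hv := vB_pos n
  refine ⟨4 * B + vB n ^ 2 * 5 ^ n * (4 * A ^ 2), by positivity, fun R α h hR hα hh h2 hs => ?_⟩
  refine (measure_mono (hsub R α h hR hα hh hs)).trans ((measure_union_le _ _).trans
    ((add_le_add (hw (2 * R) h (α / 2) (by positivity) (by positivity) h2)
      (bMax_weak2 hn h hh.1 h2.integrable_sq (α / (2 * A)) (by positivity))).trans ?_))
  rw [← add_mul, ← ENNReal.ofReal_add (by positivity) (by positivity)]
  gcongr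
  apply le_of_eq
  field_simp
  ring

/-! ### Existence of the principal value -/

/-- Lipschitz functions with compact support. -/
structure Nice {n : ℕ} (f : E n → ℝ) : Prop where
  hcs : HasCompactSupport f
  lip : ∃ L : ℝ, 0 < L ∧ ∀ x y, |f x - f y| ≤ L * ‖x - y‖

lemma Nice.cont {n : ℕ} {f : E n → ℝ} (hf : Nice f) : Continuous f := by
  obtain ⟨L, hL, h⟩ := hf.lip
  exact (LipschitzWith.of_dist_le_mul (K := ⟨L, hL.le⟩) fun x y => by
    rw [Real.dist_eq, dist_eq_norm]; exact h x y).continuous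

lemma Nice.bdd {n : ℕ} {f : E n → ℝ} (hf : Nice f) : ∃ B : ℝ, 0 < B ∧ ∀ x, |f x| ≤ B := by
  obtain ⟨M, hM⟩ := hf.hcs.exists_bound_of_continuous hf.cont
  refine ⟨|M| + 1, by positivity, fun x => ?_⟩
  have h1 : |f x| ≤ M := hM x
  have := le_abs_self M
  linarith

lemma Nice.integrable {n : ℕ} {f : E n → ℝ} (hf : Nice f) : Integrable f :=
  hf.cont.integrable_of_hasCompactSupport hf.hcs

lemma Nice.memLinftyC {n : ℕ} {f : E n → ℝ} (hf : Nice f) : MemLinftyC f :=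
  ⟨hf.cont.measurable, let ⟨B, _, h⟩ := hf.bdd; ⟨B, h⟩, hf.hcs⟩

lemma hcs_radius {n : ℕ} {f : E n → ℝ} (hf : HasCompactSupport f) :
    ∃ R : ℝ, 0 < R ∧ ∀ y, R < ‖y‖ → f y = 0 := by
  obtain ⟨R, hR⟩ := hf.isCompact.isBounded.subset_closedBall (0 : E n)
  refine ⟨|R| + 1, by positivity, fun y hy => image_eq_zero_of_notMem_tsupport fun h => ?_⟩
  have h1 : ‖y‖ ≤ R := by simpa using hR h
  have := le_abs_self R
  linarith

/-- `‖y‖ ^ (1 - n)` is locally integrable; the quotient form avoids negative exponents. -/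
lemma kerloc {n : ℕ} (hn : 0 < n) :
    IntegrableOn (fun y : E n => ‖y‖ / ‖y‖ ^ n) (closedBall 0 1) := by
  have : LocallyIntegrable (fun y : E n => ‖y‖ / ‖y‖ ^ n) volume := by
    refine locallyIntegrable_of_norm_le_rpow (α := (n : ℝ) - 1) (C := 1) ?_ ?_ ?_ ?_
    · rw [finrank_euclideanSpace, Fintype.card_fin]; exact hn
    · simp
    · have h0 : ∀ᵐ y : E n, y ≠ 0 := by
        have : Nontrivial (E n) := Module.nontrivial_of_finrank_pos (R := ℝ) (by simpa using hn)
        exact (measure_eq_zero_iff_ae_notMem.1 (measure_singleton (0 : E n)))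
      filter_upwards [h0] with y hy
      have hy' : 0 < ‖y‖ := norm_pos_iff.2 hy
      rw [Real.norm_of_nonneg (by positivity), one_mul, neg_sub, Real.rpow_sub hy', Real.rpow_one,
        Real.rpow_natCast]
    · exact (by fun_prop : Measurable fun y : E n => ‖y‖ / ‖y‖ ^ n).aestronglyMeasurable
  exact this.integrableOn_isCompact (isCompact_closedBall 0 1)

/-- The odd symmetrisation of the truncated integral: the singularity becomes integrable on
Lipschitz functions. -/
lemma Teps_symm {n : ℕ} {Ω : E n → ℝ} (hK : IsCZKernel Ω) (hodd : ∀ x, Ω (-x) = -Ω x)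
    {f : E n → ℝ} (hf : Integrable f) {ε : ℝ} (hε : 0 < ε) (x : E n) :
    Teps Ω ε f x = 2⁻¹ * ∫ y, kernelEps Ω ε y * (f (x - y) - f (x + y)) := by
  obtain ⟨M, hM0, hM⟩ := hK.bdd
  have hb := kernelEps_le hM0.le hM hε
  have i1 : Integrable fun y => kernelEps Ω ε y * f (x - y) :=
    (hf.comp_sub_left x).bdd_mul (kernelEps_meas hK ε).aestronglyMeasurable
      (Eventually.of_forall fun y => hb y)
  have i2 : Integrable fun y => kernelEps Ω ε y * f (x + y) :=
    (hf.comp_add_left x).bdd_mul (kernelEps_meas hK ε).aestronglyMeasurable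
      (Eventually.of_forall fun y => hb y)
  have h2 : ∫ y, kernelEps Ω ε y * f (x - y) = - ∫ y, kernelEps Ω ε y * f (x + y) := by
    rw [← integral_neg_eq_self, ← integral_neg]
    congr 1; ext y
    rw [kernelEps_odd hodd, sub_neg_eq_add, neg_mul]
  rw [Teps_eq]
  simp only [mul_sub]
  rw [integral_sub i1 i2, ← neg_eq_iff_eq_neg.2 h2]
  ring

/-- For Lipschitz `f` the symmetrised integrand is dominated, near the origin, by a multiple of
`‖y‖ ^ (1 - n)`. So the truncated integrals are uniformly bounded and the principal value exists at
every point. -/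
lemma Nice.tendsto {n : ℕ} (hn : 0 < n) {Ω : E n → ℝ} (hK : IsCZKernel Ω)
    (hodd : ∀ x, Ω (-x) = -Ω x) {f : E n → ℝ} (hf : Nice f) :
    (∃ C : ℝ, 0 < C ∧ ∀ ε x, 0 < ε → |Teps Ω ε f x| ≤ C) ∧
    ∀ x, Tendsto (fun ε => Teps Ω ε f x) (𝓝[>] 0) (𝓝 (Tsing Ω f x)) := by
  obtain ⟨M, hM0, hM⟩ := hK.bdd
  obtain ⟨L, hL0, hL⟩ := hf.lip
  have hfi := hf.integrable
  set G : E n → ℝ := (closedBall (0 : E n) 1).indicator (fun y => M * (2 * L) * (‖y‖ / ‖y‖ ^ n))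
    with hG
  have hGi : Integrable G :=
    (integrable_indicator_iff measurableSet_closedBall).2 ((kerloc hn).const_mul _)
  set D : E n → E n → ℝ := fun x y => G y + M * (|f (x - y)| + |f (x + y)|) with hD
  have hG0 : ∀ y, 0 ≤ G y := fun y => indicator_nonneg (fun y _ => by positivity) y
  have hDi : ∀ x, Integrable (D x) := fun x =>
    hGi.add (((hfi.comp_sub_left x).abs.add (hfi.comp_add_left x).abs).const_mul M)
  have hbd : ∀ ε x y, |kernelEps Ω ε y * (f (x - y) - f (x + y))| ≤ D x y := by
    intro ε x y
    have hle : |kernelEps Ω ε y| ≤ M / ‖y‖ ^ n := by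
      unfold kernelEps
      split_ifs
      · exact kernelFn_le hM y
      · rw [abs_zero]; positivity
    rw [abs_mul]
    by_cases hy : y ∈ closedBall (0 : E n) 1
    · have e1 : G y = M * (2 * L) * (‖y‖ / ‖y‖ ^ n) := by rw [hG, indicator_of_mem hy]
      have e2 := hL (x - y) (x + y)
      have e3 : x - y - (x + y) = -((2 : ℝ) • y) := by rw [two_smul]; abel
      rw [e3, norm_neg, norm_smul, Real.norm_of_nonneg zero_le_two] at e2
      have e4 : 0 ≤ M * (|f (x - y)| + |f (x + y)|) := by positivity
      calc _ ≤ M / ‖y‖ ^ n * (L * (2 * ‖y‖)) := by gcongr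
        _ = G y := by rw [e1]; ring
        _ ≤ _ := by rw [hD]; simp only; linarith
    · have hy' : 1 < ‖y‖ := by simpa using hy
      have e1 : M / ‖y‖ ^ n ≤ M := div_le_self hM0.le (one_le_pow₀ hy'.le)
      have e2 := abs_sub (f (x - y)) (f (x + y))
      calc _ ≤ M * (|f (x - y)| + |f (x + y)|) := by gcongr; exact hle.trans e1
        _ ≤ _ := by rw [hD]; have := hG0 y; simp only; linarith
  have hI : ∀ x, ∫ y, D x y = (∫ y, G y) + M * ((∫ y, |f y|) + ∫ y, |f y|) := by
    intro x
    rw [hD]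
    simp only
    have i0 : Integrable (fun y => M * (|f (x - y)| + |f (x + y)|)) :=
      ((hfi.comp_sub_left x).abs.add (hfi.comp_add_left x).abs).const_mul M
    rw [integral_add hGi i0,
      integral_const_mul, integral_add (hfi.comp_sub_left x).abs (hfi.comp_add_left x).abs,
      integral_sub_left_eq_self (fun y => |f y|) volume x,
      integral_add_left_eq_self (fun y => |f y|) x]
  have hI0 : 0 ≤ ∫ y, D 0 y := integral_nonneg fun y => (abs_nonneg _).trans (hbd 0 0 y)
  refine ⟨⟨2⁻¹ * (∫ y, D 0 y) + 1, by positivity, fun ε x hε => ?_⟩, fun x => ?_⟩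
  · rw [Teps_symm hK hodd hfi hε, abs_mul, abs_of_pos (by norm_num : (0 : ℝ) < 2⁻¹)]
    have h1 : |∫ y, kernelEps Ω ε y * (f (x - y) - f (x + y))| ≤ ∫ y, D x y := by
      rw [← Real.norm_eq_abs]
      exact norm_integral_le_of_norm_le (hDi x) (Eventually.of_forall fun y => hbd ε x y)
    rw [hI] at h1
    rw [hI]
    linarith
  · have hlim : Tendsto (fun ε => Teps Ω ε f x) (𝓝[>] 0)
        (𝓝 (2⁻¹ * ∫ y, kernelFn Ω y * (f (x - y) - f (x + y)))) := by
      have := tendsto_integral_filter_of_dominated_convergence (μ := (volume : Measure (E n)))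
        (l := 𝓝[>] (0 : ℝ)) (F := fun ε y => kernelEps Ω ε y * (f (x - y) - f (x + y)))
        (f := fun y => kernelFn Ω y * (f (x - y) - f (x + y))) (D x) ?_ ?_ (hDi x) ?_
      · refine (this.const_mul 2⁻¹).congr' ?_
        filter_upwards [self_mem_nhdsWithin] with ε hε
        exact (Teps_symm hK hodd hfi hε x).symm
      · refine Eventually.of_forall fun ε => ?_
        have := hf.cont
        exact ((kernelEps_meas hK ε).mul (by fun_prop)).aestronglyMeasurable
      · exact Eventually.of_forall fun ε => Eventually.of_forall fun y => hbd ε x y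
      · refine Eventually.of_forall fun y => ?_
        by_cases hy : y = 0
        · subst hy; simp
        · refine tendsto_const_nhds.congr' ?_
          have hy' : 0 < ‖y‖ := norm_pos_iff.2 hy
          filter_upwards [Ioo_mem_nhdsGT hy'] with ε hε
          unfold kernelEps
          rw [if_pos hε.2]
    unfold Tsing
    rw [hlim.limUnder_eq]
    exact hlim

lemma Nice.Tsing_le {n : ℕ} (hn : 0 < n) {Ω : E n → ℝ} (hK : IsCZKernel Ω)
    (hodd : ∀ x, Ω (-x) = -Ω x) {f : E n → ℝ} (hf : Nice f) :
    ∃ C : ℝ, 0 < C ∧ ∀ x, |Tsing Ω f x| ≤ C := by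
  obtain ⟨⟨C, hC, h⟩, hT⟩ := hf.tendsto hn hK hodd
  refine ⟨C, hC, fun x => le_of_tendsto (hT x).abs ?_⟩
  filter_upwards [self_mem_nhdsWithin] with ε hε
  exact h ε x hε

/-- Lipschitz functions of compact support are dense in `L¹`, with control of the support. -/
lemma nice_approx {n : ℕ} {h : E n → ℝ} (hh : Integrable h) {R : ℝ} (hR : 0 < R)
    (hs : ∀ y, R < ‖y‖ → h y = 0) {δ : ℝ} (hδ : 0 < δ) :
    ∃ g : E n → ℝ, Nice g ∧ (∀ y, 2 * R < ‖y‖ → g y = 0) ∧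
      ∫⁻ y, ‖h y - g y‖ₑ ≤ ENNReal.ofReal δ := by
  obtain ⟨g, hg1, hg2, hg3⟩ := MemLp.exist_eLpNorm_sub_le (by simp) le_rfl
    (memLp_one_iff_integrable.2 hh) hδ
  set χ : ContDiffBump (0 : E n) := ⟨R, 2 * R, hR, by linarith⟩ with hχ
  have hsm : ContDiff ℝ (⊤ : ℕ∞) (fun y => χ y * g y) := (χ.contDiff).mul hg2
  have hcs : HasCompactSupport (fun y => χ y * g y) := hg1.mul_left
  refine ⟨fun y => χ y * g y, ⟨hcs, ?_⟩, fun y hy => ?_, ?_⟩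
  · obtain ⟨C, hC⟩ := hsm.lipschitzWith_of_hasCompactSupport hcs (by simp)
    refine ⟨C + 1, by positivity, fun x y => ?_⟩
    have h1 := hC.dist_le_mul x y
    rw [Real.dist_eq, dist_eq_norm] at h1
    refine h1.trans ?_
    gcongr
    linarith
  · simp only
    rw [χ.zero_of_le_dist (by simpa [hχ] using hy.le), zero_mul]
  · rw [eLpNorm_one_eq_lintegral_enorm] at hg3
    refine (lintegral_mono fun y => ?_).trans hg3
    have : h y - χ y * g y = χ y * (h y - g y) := by
      by_cases hy : R < ‖y‖
      · rw [hs y hy]; ring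
      · rw [χ.one_of_mem_closedBall (by simpa [hχ] using hy)]; ring
    simp only [Pi.sub_apply]
    rw [this, enorm_mul]
    refine mul_le_of_le_one_left' ?_
    rw [Real.enorm_of_nonneg χ.nonneg]
    simpa using χ.le_one

lemma Teps_sub {n : ℕ} {Ω : E n → ℝ} (hK : IsCZKernel Ω) {h g : E n → ℝ} (hh : Integrable h)
    (hg : Integrable g) {ε : ℝ} (hε : 0 < ε) (x : E n) :
    Teps Ω ε (fun y => h y - g y) x = Teps Ω ε h x - Teps Ω ε g x := by
  obtain ⟨M, hM0, hM⟩ := hK.bdd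
  simp only [Teps_eq_cv]
  unfold cv
  rw [← integral_sub (integrable_kh (kernelEps_meas hK ε) (kernelEps_le hM0.le hM hε) hh x)
    (integrable_kh (kernelEps_meas hK ε) (kernelEps_le hM0.le hM hε) hg x)]
  congr 1; ext y; ring

/-- The principal value of an integrable function of compact support exists a.e.: by the weak type
(1,1) bound, the oscillation of `T_ε h` as `ε → 0` is that of `T_ε g` for a Lipschitz `g` close to
`h` in `L¹`, up to an error that is small off a set of small measure. -/
lemma Tsing_ae {n : ℕ} (hn : 0 < n) {Ω : E n → ℝ} (hK : IsCZKernel Ω)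
    (hodd : ∀ x, Ω (-x) = -Ω x) {h : E n → ℝ} (hh : Integrable h) {R : ℝ}
    (hs : ∀ y, R < ‖y‖ → h y = 0) :
    ∀ᵐ x, Tendsto (fun ε => Teps Ω ε h x) (𝓝[>] 0) (𝓝 (Tsing Ω h x)) := by
  obtain ⟨A, hA, hw⟩ := Tst_weak1 hn hK hodd
  have key : ∀ (m k : ℕ), ∀ᵐ x, x ∈ closedBall (0 : E n) m → ∃ η : ℝ, 0 < η ∧
      ∀ ε ε', 0 < ε → ε < η → 0 < ε' → ε' < η →
        |Teps Ω ε h x - Teps Ω ε' h x| ≤ 1 / ((k : ℝ) + 1) := by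
    intro m k
    set d : ℝ := 1 / ((k : ℝ) + 1) with hd
    have hd0 : 0 < d := by positivity
    rw [ae_iff]
    refine le_antisymm (ENNReal.le_of_forall_pos_le_add fun γ hγ _ => ?_) zero_le
    rw [zero_add]
    set R' := |R| + m + 1 with hR'
    have hR0 : 0 < R' := by positivity
    have hRR : R < R' := by
      have := le_abs_self R
      have : (0 : ℝ) ≤ m := by positivity
      linarith
    have hmR : (m : ℝ) ≤ R' := by have := abs_nonneg R; linarith
    obtain ⟨g, hg, hgs, hgd⟩ := nice_approx hh hR0 (fun y hy => hs y (hRR.trans hy))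
      (δ := γ * (d / 4) / A) (by positivity)
    have hhg : Integrable (fun y => h y - g y) := hh.sub hg.integrable
    have h1 := hw (2 * R') (d / 4) _ (by positivity) (by positivity) hhg (fun y hy => by
      rw [hs y (by linarith), hgs y hy, sub_zero])
    refine (measure_mono ?_).trans (h1.trans ?_)
    · intro x hx
      have hx' : ¬ (x ∈ closedBall (0 : E n) m → ∃ η : ℝ, 0 < η ∧
        ∀ ε ε', 0 < ε → ε < η → 0 < ε' → ε' < η →
        |Teps Ω ε h x - Teps Ω ε' h x| ≤ d) := hx
      rw [Classical.not_imp] at hx'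
      obtain ⟨hxm, hx2⟩ := hx'
      refine ⟨?_, closedBall_subset_closedBall (by linarith) hxm⟩
      by_contra hcon
      have hcon' : Tst Ω (fun y => h y - g y) x ≤ ENNReal.ofReal (d / 4) := not_lt.1 hcon
      refine hx2 ?_
      have hgl := (hg.tendsto hn hK hodd).2 x
      rw [Metric.tendsto_nhdsWithin_nhds] at hgl
      obtain ⟨η, hη, hgl⟩ := hgl (d / 4) (by positivity)
      refine ⟨η, hη, fun ε ε' h1 h2 h3 h4 => ?_⟩
      have ha : ∀ ε, 0 < ε → |Teps Ω ε h x - Teps Ω ε g x| ≤ d / 4 := by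
        intro ε hε
        have := (le_Tst Ω _ x hε).trans hcon'
        rwa [Teps_sub hK hh hg.integrable hε, Real.enorm_eq_ofReal_abs,
          ENNReal.ofReal_le_ofReal_iff (by positivity)] at this
      have b1 := ha ε h1
      have b2 := ha ε' h3
      have c1 := hgl h1 (by rw [Real.dist_eq, sub_zero, abs_of_pos h1]; exact h2)
      have c2 := hgl h3 (by rw [Real.dist_eq, sub_zero, abs_of_pos h3]; exact h4)
      rw [Real.dist_eq] at c1 c2
      rw [abs_le] at b1 b2 ⊢
      rw [abs_lt] at c1 c2
      constructor <;> linarith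
    · calc _ ≤ ENNReal.ofReal (A / (d / 4)) * ENNReal.ofReal (γ * (d / 4) / A) := by gcongr
        _ = ENNReal.ofReal γ := by
          rw [← ENNReal.ofReal_mul (by positivity)]
          congr 1; field_simp
        _ ≤ _ := by simp
  have key' := ae_all_iff.2 fun m => ae_all_iff.2 fun k => key m k
  filter_upwards [key'] with x hx
  obtain ⟨m, hm⟩ := exists_nat_ge ‖x‖
  have hc : Cauchy (map (fun ε => Teps Ω ε h x) (𝓝[>] 0)) := by
    rw [Metric.cauchy_iff]
    refine ⟨inferInstance, fun e he => ?_⟩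
    obtain ⟨k, hk⟩ := exists_nat_one_div_lt he
    obtain ⟨η, hη, hx'⟩ := hx m k (by simpa using hm)
    refine ⟨(fun ε => Teps Ω ε h x) '' (Ioo 0 η), image_mem_map (Ioo_mem_nhdsGT hη), ?_⟩
    rintro _ ⟨ε, hε, rfl⟩ _ ⟨ε', hε', rfl⟩
    rw [Real.dist_eq]
    exact (hx' ε ε' hε.1 hε.2 hε'.1 hε'.2).trans_lt hk
  obtain ⟨l, hl⟩ := CompleteSpace.complete hc
  have hl' : Tendsto (fun ε => Teps Ω ε h x) (𝓝[>] 0) (𝓝 l) := hl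
  unfold Tsing
  rw [hl'.limUnder_eq]
  exact hl'

/-! ### The `L log L` estimate for the maximal truncated integral -/

/-- The truncation radii `1/(k+1)`. -/
def eps (k : ℕ) : ℝ := 1 / ((k : ℝ) + 1)

lemma eps_pos (k : ℕ) : 0 < eps k := by unfold eps; positivity

lemma eps_tendsto : Tendsto eps atTop (𝓝[>] 0) :=
  tendsto_nhdsWithin_iff.2 ⟨tendsto_one_div_add_atTop_nhds_zero_nat,
    Eventually.of_forall fun k => eps_pos k⟩

/-- The maximal truncated integral over the radii `eps k`; the countable supremum is measurable. -/
def Tsq {n : ℕ} (Ω : E n → ℝ) (h : E n → ℝ) (x : E n) : ℝ≥0∞ :=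
  ⨆ k, ‖Teps Ω (eps k) h x‖ₑ

lemma Teps_aesm {n : ℕ} {Ω : E n → ℝ} (hK : IsCZKernel Ω) {h : E n → ℝ}
    (hh : AEStronglyMeasurable h) (ε : ℝ) : AEStronglyMeasurable (Teps Ω ε h) := by
  have : Teps Ω ε h = cv (kernelEps Ω ε) h := funext fun x => Teps_eq_cv Ω ε h x
  rw [this]
  exact cv_aesm (kernelEps_meas hK ε) hh

lemma Tsq_meas {n : ℕ} {Ω : E n → ℝ} (hK : IsCZKernel Ω) {h : E n → ℝ}
    (hh : AEStronglyMeasurable h) : AEMeasurable (Tsq Ω h) :=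
  AEMeasurable.iSup fun _ => (Teps_aesm hK hh _).enorm

lemma Tsq_le {n : ℕ} (Ω : E n → ℝ) (h : E n → ℝ) (x : E n) : Tsq Ω h x ≤ Tst Ω h x :=
  iSup_le fun k => le_Tst Ω h x (eps_pos k)

lemma min_two_pow (t : ℝ≥0∞) (N : ℕ) :
    min t (2 ^ N) ≤ 1 + ∑ j ∈ Finset.range N, (if (2 : ℝ≥0∞) ^ j < t then 2 ^ j else 0) := by
  induction N with
  | zero => simp
  | succ N ih =>
    rw [Finset.sum_range_succ, ← add_assoc]
    split_ifs with h
    · rw [min_eq_right h.le] at ih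
      calc _ ≤ (2 : ℝ≥0∞) ^ (N + 1) := min_le_right _ _
        _ = 2 ^ N + 2 ^ N := by rw [pow_succ, mul_two]
        _ ≤ _ := by gcongr
    · rw [min_eq_left (not_lt.1 h)] at ih
      rw [add_zero]
      exact (min_le_left _ _).trans ih

/-- Dyadic layer-cake bound. -/
lemma le_dyadic (t : ℝ≥0∞) : t ≤ 1 + ∑' j : ℕ, (if (2 : ℝ≥0∞) ^ j < t then 2 ^ j else 0) := by
  by_contra hcon
  push Not at hcon
  obtain ⟨N, hN⟩ := ENNReal.exists_nat_gt hcon.ne_top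
  have h2 : (N : ℝ≥0∞) ≤ 2 ^ N := by exact_mod_cast Nat.lt_two_pow_self.le
  have h3 := min_two_pow t N
  have h4 := ENNReal.sum_le_tsum (f := fun j : ℕ => if (2 : ℝ≥0∞) ^ j < t then (2 : ℝ≥0∞) ^ j else 0)
    (Finset.range N)
  exact absurd (lt_min hcon (hN.trans_le h2)) (not_lt.2 (h3.trans (by gcongr)))

/-- The number of dyadic levels between `1` and `a` is logarithmic in `a`; the source of the
logarithm in `L log L`. -/
lemma count_dyadic {a : ℝ} (ha : 0 ≤ a) :
    ∑' j : ℕ, ENNReal.ofReal (if (2 : ℝ) ^ j ≤ a then a else 0) ≤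
      ENNReal.ofReal (a + a * Real.log (max a 1) / Real.log 2) := by
  have hl2 : 0 < Real.log 2 := Real.log_pos one_lt_two
  have hl : 0 ≤ Real.log (max a 1) := Real.log_nonneg (le_max_right _ _)
  refine ENNReal.tsum_le_of_sum_range_le fun N => ?_
  rw [← ENNReal.ofReal_sum_of_nonneg fun j _ => by split_ifs <;> simp [ha]]
  refine ENNReal.ofReal_le_ofReal ?_
  rw [← Finset.sum_filter, Finset.sum_const, nsmul_eq_mul]
  have hsub : (Finset.range N).filter (fun j => (2 : ℝ) ^ j ≤ a) ⊆
      Finset.range (⌊Real.log (max a 1) / Real.log 2⌋₊ + 1) := by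
    intro j hj
    rw [Finset.mem_filter] at hj
    rw [Finset.mem_range, Nat.lt_succ_iff]
    refine Nat.le_floor ?_
    rw [le_div_iff₀ hl2, ← Real.log_pow]
    exact Real.log_le_log (by positivity) (hj.2.trans (le_max_left _ _))
  have hc := Finset.card_le_card hsub
  rw [Finset.card_range] at hc
  have hf : (⌊Real.log (max a 1) / Real.log 2⌋₊ : ℝ) ≤ Real.log (max a 1) / Real.log 2 :=
    Nat.floor_le (by positivity)
  have hc' : (((Finset.range N).filter (fun j => (2 : ℝ) ^ j ≤ a)).card : ℝ) ≤
      Real.log (max a 1) / Real.log 2 + 1 := by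
    refine le_trans (b := ((⌊Real.log (max a 1) / Real.log 2⌋₊ + 1 : ℕ) : ℝ)) ?_ ?_
    · exact_mod_cast hc
    · push_cast; linarith
  calc _ ≤ (Real.log (max a 1) / Real.log 2 + 1) * a := by gcongr
    _ = _ := by ring

lemma tail_dyadic {a : ℝ} (ha : 0 ≤ a) :
    ∑' j : ℕ, ENNReal.ofReal (if a < (2 : ℝ) ^ j then a ^ 2 / 2 ^ j else 0) ≤
      ENNReal.ofReal (2 * a) := by
  refine ENNReal.tsum_le_of_sum_range_le fun N => ?_
  rw [← ENNReal.ofReal_sum_of_nonneg fun j _ => by split_ifs <;> positivity]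
  refine ENNReal.ofReal_le_ofReal ?_
  rw [← Finset.sum_filter]
  calc _ = a * ∑ j ∈ (Finset.range N).filter (fun j => a < (2 : ℝ) ^ j), a / (2 : ℝ) ^ j := by
        rw [Finset.mul_sum]
        refine Finset.sum_congr rfl fun j _ => by ring
    _ ≤ a * 2 := by gcongr; exact geo2 a N ha
    _ = _ := mul_comm _ _

/-- Splitting at height `l` and using weak type (1,1) above and weak type (2,2) below. -/
lemma Tsq_level {n : ℕ} (hn : 0 < n) {Ω : E n → ℝ} (hK : IsCZKernel Ω)
    (hodd : ∀ x, Ω (-x) = -Ω x) :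
    ∃ A : ℝ, 0 < A ∧ ∀ (R l : ℝ) (h : E n → ℝ), 0 < R → 0 < l →
      Integrable h → (∀ y, R < ‖y‖ → h y = 0) →
      ENNReal.ofReal l * volume ({x | ENNReal.ofReal l < Tsq Ω h x} ∩ closedBall 0 R) ≤
        ENNReal.ofReal A * ∫⁻ y, (ENNReal.ofReal (if l ≤ |h y| then |h y| else 0) +
          ENNReal.ofReal (if |h y| < l then |h y| ^ 2 / l else 0)) := by
  obtain ⟨A1, hA1, h1⟩ := Tst_weak1 hn hK hodd
  obtain ⟨A2, hA2, h2⟩ := Tst_weak2 hn hK hodd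
  refine ⟨2 * A1 + 4 * A2, by positivity, fun R l h hR hl hh hs => ?_⟩
  set F : ℝ → ℝ := fun t => if l ≤ |t| then t else 0 with hF
  have hFm : Measurable F :=
    Measurable.ite (measurableSet_le measurable_const measurable_id.abs) measurable_id
      measurable_const
  set u : E n → ℝ := fun y => F (h y) with hu
  set v : E n → ℝ := fun y => h y - u y with hv
  have hum : AEStronglyMeasurable u :=
    (hFm.comp_aemeasurable hh.1.aemeasurable).aestronglyMeasurable
  have hui : Integrable u := by
    refine hh.mono hum (Eventually.of_forall fun y => ?_)
    rw [hu, hF]; simp only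
    split_ifs <;> simp
  have hvi : Integrable v := hh.sub hui
  have hvv : ∀ y, v y = if |h y| < l then h y else 0 := by
    intro y
    rw [hv, hu, hF]; simp only
    split_ifs with a b b
    · linarith
    · simp
    · simp
    · linarith
  have hvb : ∀ y, |v y| ≤ l := by
    intro y; rw [hvv]; split_ifs with a
    · exact a.le
    · rw [abs_zero]; exact hl.le
  have hv2 : MemLp v 2 := by
    rw [memLp_two_iff_integrable_sq hvi.1]
    simp only [sq]
    exact hvi.bdd_mul hvi.1 (Eventually.of_forall fun y => hvb y)
  have hsu : ∀ y, R < ‖y‖ → u y = 0 := fun y hy => by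
    rw [hu, hF]; simp only; rw [hs y hy]; simp
  have hsv : ∀ y, R < ‖y‖ → v y = 0 := fun y hy => by
    rw [hv]; simp only; rw [hs y hy, hsu y hy, sub_zero]
  have hsub : {x | ENNReal.ofReal l < Tsq Ω h x} ∩ closedBall 0 R ⊆
      ({x | ENNReal.ofReal (l / 2) < Tst Ω u x} ∩ closedBall 0 R) ∪
      ({x | ENNReal.ofReal (l / 2) < Tst Ω v x} ∩ closedBall 0 R) := by
    rintro x ⟨hx, hxR⟩
    by_contra hcon
    rw [mem_union, not_or] at hcon
    have c1 : Tst Ω u x ≤ ENNReal.ofReal (l / 2) := not_lt.1 fun hc => hcon.1 ⟨hc, hxR⟩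
    have c2 : Tst Ω v x ≤ ENNReal.ofReal (l / 2) := not_lt.1 fun hc => hcon.2 ⟨hc, hxR⟩
    have hx' : ENNReal.ofReal l < Tsq Ω h x := hx
    refine absurd hx' (not_lt.2 (iSup_le fun k => ?_))
    have e : Teps Ω (eps k) h x = Teps Ω (eps k) u x + Teps Ω (eps k) v x := by
      rw [hv, Teps_sub hK hh hui (eps_pos k)]; ring
    rw [e]
    refine (enorm_add_le _ _).trans ((add_le_add ((le_Tst Ω u x (eps_pos k)).trans c1)
      ((le_Tst Ω v x (eps_pos k)).trans c2)).trans ?_)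
    rw [← ENNReal.ofReal_add (by positivity) (by positivity), add_halves]
  have eu : ∫⁻ y, ‖u y‖ₑ = ∫⁻ y, ENNReal.ofReal (if l ≤ |h y| then |h y| else 0) := by
    refine lintegral_congr fun y => ?_
    rw [hu, hF, Real.enorm_eq_ofReal_abs]; simp only
    split_ifs <;> simp
  have ev : ∫⁻ y, ‖v y‖ₑ ^ 2 =
      ENNReal.ofReal l * ∫⁻ y, ENNReal.ofReal (if |h y| < l then |h y| ^ 2 / l else 0) := by
    rw [← lintegral_const_mul' _ _ ENNReal.ofReal_ne_top]
    refine lintegral_congr fun y => ?_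
    rw [hvv, Real.enorm_eq_ofReal_abs, ← ENNReal.ofReal_mul hl.le, ← ENNReal.ofReal_pow (abs_nonneg _)]
    congr 1
    split_ifs
    · field_simp
    · simp
  have hadd := lintegral_add_left' (μ := (volume : Measure (E n)))
    (f := fun y => ENNReal.ofReal (if l ≤ |h y| then |h y| else 0)) (by
      have : (fun y => ENNReal.ofReal (if l ≤ |h y| then |h y| else 0)) = fun y => ‖u y‖ₑ := by
        ext y
        rw [hu, hF, Real.enorm_eq_ofReal_abs]; simp only
        split_ifs <;> simp
      rw [this]; exact hum.enorm)
    (fun y => ENNReal.ofReal (if |h y| < l then |h y| ^ 2 / l else 0))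
  rw [hadd]
  have m1 := h1 R (l / 2) u hR (by positivity) hui hsu
  have m2 := h2 R (l / 2) v hR (by positivity) hvi hv2 hsv
  rw [eu] at m1
  rw [ev, ← mul_assoc, ← ENNReal.ofReal_mul (by positivity)] at m2
  refine (mul_le_mul_right ((measure_mono hsub).trans ((measure_union_le _ _).trans
    (add_le_add m1 m2))) _).trans ?_
  rw [mul_add, ← mul_assoc, ← mul_assoc, ← ENNReal.ofReal_mul hl.le, ← ENNReal.ofReal_mul hl.le,
    mul_add]
  have e1 : l * (A1 / (l / 2)) = 2 * A1 := by field_simp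
  have e2 : l * (A2 / (l / 2) ^ 2 * l) = 4 * A2 := by field_simp; norm_num
  rw [e1, e2]
  gcongr <;> linarith

/-- The maximal truncated integral of a compactly supported `L log L` function is integrable on
balls: sum the level estimate over the dyadic levels `2 ^ j`. -/
lemma Tsq_llogl {n : ℕ} (hn : 0 < n) {Ω : E n → ℝ} (hK : IsCZKernel Ω)
    (hodd : ∀ x, Ω (-x) = -Ω x) {h : E n → ℝ} {R : ℝ} (hR : 0 < R) (hh : Integrable h)
    (hs : ∀ y, R < ‖y‖ → h y = 0)
    (hll : ∫⁻ y, ENNReal.ofReal (|h y| * Real.log (max |h y| 1)) < ⊤) :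
    ∫⁻ x in closedBall 0 R, Tsq Ω h x < ⊤ := by
  obtain ⟨A, hA, hlev⟩ := Tsq_level hn hK hodd
  have hm := Tsq_meas hK hh.1
  have hl2 : 0 < Real.log 2 := Real.log_pos one_lt_two
  have hstep : ∀ j : ℕ, ∫⁻ x in closedBall 0 R, (if (2 : ℝ≥0∞) ^ j < Tsq Ω h x then 2 ^ j else 0) ≤
      ENNReal.ofReal A * ∫⁻ y, (ENNReal.ofReal (if (2 : ℝ) ^ j ≤ |h y| then |h y| else 0) +
          ENNReal.ofReal (if |h y| < 2 ^ j then |h y| ^ 2 / 2 ^ j else 0)) := by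
    intro j
    refine le_trans (le_of_eq ?_) (hlev R (2 ^ j) h hR (by positivity) hh hs)
    have hns : NullMeasurableSet {x | ENNReal.ofReal (2 ^ j) < Tsq Ω h x}
        (volume.restrict (closedBall 0 R)) :=
      nullMeasurableSet_lt aemeasurable_const hm.restrict
    have e2 : ENNReal.ofReal (2 ^ j) = 2 ^ j := by rw [ENNReal.ofReal_pow zero_le_two]; simp
    rw [← Measure.restrict_apply₀ hns, ← lintegral_indicator_const₀ hns]
    refine lintegral_congr fun x => ?_
    rw [e2]
    simp only [indicator, mem_ofPred_eq]
  have hmeas1 : ∀ j : ℕ, AEMeasurable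
      (fun y => ENNReal.ofReal (if (2 : ℝ) ^ j ≤ |h y| then |h y| else 0)) := fun j =>
    (Measurable.ite (measurableSet_le measurable_const measurable_id.abs) measurable_id.abs
      measurable_const : Measurable fun t : ℝ =>
        if (2 : ℝ) ^ j ≤ |t| then |t| else 0).ennreal_ofReal.comp_aemeasurable hh.1.aemeasurable
  have hmeas2 : ∀ j : ℕ, AEMeasurable
      (fun y => ENNReal.ofReal (if |h y| < (2 : ℝ) ^ j then |h y| ^ 2 / 2 ^ j else 0)) := fun j =>
    (Measurable.ite (measurableSet_lt measurable_id.abs measurable_const) (by fun_prop)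
      measurable_const : Measurable fun t : ℝ =>
        if |t| < (2 : ℝ) ^ j then |t| ^ 2 / 2 ^ j else 0).ennreal_ofReal.comp_aemeasurable
      hh.1.aemeasurable
  calc ∫⁻ x in closedBall 0 R, Tsq Ω h x
      ≤ ∫⁻ x in closedBall 0 R,
        (1 + ∑' j : ℕ, (if (2 : ℝ≥0∞) ^ j < Tsq Ω h x then 2 ^ j else 0)) :=
        lintegral_mono fun x => le_dyadic _
    _ = volume (closedBall (0 : E n) R) + ∑' j : ℕ, ∫⁻ x in closedBall 0 R,
        (if (2 : ℝ≥0∞) ^ j < Tsq Ω h x then 2 ^ j else 0) := by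
        rw [lintegral_add_left measurable_const, setLIntegral_one, lintegral_tsum]
        intro j
        exact (Measurable.ite measurableSet_Ioi measurable_const measurable_const :
          Measurable fun t : ℝ≥0∞ => if (2 : ℝ≥0∞) ^ j < t then (2 : ℝ≥0∞) ^ j else 0).comp_aemeasurable
          hm.restrict
    _ ≤ volume (closedBall (0 : E n) R) + ∑' j : ℕ, ENNReal.ofReal A *
        ∫⁻ y, (ENNReal.ofReal (if (2 : ℝ) ^ j ≤ |h y| then |h y| else 0) +
          ENNReal.ofReal (if |h y| < 2 ^ j then |h y| ^ 2 / 2 ^ j else 0)) := by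
        gcongr with j
        exact hstep j
    _ = volume (closedBall (0 : E n) R) + ENNReal.ofReal A *
        ∫⁻ y, ∑' j : ℕ, (ENNReal.ofReal (if (2 : ℝ) ^ j ≤ |h y| then |h y| else 0) +
          ENNReal.ofReal (if |h y| < 2 ^ j then |h y| ^ 2 / 2 ^ j else 0)) := by
        have hm12 : ∀ j : ℕ, AEMeasurable (fun y =>
            ENNReal.ofReal (if (2 : ℝ) ^ j ≤ |h y| then |h y| else 0) +
            ENNReal.ofReal (if |h y| < (2 : ℝ) ^ j then |h y| ^ 2 / 2 ^ j else 0)) :=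
          fun j => (hmeas1 j).add (hmeas2 j)
        rw [ENNReal.tsum_mul_left, lintegral_tsum hm12]
    _ ≤ volume (closedBall (0 : E n) R) + ENNReal.ofReal A *
        ∫⁻ y, (ENNReal.ofReal 3 * ‖h y‖ₑ + ENNReal.ofReal (Real.log 2)⁻¹ *
          ENNReal.ofReal (|h y| * Real.log (max |h y| 1))) := by
        gcongr with y
        rw [ENNReal.tsum_add]
        refine (add_le_add (count_dyadic (abs_nonneg (h y)))
          (tail_dyadic (abs_nonneg (h y)))).trans ?_
        have hl : 0 ≤ Real.log (max |h y| 1) := Real.log_nonneg (le_max_right _ _)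
        rw [Real.enorm_eq_ofReal_abs, ← ENNReal.ofReal_mul (by positivity),
          ← ENNReal.ofReal_mul (by positivity), ← ENNReal.ofReal_add (by positivity) (by positivity),
          ← ENNReal.ofReal_add (by positivity) (by positivity)]
        apply le_of_eq
        congr 1
        field_simp
        ring
    _ < ⊤ := by
        have hb : volume (closedBall (0 : E n) R) < ⊤ := measure_closedBall_lt_top
        refine ENNReal.add_lt_top.2 ⟨hb, ENNReal.mul_lt_top ENNReal.ofReal_lt_top ?_⟩
        rw [lintegral_add_left' (hh.1.enorm.const_mul _),
          lintegral_const_mul' _ _ ENNReal.ofReal_ne_top,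
          lintegral_const_mul' _ _ ENNReal.ofReal_ne_top]
        exact ENNReal.add_lt_top.2 ⟨ENNReal.mul_lt_top ENNReal.ofReal_lt_top hh.2,
          ENNReal.mul_lt_top ENNReal.ofReal_lt_top hll⟩

/-! ### Self-duality of the commutator -/

/-- Fubini, together with the oddness of the truncated kernel. -/
lemma Teps_antisymm {n : ℕ} {Ω : E n → ℝ} (hK : IsCZKernel Ω) (hodd : ∀ x, Ω (-x) = -Ω x)
    {u v : E n → ℝ} (hu : Integrable u) (hv : Integrable v) {ε : ℝ} (hε : 0 < ε) :
    ∫ x, Teps Ω ε u x * v x = -∫ x, u x * Teps Ω ε v x := by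
  obtain ⟨M, hM0, hM⟩ := hK.bdd
  have hb := kernelEps_le hM0.le hM hε
  have hi : Integrable (fun z : E n × E n => kernelEps Ω ε (z.1 - z.2) * (v z.1 * u z.2))
      ((volume : Measure (E n)).prod volume) :=
    (hv.mul_prod hu).bdd_mul
      ((kernelEps_meas hK ε).comp (measurable_fst.sub measurable_snd)).aestronglyMeasurable
      (Eventually.of_forall fun z => hb _)
  have e1 : ∫ x, Teps Ω ε u x * v x = ∫ x, ∫ y, kernelEps Ω ε (x - y) * (v x * u y) := by
    congr 1; ext x
    rw [Teps_eq_cv]; unfold cv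
    rw [← integral_mul_const]
    congr 1; ext y; ring
  have e2 : ∫ x, u x * Teps Ω ε v x = ∫ y, ∫ x, -(kernelEps Ω ε (x - y) * (v x * u y)) := by
    congr 1; ext y
    rw [Teps_eq_cv]; unfold cv
    rw [← integral_const_mul]
    congr 1; ext x
    rw [← neg_sub x y, kernelEps_odd hodd]; ring
  rw [e1, e2, integral_integral_swap hi]
  simp only [integral_neg, neg_neg]

lemma Nice.Tsing_aesm {n : ℕ} (hn : 0 < n) {Ω : E n → ℝ} (hK : IsCZKernel Ω)
    (hodd : ∀ x, Ω (-x) = -Ω x) {f : E n → ℝ} (hf : Nice f) :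
    AEStronglyMeasurable (Tsing Ω f) :=
  aestronglyMeasurable_of_tendsto_ae atTop
    (fun k => Teps_aesm hK hf.integrable.1 (eps k))
    (Eventually.of_forall fun x => ((hf.tendsto hn hK hodd).2 x).comp eps_tendsto)

lemma Nice.tendsto_pair {n : ℕ} (hn : 0 < n) {Ω : E n → ℝ} (hK : IsCZKernel Ω)
    (hodd : ∀ x, Ω (-x) = -Ω x) {f v : E n → ℝ} (hf : Nice f) (hv : Integrable v) :
    Tendsto (fun k => ∫ x, Teps Ω (eps k) f x * v x) atTop (𝓝 (∫ x, Tsing Ω f x * v x)) := by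
  obtain ⟨⟨C, hC, hb⟩, hT⟩ := hf.tendsto hn hK hodd
  refine tendsto_integral_of_dominated_convergence (fun x => C * ‖v x‖)
    (fun k => (Teps_aesm hK hf.integrable.1 _).mul hv.1) (hv.norm.const_mul C) (fun k => ?_) ?_
  · refine Eventually.of_forall fun x => ?_
    rw [norm_mul]
    exact mul_le_mul_of_nonneg_right (hb _ x (eps_pos k)) (norm_nonneg _)
  · exact Eventually.of_forall fun x => ((hT x).comp eps_tendsto).mul_const _

/-- For `h` in `L log L`, the maximal truncated integral is integrable on balls and serves as the
dominating function when the truncation is removed. -/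
lemma tendsto_pair_llogl {n : ℕ} (hn : 0 < n) {Ω : E n → ℝ} (hK : IsCZKernel Ω)
    (hodd : ∀ x, Ω (-x) = -Ω x) {h : E n → ℝ} {R : ℝ} (hR : 0 < R) (hh : Integrable h)
    (hs : ∀ y, R < ‖y‖ → h y = 0)
    (hll : ∫⁻ y, ENNReal.ofReal (|h y| * Real.log (max |h y| 1)) < ⊤)
    {g : E n → ℝ} (hg : AEStronglyMeasurable g) {B : ℝ} (hB : ∀ x, |g x| ≤ B)
    (hgs : ∀ y, R < ‖y‖ → g y = 0) :
    Integrable (fun x => Tsing Ω h x * g x) ∧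
    Tendsto (fun k => ∫ x, Teps Ω (eps k) h x * g x) atTop (𝓝 (∫ x, Tsing Ω h x * g x)) := by
  have hB0 : 0 ≤ B := (abs_nonneg _).trans (hB 0)
  have hfin := Tsq_llogl hn hK hodd hR hh hs hll
  have hT := Tsing_ae hn hK hodd hh hs
  have hm := Tsq_meas hK hh.1
  set D : E n → ℝ := (closedBall (0 : E n) R).indicator (fun x => (Tsq Ω h x).toReal * B) with hD
  have hDi : Integrable D := by
    rw [hD, integrable_indicator_iff isClosed_closedBall.measurableSet]
    exact (integrable_toReal_of_lintegral_ne_top hm.restrict hfin.ne).mul_const B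
  have hae : ∀ᵐ x, x ∈ closedBall (0 : E n) R → Tsq Ω h x < ⊤ :=
    (ae_restrict_iff' isClosed_closedBall.measurableSet).1 (ae_lt_top' hm.restrict hfin.ne)
  have hdom : ∀ᵐ x, ∀ k, ‖Teps Ω (eps k) h x * g x‖ ≤ D x := by
    filter_upwards [hae] with x hx k
    by_cases hxR : x ∈ closedBall (0 : E n) R
    · rw [hD, indicator_of_mem hxR, norm_mul]
      refine mul_le_mul ?_ (hB x) (abs_nonneg _) toReal_nonneg
      rw [← toReal_enorm]
      exact ENNReal.toReal_mono (hx hxR).ne (le_iSup (fun k => ‖Teps Ω (eps k) h x‖ₑ) k)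
    · rw [hD, indicator_of_notMem hxR, hgs x (by simpa using hxR), mul_zero, norm_zero]
  have hlim : ∀ᵐ x, Tendsto (fun k => Teps Ω (eps k) h x * g x) atTop (𝓝 (Tsing Ω h x * g x)) := by
    filter_upwards [hT] with x hx
    exact (hx.comp eps_tendsto).mul_const _
  have hmk : ∀ k, AEStronglyMeasurable (fun x => Teps Ω (eps k) h x * g x) := fun k =>
    (Teps_aesm hK hh.1 _).mul hg
  refine ⟨?_, ?_⟩
  · refine hDi.mono' (aestronglyMeasurable_of_tendsto_ae atTop hmk hlim) ?_
    filter_upwards [hdom, hlim] with x hx hl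
    exact le_of_tendsto hl.norm (Eventually.of_forall hx)
  · exact tendsto_integral_of_dominated_convergence D hmk hDi
      (fun k => hdom.mono fun x hx => hx k) hlim

lemma ball_in_cube {n : ℕ} {R : ℝ} (hR : 0 < R) :
    ∃ Q : Set (E n), IsCube Q ∧ closedBall (0 : E n) R ⊆ Q := by
  refine ⟨_, ⟨WithLp.toLp 2 (fun _ => -R), 2 * R, by linarith, rfl⟩, fun x hx i => ?_⟩
  have h1 : ‖x‖ ≤ R := by simpa using hx
  have h2 := (abs_le.1 ((PiLp.norm_apply_le x i).trans h1))
  constructor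
  · exact h2.1
  · have := h2.2
    change x i ≤ -R + 2 * R
    linarith

/-- Multiplying a function in `L log L` on cubes by a bounded function of compact support gives a
global `L log L` function. -/
lemma mul_llogl {n : ℕ} {b f : E n → ℝ} (hb : LocallyIntegrable b volume)
    (hbll : ∀ Q : Set (E n), IsCube Q → MemLlogL Q b) (hf : Measurable f) {B R : ℝ} (hR : 0 < R)
    (hB : ∀ x, |f x| ≤ B) (hs : ∀ y, R < ‖y‖ → f y = 0) :
    Integrable (fun y => b y * f y) ∧
    ∫⁻ y, ENNReal.ofReal (|b y * f y| * Real.log (max |b y * f y| 1)) < ⊤ := by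
  have hB0 : 0 ≤ B := (abs_nonneg _).trans (hB 0)
  have hbi : IntegrableOn b (closedBall (0 : E n) R) :=
    (hb.integrableOn_isCompact (isCompact_closedBall _ _))
  constructor
  · have e : (fun y => b y * f y) = (closedBall (0 : E n) R).indicator (fun y => f y * b y) := by
      ext y
      by_cases hy : y ∈ closedBall (0 : E n) R
      · rw [indicator_of_mem hy, mul_comm]
      · rw [indicator_of_notMem hy, hs y (by simpa using hy), mul_zero]
    rw [e, integrable_indicator_iff isClosed_closedBall.measurableSet]
    exact hbi.bdd_mul hf.aestronglyMeasurable (Eventually.of_forall fun y => hB y)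
  · obtain ⟨Q, hQ, hsub⟩ := ball_in_cube (n := n) hR
    have hq := (hbll Q hQ).2
    have hlB : 0 ≤ Real.log (max B 1) := Real.log_nonneg (le_max_right _ _)
    have hbi' : ∫⁻ y in closedBall (0 : E n) R, ‖b y‖ₑ < ⊤ := hbi.2
    calc ∫⁻ y, ENNReal.ofReal (|b y * f y| * Real.log (max |b y * f y| 1))
        ≤ ∫⁻ y, (closedBall (0 : E n) R).indicator (fun y =>
          ENNReal.ofReal B * ENNReal.ofReal (|b y| * Real.log (max |b y| 1)) +
          ENNReal.ofReal (B * Real.log (max B 1)) * ‖b y‖ₑ) y := by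
          refine lintegral_mono fun y => ?_
          by_cases hy : y ∈ closedBall (0 : E n) R
          · rw [indicator_of_mem hy, Real.enorm_eq_ofReal_abs]
            have l0 : 0 ≤ Real.log (max |b y| 1) := Real.log_nonneg (le_max_right _ _)
            rw [← ENNReal.ofReal_mul hB0, ← ENNReal.ofReal_mul (by positivity),
              ← ENNReal.ofReal_add (by positivity) (by positivity)]
            refine ENNReal.ofReal_le_ofReal ?_
            have k1 : |b y * f y| ≤ |b y| * B := by
              rw [abs_mul]; exact mul_le_mul_of_nonneg_left (hB y) (abs_nonneg _)
            have k2 : max |b y * f y| 1 ≤ max |b y| 1 * max B 1 := by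
              refine max_le (k1.trans ?_) ?_
              · exact mul_le_mul (le_max_left _ _) (le_max_left _ _) hB0 (by positivity)
              · exact one_le_mul_of_one_le_of_one_le (le_max_right _ _) (le_max_right _ _)
            have k3 : Real.log (max |b y * f y| 1) ≤
                Real.log (max |b y| 1) + Real.log (max B 1) := by
              rw [← Real.log_mul (by positivity) (by positivity)]
              exact Real.log_le_log (by positivity) k2
            calc _ ≤ |b y| * B * (Real.log (max |b y| 1) + Real.log (max B 1)) :=
                  mul_le_mul k1 k3 (Real.log_nonneg (le_max_right _ _)) (by positivity)
              _ = _ := by ring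
          · rw [indicator_of_notMem hy, hs y (by simpa using hy)]; simp
      _ = ∫⁻ y in closedBall (0 : E n) R, (ENNReal.ofReal B *
          ENNReal.ofReal (|b y| * Real.log (max |b y| 1)) +
          ENNReal.ofReal (B * Real.log (max B 1)) * ‖b y‖ₑ) :=
          lintegral_indicator isClosed_closedBall.measurableSet _
      _ < ⊤ := by
          rw [lintegral_add_right' _ (hbi.1.enorm.const_mul _),
            lintegral_const_mul' _ _ ENNReal.ofReal_ne_top,
            lintegral_const_mul' _ _ ENNReal.ofReal_ne_top]
          exact ENNReal.add_lt_top.2 ⟨ENNReal.mul_lt_top ENNReal.ofReal_lt_top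
            ((lintegral_mono_set hsub).trans_lt hq), ENNReal.mul_lt_top ENNReal.ofReal_lt_top hbi'⟩

/-- Both halves of the commutator are integrable against bounded functions of compact support. Only
the second, `T(bf)`, needs `b` in `L log L`: `Tf` is bounded for Lipschitz `f`. -/
lemma pair_parts {n : ℕ} (hn : 0 < n) {Ω : E n → ℝ} (hK : IsCZKernel Ω)
    (hodd : ∀ x, Ω (-x) = -Ω x) {b : E n → ℝ} (hb : LocallyIntegrable b volume)
    (hbll : ∀ Q : Set (E n), IsCube Q → MemLlogL Q b) {f g : E n → ℝ} (hf : Nice f)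
    (hg : MemLinftyC g) :
    Integrable (fun x => b x * Tsing Ω f x * g x) ∧
    Integrable (fun x => Tsing Ω (fun y => b y * f y) x * g x) := by
  obtain ⟨R1, hR1, hs1⟩ := hcs_radius hf.hcs
  obtain ⟨R2, hR2, hs2⟩ := hcs_radius hg.2.2
  obtain ⟨Bf, hBf0, hBf⟩ := hf.bdd
  obtain ⟨Bg, hBg⟩ := hg.2.1
  set R := max R1 R2
  have hR : 0 < R := lt_max_of_lt_left hR1
  have hsf : ∀ y, R < ‖y‖ → f y = 0 := fun y hy => hs1 y ((le_max_left _ _).trans_lt hy)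
  have hsg : ∀ y, R < ‖y‖ → g y = 0 := fun y hy => hs2 y ((le_max_right _ _).trans_lt hy)
  obtain ⟨ibf, lbf⟩ := mul_llogl hb hbll hf.cont.measurable hR hBf hsf
  obtain ⟨ibg, -⟩ := mul_llogl hb hbll hg.1 hR hBg hsg
  refine ⟨?_, (tendsto_pair_llogl hn hK hodd hR ibf (fun y hy => by rw [hsf y hy, mul_zero]) lbf
    hg.1.aestronglyMeasurable hBg hsg).1⟩
  obtain ⟨C, hC, hTC⟩ := hf.Tsing_le hn hK hodd
  have : (fun x => b x * Tsing Ω f x * g x) = fun x => Tsing Ω f x * (b x * g x) := by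
    ext x; ring
  rw [this]
  exact ibg.bdd_mul (hf.Tsing_aesm hn hK hodd) (Eventually.of_forall fun x => hTC x)

lemma commutator_pair_integrable {n : ℕ} (hn : 0 < n) {Ω : E n → ℝ} (hK : IsCZKernel Ω)
    (hodd : ∀ x, Ω (-x) = -Ω x) {b : E n → ℝ} (hb : LocallyIntegrable b volume)
    (hbll : ∀ Q : Set (E n), IsCube Q → MemLlogL Q b) {f g : E n → ℝ} (hf : Nice f)
    (hg : MemLinftyC g) : Integrable (fun x => commutator b Ω f x * g x) := by
  obtain ⟨h1, h2⟩ := pair_parts hn hK hodd hb hbll hf hg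
  have e : (fun x => commutator b Ω f x * g x) = fun x => b x * Tsing Ω f x * g x -
      Tsing Ω (fun y => b y * f y) x * g x := by
    ext x; unfold commutator; ring
  rw [e]; exact h1.sub h2

/-- `T` is antisymmetric, so `[b,T]` is symmetric. -/
lemma commutator_symm {n : ℕ} (hn : 0 < n) {Ω : E n → ℝ} (hK : IsCZKernel Ω)
    (hodd : ∀ x, Ω (-x) = -Ω x) {b : E n → ℝ} (hb : LocallyIntegrable b volume)
    (hbll : ∀ Q : Set (E n), IsCube Q → MemLlogL Q b) {f g : E n → ℝ} (hf : Nice f)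
    (hg : Nice g) :
    ∫ x, commutator b Ω f x * g x = ∫ x, commutator b Ω g x * f x := by
  -- The antisymmetry of `T_ε` passes to the limit `ε → 0`: on the left by the `L log L` bound, on
  -- the right because `T_ε g` is bounded uniformly.
  have key : ∀ f g : E n → ℝ, Nice f → Nice g →
      ∫ x, Tsing Ω (fun y => b y * f y) x * g x = -∫ x, b x * Tsing Ω g x * f x := by
    intro f g hf hg
    obtain ⟨R1, hR1, hs1⟩ := hcs_radius hf.hcs
    obtain ⟨R2, hR2, hs2⟩ := hcs_radius hg.hcs
    obtain ⟨Bf, hBf0, hBf⟩ := hf.bdd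
    obtain ⟨Bg, hBg0, hBg⟩ := hg.bdd
    set R := max R1 R2
    have hR : 0 < R := lt_max_of_lt_left hR1
    have hsf : ∀ y, R < ‖y‖ → f y = 0 := fun y hy => hs1 y ((le_max_left _ _).trans_lt hy)
    have hsg : ∀ y, R < ‖y‖ → g y = 0 := fun y hy => hs2 y ((le_max_right _ _).trans_lt hy)
    obtain ⟨ibf, lbf⟩ := mul_llogl hb hbll hf.cont.measurable hR hBf hsf
    have l1 := (tendsto_pair_llogl hn hK hodd hR ibf (fun y hy => by rw [hsf y hy, mul_zero]) lbf
      hg.integrable.1 hBg hsg).2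
    have l2 := (hg.tendsto_pair hn hK hodd ibf).neg
    have e : (fun k => ∫ x, Teps Ω (eps k) (fun y => b y * f y) x * g x) =
        fun k => -∫ x, Teps Ω (eps k) g x * (b x * f x) := by
      ext k
      rw [Teps_antisymm hK hodd ibf hg.integrable (eps_pos k)]
      congr 2; ext x; ring
    rw [e] at l1
    rw [tendsto_nhds_unique l1 l2]
    congr 2; ext x; ring
  have e : ∀ f g : E n → ℝ, Nice f → Nice g → ∫ x, commutator b Ω f x * g x =
      (∫ x, b x * Tsing Ω f x * g x) + ∫ x, b x * Tsing Ω g x * f x := by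
    intro f g hf hg
    obtain ⟨h1, h2⟩ := pair_parts hn hK hodd hb hbll hf hg.memLinftyC
    rw [← sub_neg_eq_add, ← key f g hf hg, ← integral_sub h1 h2]
    congr 1; ext x; unfold commutator; ring
  rw [e f g hf hg, e g f hg hf, add_comm]

/-! ### Variable Lebesgue norms -/

/-- The properties of an exponent shared by `p` and `p'`. -/
structure IsExp {n : ℕ} (q : E n → ℝ) : Prop where
  meas : Measurable q
  nonneg : ∀ x, 0 ≤ q x
  one_le : ∀ᵐ x, 1 ≤ q x
  bdd : ∃ B : ℝ, 1 ≤ B ∧ ∀ᵐ x, q x ≤ B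

lemma GoodExp.ae_inf {n : ℕ} {p : E n → ℝ} (hp : GoodExp p) : ∀ᵐ x, essInf p volume ≤ p x :=
  ae_essInf_le ⟨1, by simpa using Eventually.of_forall hp.2.1⟩

lemma GoodExp.ae_sup {n : ℕ} {p : E n → ℝ} (hp : GoodExp p) : ∀ᵐ x, p x ≤ essSup p volume := by
  obtain ⟨B, hB⟩ := hp.2.2.2
  exact _root_.ae_le_essSup ⟨B, by simpa using hB⟩

lemma GoodExp.inf_le_sup {n : ℕ} {p : E n → ℝ} (hp : GoodExp p) :
    essInf p volume ≤ essSup p volume := by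
  obtain ⟨x, hx⟩ := (hp.ae_inf.and hp.ae_sup).exists
  exact hx.1.trans hx.2

lemma GoodExp.one_le_rp {n : ℕ} {p : E n → ℝ} (hp : GoodExp p) : 1 ≤ rp p := by
  have h1 := hp.inf_le_sup
  have h2 := hp.2.2.1
  have := inv_anti₀ (by linarith) h1
  unfold rp; linarith

lemma GoodExp.isExp {n : ℕ} {p : E n → ℝ} (hp : GoodExp p) : IsExp p := by
  obtain ⟨B, hB⟩ := hp.2.2.2
  exact ⟨hp.1, fun x => zero_le_one.trans (hp.2.1 x), Eventually.of_forall hp.2.1, max B 1,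
    le_max_right _ _, hB.mono fun x hx => hx.trans (le_max_left _ _)⟩

lemma GoodExp.isExp_conj {n : ℕ} {p : E n → ℝ} (hp : GoodExp p) : IsExp (conjExp p) := by
  have h1 := hp.2.2.1
  refine ⟨hp.1.div (hp.1.sub_const 1), fun x => ?_, ?_, 1 + (essInf p volume - 1)⁻¹, ?_, ?_⟩
  · have := hp.2.1 x
    exact div_nonneg (by linarith) (by linarith)
  · filter_upwards [hp.ae_inf] with x hx
    unfold conjExp
    rw [le_div_iff₀ (by linarith)]; linarith
  · have : 0 ≤ (essInf p volume - 1)⁻¹ := inv_nonneg.2 (by linarith)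
    linarith
  · filter_upwards [hp.ae_inf] with x hx
    have e : conjExp p x = 1 + (p x - 1)⁻¹ := by
      have : p x - 1 ≠ 0 := by linarith
      unfold conjExp; field_simp; ring
    rw [e]
    gcongr

/-- The modular of `f / s`. -/
def modu {n : ℕ} (q : E n → ℝ) (s : ℝ) (f : E n → ℝ) : ℝ≥0∞ :=
  ∫⁻ x, (ENNReal.ofReal |f x| / ENNReal.ofReal s) ^ (q x)

lemma vNorm_le_of_modu {n : ℕ} {q f : E n → ℝ} {s : ℝ} (hs : 0 < s) (h : modu q s f ≤ 1) :
    vNorm q f ≤ ENNReal.ofReal s :=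
  sInf_le ⟨(ENNReal.ofReal_pos.2 hs).ne', h⟩

lemma modu_le_of_vNorm {n : ℕ} {q f : E n → ℝ} (hq : ∀ x, 0 ≤ q x) {s : ℝ}
    (h : vNorm q f < ENNReal.ofReal s) : modu q s f ≤ 1 := by
  obtain ⟨l, ⟨-, hl⟩, hls⟩ := sInf_lt_iff.1 h
  refine le_trans (lintegral_mono fun x => ?_) hl
  exact ENNReal.rpow_le_rpow (ENNReal.div_le_div_left hls.le _) (hq x)

lemma modu_eq {n : ℕ} {q f : E n → ℝ} (hq : ∀ x, 0 ≤ q x) {s : ℝ} (hs : 0 < s) :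
    modu q s f = ∫⁻ x, ENNReal.ofReal ((|f x| / s) ^ q x) := by
  refine lintegral_congr fun x => ?_
  rw [← ENNReal.ofReal_div_of_pos hs, ENNReal.ofReal_rpow_of_nonneg (by positivity) (hq x)]

lemma vNorm_congr {n : ℕ} {q f g : E n → ℝ} (h : ∀ᵐ x, |f x| = |g x|) : vNorm q f = vNorm q g := by
  unfold vNorm eLux
  congr 1; ext l
  have : ∫⁻ x, (ENNReal.ofReal |f x| / l) ^ q x = ∫⁻ x, (ENNReal.ofReal |g x| / l) ^ q x :=
    lintegral_congr_ae (h.mono fun x hx => by simp only [hx])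
  simp only [mem_ofPred_eq, this]

/-- The modular is superlinear because the exponent is at least one. -/
lemma modu_scale {n : ℕ} {q f : E n → ℝ} (hq : IsExp q) {s t : ℝ} (hs : 0 < s) (hst : s ≤ t) :
    modu q t f ≤ ENNReal.ofReal (s / t) * modu q s f := by
  have ht : 0 < t := hs.trans_le hst
  rw [modu_eq hq.nonneg hs, modu_eq hq.nonneg ht, ← lintegral_const_mul' _ _ ENNReal.ofReal_ne_top]
  refine lintegral_mono_ae ?_
  filter_upwards [hq.one_le] with x hx
  rw [← ENNReal.ofReal_mul (by positivity)]
  refine ENNReal.ofReal_le_ofReal ?_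
  have e : |f x| / t = (s / t) * (|f x| / s) := by field_simp
  rw [e, Real.mul_rpow (by positivity) (by positivity)]
  refine mul_le_mul_of_nonneg_right ?_ (by positivity)
  have hst1 : s / t ≤ 1 := (div_le_one ht).2 hst
  calc (s / t) ^ q x ≤ (s / t) ^ (1 : ℝ) := Real.rpow_le_rpow_of_exponent_ge (by positivity) hst1 hx
    _ = s / t := Real.rpow_one _

lemma modu_aem {n : ℕ} {q f : E n → ℝ} (hq : IsExp q) (hf : AEStronglyMeasurable f) (s : ℝ) :
    AEMeasurable (fun x => (ENNReal.ofReal |f x| / ENNReal.ofReal s) ^ (q x)) := by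
  have hf' := hf.aemeasurable
  have h1 : AEMeasurable (fun x => |f x|) := measurable_id.abs.comp_aemeasurable hf'
  exact (h1.ennreal_ofReal.div_const _).pow hq.meas.aemeasurable

/-- The Hölder inequality with the constant `r_p`: Young's inequality holds pointwise with the
factors `1 / p'(x) ≤ 1 - 1 / p₊` and `1 / p(x) ≤ 1 / p₋`, whose bounds add up to `r_p`. -/
lemma holder_rp {n : ℕ} {p f g : E n → ℝ} (hp : GoodExp p) {s t : ℝ} (hs : 0 < s) (ht : 0 < t)
    (hf : AEStronglyMeasurable f)
    (hfs : modu (conjExp p) s f ≤ 1) (hgt : modu p t g ≤ 1) :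
    ∫⁻ x, ‖f x * g x‖ₑ ≤ ENNReal.ofReal (rp p * (s * t)) := by
  have h1 := hp.2.2.1
  have h2 := hp.inf_le_sup
  set u := (essInf p volume)⁻¹ with hu
  set v := (essSup p volume)⁻¹ with hv
  have hu0 : 0 < u := inv_pos.2 (by linarith)
  have hv1 : v ≤ 1 := inv_le_one_of_one_le₀ (by linarith)
  have hm := modu_aem hp.isExp_conj hf s
  rw [modu] at hfs
  calc ∫⁻ x, ‖f x * g x‖ₑ
      ≤ ∫⁻ x, ENNReal.ofReal (s * t) * (ENNReal.ofReal (1 - v) *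
          (ENNReal.ofReal |f x| / ENNReal.ofReal s) ^ (conjExp p x) +
          ENNReal.ofReal u * (ENNReal.ofReal |g x| / ENNReal.ofReal t) ^ (p x)) := by
        refine lintegral_mono_ae ?_
        filter_upwards [hp.ae_inf, hp.ae_sup] with x hx1 hx2
        have hpx : 0 < p x := by linarith
        have hc0 : 0 ≤ conjExp p x := hp.isExp_conj.nonneg x
        rw [← ENNReal.ofReal_div_of_pos hs, ← ENNReal.ofReal_div_of_pos ht,
          ENNReal.ofReal_rpow_of_nonneg (by positivity) hc0,
          ENNReal.ofReal_rpow_of_nonneg (by positivity) hpx.le,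
          ← ENNReal.ofReal_mul (by linarith), ← ENNReal.ofReal_mul hu0.le,
          ← ENNReal.ofReal_add (mul_nonneg (by linarith) (by positivity)) (by positivity),
          ← ENNReal.ofReal_mul (by positivity), Real.enorm_eq_ofReal_abs]
        refine ENNReal.ofReal_le_ofReal ?_
        have hpc : (p x).HolderConjugate (conjExp p x) := by
          rw [Real.holderConjugate_iff]
          refine ⟨by linarith, ?_⟩
          have : p x - 1 ≠ 0 := by linarith
          unfold conjExp; field_simp; ring
        have hy := Real.young_inequality_of_nonneg (a := |f x| / s) (b := |g x| / t)
          (by positivity) (by positivity) hpc.symm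
        have c1 : (conjExp p x)⁻¹ ≤ 1 - v := by
          have := hpc.inv_add_inv_eq_one
          have h3 : v ≤ (p x)⁻¹ := inv_anti₀ hpx hx2
          linarith
        have c2 : (p x)⁻¹ ≤ u := inv_anti₀ (by linarith) hx1
        have e : |f x * g x| = s * t * (|f x| / s * (|g x| / t)) := by
          rw [abs_mul]; field_simp
        rw [e]
        refine mul_le_mul_of_nonneg_left (hy.trans ?_) (by positivity)
        rw [div_eq_inv_mul _ (conjExp p x), div_eq_inv_mul _ (p x)]
        gcongr
    _ = ENNReal.ofReal (s * t) * (ENNReal.ofReal (1 - v) * modu (conjExp p) s f +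
          ENNReal.ofReal u * modu p t g) := by
        rw [lintegral_const_mul' _ _ ENNReal.ofReal_ne_top, lintegral_add_left' (hm.const_mul _),
          lintegral_const_mul' _ _ ENNReal.ofReal_ne_top,
          lintegral_const_mul' _ _ ENNReal.ofReal_ne_top]
        rfl
    _ ≤ ENNReal.ofReal (s * t) * (ENNReal.ofReal (1 - v) * 1 + ENNReal.ofReal u * 1) := by
        gcongr; exact hfs
    _ = _ := by
        rw [mul_one, mul_one, ← ENNReal.ofReal_add (by linarith) hu0.le,
          ← ENNReal.ofReal_mul (by positivity)]
        congr 1; unfold rp; ring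

lemma ae_rpow_tendsto {q s : ℝ} (hs : 0 < s) {u : ℕ → ℝ} {l : ℝ}
    (h : Tendsto u atTop (𝓝 l)) :
    Tendsto (fun k => (ENNReal.ofReal |u k| / ENNReal.ofReal s) ^ q) atTop
      (𝓝 ((ENNReal.ofReal |l| / ENNReal.ofReal s) ^ q)) := by
  simp only [← ENNReal.ofReal_div_of_pos hs]
  exact (ENNReal.continuous_rpow_const (y := q)).continuousAt.tendsto.comp
    ((ENNReal.tendsto_ofReal (h.abs.div_const s)))

lemma ofReal_le_of_forall_lt {X : ℝ≥0∞} {s : ℝ} (h : ∀ t, s < t → X ≤ ENNReal.ofReal t) :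
    X ≤ ENNReal.ofReal s := by
  have h1 : Tendsto (fun k : ℕ => ENNReal.ofReal (s + eps k)) atTop (𝓝 (ENNReal.ofReal (s + 0))) :=
    ENNReal.tendsto_ofReal ((eps_tendsto.mono_right nhdsWithin_le_nhds).const_add s)
  rw [add_zero] at h1
  exact ge_of_tendsto' h1 fun k => h _ (by have := eps_pos k; linarith)

/-- The Fatou property of the Luxemburg norm. -/
lemma vNorm_fatou {n : ℕ} {q f : E n → ℝ} (hq : IsExp q) {F : ℕ → E n → ℝ} {s : ℝ} (hs : 0 ≤ s)
    (hF : ∀ k, AEStronglyMeasurable (F k)) (hb : ∀ᶠ k in atTop, vNorm q (F k) ≤ ENNReal.ofReal s)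
    (hlim : ∀ᵐ x, Tendsto (fun k => F k x) atTop (𝓝 (f x))) : vNorm q f ≤ ENNReal.ofReal s := by
  refine ofReal_le_of_forall_lt fun t hst => ?_
  have ht : 0 < t := hs.trans_lt hst
  refine vNorm_le_of_modu ht ?_
  calc modu q t f = ∫⁻ x, liminf (fun k => (ENNReal.ofReal |F k x| / ENNReal.ofReal t) ^ (q x))
        atTop := by
        refine lintegral_congr_ae ?_
        filter_upwards [hlim] with x hx
        exact (ae_rpow_tendsto ht hx).liminf_eq.symm
    _ ≤ liminf (fun k => modu q t (F k)) atTop := lintegral_liminf_le' fun k => modu_aem hq (hF k) t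
    _ ≤ 1 := by
        refine (liminf_le_of_frequently_le' (Eventually.frequently ?_))
        filter_upwards [hb] with k hk
        exact modu_le_of_vNorm hq.nonneg
          (hk.trans_lt ((ENNReal.ofReal_lt_ofReal_iff ht).2 hst))

/-- A bound valid a.e. for the modular integrand of a bounded function supported in a ball. -/
lemma modu_dom {n : ℕ} {q : E n → ℝ} (hq : IsExp q) {B R s : ℝ} (hs : 0 < s) :
    ∃ D : E n → ℝ≥0∞, ∫⁻ x, D x ≠ ⊤ ∧ ∀ f : E n → ℝ, (∀ x, |f x| ≤ B) →
      (∀ y, R < ‖y‖ → f y = 0) →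
      ∀ᵐ x, (ENNReal.ofReal |f x| / ENNReal.ofReal s) ^ (q x) ≤ D x := by
  obtain ⟨b, hb1, hb⟩ := hq.bdd
  refine ⟨(closedBall (0 : E n) R).indicator fun _ => ENNReal.ofReal (max (B / s) 1) ^ b, ?_,
    fun f hf hfs => ?_⟩
  · rw [lintegral_indicator_const isClosed_closedBall.measurableSet]
    exact ENNReal.mul_ne_top (ENNReal.rpow_ne_top_of_nonneg (by linarith) ENNReal.ofReal_ne_top)
      measure_closedBall_lt_top.ne
  · filter_upwards [hb, hq.one_le] with x hx hx1
    by_cases hxR : x ∈ closedBall (0 : E n) R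
    · rw [indicator_of_mem hxR, ← ENNReal.ofReal_div_of_pos hs]
      calc _ ≤ ENNReal.ofReal (max (B / s) 1) ^ (q x) := by
            refine ENNReal.rpow_le_rpow (ENNReal.ofReal_le_ofReal ?_) (by linarith)
            exact le_max_of_le_left (by gcongr; exact hf x)
        _ ≤ _ := ENNReal.rpow_le_rpow_of_exponent_le
            (ENNReal.one_le_ofReal.2 (le_max_right _ _)) hx
    · rw [hfs x (by simpa using hxR), abs_zero, ENNReal.ofReal_zero, ENNReal.zero_div,
        ENNReal.zero_rpow_of_pos (by linarith)]
      exact zero_le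

lemma modu_tendsto {n : ℕ} {q f : E n → ℝ} (hq : IsExp q) {F : ℕ → E n → ℝ} {B R s : ℝ}
    (hs : 0 < s) (hF : ∀ k, AEStronglyMeasurable (F k)) (hB : ∀ k x, |F k x| ≤ B)
    (hR : ∀ k y, R < ‖y‖ → F k y = 0)
    (hlim : ∀ᵐ x, Tendsto (fun k => F k x) atTop (𝓝 (f x))) :
    Tendsto (fun k => modu q s (F k)) atTop (𝓝 (modu q s f)) := by
  obtain ⟨D, hD, hDf⟩ := modu_dom (B := B) (R := R) hq hs
  exact tendsto_lintegral_of_dominated_convergence' D (fun k => modu_aem hq (hF k) s)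
    (fun k => hDf _ (hB k) (hR k)) hD
    (hlim.mono fun x hx => ae_rpow_tendsto hs hx)

/-- Upper semicontinuity of the norm along bounded sequences of common compact support. -/
lemma vNorm_lt_eventually {n : ℕ} {q f : E n → ℝ} (hq : IsExp q) {F : ℕ → E n → ℝ} {B R s : ℝ}
    (hF : ∀ k, AEStronglyMeasurable (F k)) (hB : ∀ k x, |F k x| ≤ B)
    (hR : ∀ k y, R < ‖y‖ → F k y = 0)
    (hlim : ∀ᵐ x, Tendsto (fun k => F k x) atTop (𝓝 (f x)))
    (hfs : vNorm q f < ENNReal.ofReal s) :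
    ∀ᶠ k in atTop, vNorm q (F k) < ENNReal.ofReal s := by
  obtain ⟨l, hl1, hl2⟩ := exists_between hfs
  have hl : l ≠ ⊤ := hl2.ne_top
  have hl0 : 0 < l.toReal := ENNReal.toReal_pos (pos_of_gt hl1).ne' hl
  rw [← ENNReal.ofReal_toReal hl] at hl1 hl2
  have hs : 0 < s := by
    by_contra hc
    rw [ENNReal.ofReal_of_nonpos (not_lt.1 hc)] at hl2
    exact ENNReal.not_lt_zero hl2
  set r := l.toReal
  have hrs : r < s := (ENNReal.ofReal_lt_ofReal_iff hs).1 hl2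
  set t := (r + s) / 2 with ht
  have hrt : r < t := by rw [ht]; linarith
  have hts : t < s := by rw [ht]; linarith
  have ht0 : 0 < t := hl0.trans hrt
  have hlt : modu q t f < 1 := by
    refine (modu_scale hq hl0 hrt.le).trans_lt ?_
    calc _ ≤ ENNReal.ofReal (r / t) * 1 := by gcongr; exact modu_le_of_vNorm hq.nonneg hl1
      _ < 1 := by rw [mul_one, ENNReal.ofReal_lt_one, div_lt_one ht0]; exact hrt
  filter_upwards [(modu_tendsto hq ht0 hF hB hR hlim).eventually (gt_mem_nhds hlt)] with k hk
  exact (vNorm_le_of_modu ht0 hk.le).trans_lt ((ENNReal.ofReal_lt_ofReal_iff hs).2 hts)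

lemma vNorm_lt_top {n : ℕ} {q f : E n → ℝ} (hq : IsExp q) (hf : MemLinftyC f) :
    vNorm q f < ⊤ := by
  obtain ⟨R, hR, hs⟩ := hcs_radius hf.2.2
  obtain ⟨B, hB⟩ := hf.2.1
  obtain ⟨D, hD, hDf⟩ := modu_dom (B := B) (R := R) hq one_pos
  have hfin : modu q 1 f < ⊤ := (lintegral_mono_ae (hDf f hB hs)).trans_lt hD.lt_top
  set I := (modu q 1 f).toReal with hI
  have hI0 : 0 ≤ I := toReal_nonneg
  have := modu_scale (f := f) hq one_pos (by linarith : 1 ≤ 1 + I)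
  refine (vNorm_le_of_modu (by positivity) (this.trans ?_)).trans_lt ENNReal.ofReal_lt_top
  rw [← ENNReal.ofReal_toReal hfin.ne, ← hI, ← ENNReal.ofReal_mul (by positivity)]
  rw [ENNReal.ofReal_le_one, div_mul_eq_mul_div, div_le_one (by positivity)]
  linarith

/-! ### Norm conjugation -/

lemma MemLinftyC.integrable {n : ℕ} {f : E n → ℝ} (hf : MemLinftyC f) : Integrable f := by
  obtain ⟨B, hB⟩ := hf.2.1
  have h : IntegrableOn f (tsupport f) := by
    refine Measure.integrableOn_of_bounded (M := B) hf.2.2.isCompact.measure_lt_top.ne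
      hf.1.aestronglyMeasurable (Eventually.of_forall fun x => hB x)
  exact (integrableOn_iff_integrable_of_support_subset (subset_tsupport f)).1 h

lemma clamp_lip {B s t : ℝ} (hB : 0 ≤ B) :
    |max (-B) (min s B) - max (-B) (min t B)| ≤ |s - t| := by
  rw [abs_le]
  have h1 := le_abs_self (s - t)
  have h2 := neg_abs_le (s - t)
  have h3 := abs_nonneg (s - t)
  simp only [max_def, min_def]
  constructor <;> split_ifs <;> linarith

lemma clamp_id {B t : ℝ} (h : |t| ≤ B) : max (-B) (min t B) = t := by
  rw [min_eq_left (abs_le.1 h).2, max_eq_right (abs_le.1 h).1]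

lemma clamp_bdd {B t : ℝ} (hB : 0 ≤ B) : |max (-B) (min t B)| ≤ B :=
  abs_le.2 ⟨le_max_left _ _, max_le (by linarith) (min_le_right _ _)⟩

/-- Bounded functions of compact support are a.e. limits of bounded sequences of Lipschitz
functions of common compact support. -/
lemma nice_seq {n : ℕ} {f : E n → ℝ} (hf : MemLinftyC f) :
    ∃ (F : ℕ → E n → ℝ) (B R : ℝ), 0 < R ∧ (∀ k, Nice (F k)) ∧ (∀ k x, |F k x| ≤ B) ∧
      (∀ x, |f x| ≤ B) ∧ (∀ k y, R < ‖y‖ → F k y = 0) ∧ (∀ y, R < ‖y‖ → f y = 0) ∧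
      ∀ᵐ x, Tendsto (fun k => F k x) atTop (𝓝 (f x)) := by
  obtain ⟨R, hR, hs⟩ := hcs_radius hf.2.2
  obtain ⟨B, hB⟩ := hf.2.1
  have hB0 : 0 ≤ B := (abs_nonneg _).trans (hB 0)
  choose G hG1 hG2 hG3 using fun k : ℕ => nice_approx hf.integrable hR hs (eps_pos k)
  set H : ℕ → E n → ℝ := fun k x => max (-B) (min (G k x) B) with hH
  have hN : ∀ k, Nice (H k) := by
    intro k
    refine ⟨?_, ?_⟩
    · refine HasCompactSupport.intro (isCompact_closedBall (0 : E n) (2 * R)) fun x hx => ?_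
      have : G k x = 0 := hG2 k x (by simpa using hx)
      rw [hH]; simp only
      rw [this]
      exact clamp_id (by simpa using hB0)
    · obtain ⟨L, hL, hl⟩ := (hG1 k).lip
      exact ⟨L, hL, fun x y => (clamp_lip hB0).trans (hl x y)⟩
  have hm : TendstoInMeasure volume H atTop f := by
    refine tendstoInMeasure_of_tendsto_eLpNorm one_ne_zero
      (fun k => (hN k).integrable.1) hf.integrable.1 ?_
    have hz : Tendsto (fun k => ENNReal.ofReal (eps k)) atTop (𝓝 0) := by
      have := ENNReal.tendsto_ofReal (eps_tendsto.mono_right nhdsWithin_le_nhds)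
      rwa [ENNReal.ofReal_zero] at this
    refine tendsto_of_tendsto_of_tendsto_of_le_of_le tendsto_const_nhds hz (fun _ => zero_le)
      fun k => ?_
    simp only
    rw [eLpNorm_one_eq_lintegral_enorm]
    refine le_trans (lintegral_mono fun x => ?_) (hG3 k)
    rw [Pi.sub_apply, Real.enorm_eq_ofReal_abs, Real.enorm_eq_ofReal_abs]
    refine ENNReal.ofReal_le_ofReal ?_
    rw [abs_sub_comm]
    have := clamp_lip (s := f x) (t := G k x) hB0
    rwa [clamp_id (hB x)] at this
  obtain ⟨ns, -, hns⟩ := hm.exists_seq_tendsto_ae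
  refine ⟨fun k => H (ns k), B, 2 * R, by positivity, fun k => hN _, fun k x => clamp_bdd hB0, hB,
    fun k y hy => ?_, fun y hy => hs y (by linarith), hns⟩
  rw [hH]; simp only
  rw [hG2 _ y hy]
  exact clamp_id (by simpa using hB0)

/-- Testing against Lipschitz functions suffices to control all bounded test functions. -/
lemma test_extend {n : ℕ} {q h : E n → ℝ} (hq : IsExp q) {A : ℝ}
    (hh : AEStronglyMeasurable h)
    (hi : ∀ g, MemLinftyC g → Integrable fun x => h x * g x)
    (ht : ∀ g t, Nice g → 0 < t → vNorm q g < ENNReal.ofReal t → |∫ x, h x * g x| ≤ A * t)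
    {g : E n → ℝ} {t : ℝ} (hg : MemLinftyC g) (ht0 : 0 < t) (hgt : vNorm q g < ENNReal.ofReal t) :
    |∫ x, h x * g x| ≤ A * t := by
  obtain ⟨F, B, R, hR, hN, hFB, hgB, hFR, hgR, hlim⟩ := nice_seq hg
  have hB0 : 0 ≤ B := (abs_nonneg _).trans (hgB 0)
  have hev := vNorm_lt_eventually hq (fun k => (hN k).integrable.1) hFB hFR hlim hgt
  have hχ : MemLinftyC ((closedBall (0 : E n) R).indicator fun _ => B) := by
    refine ⟨measurable_const.indicator isClosed_closedBall.measurableSet, ⟨B, fun x => ?_⟩,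
      HasCompactSupport.intro (isCompact_closedBall (0 : E n) R) fun x hx =>
        indicator_of_notMem hx _⟩
    by_cases hx : x ∈ closedBall (0 : E n) R
    · rw [indicator_of_mem hx, abs_of_nonneg hB0]
    · rw [indicator_of_notMem hx, abs_zero]; exact hB0
  have hl : Tendsto (fun k => ∫ x, h x * F k x) atTop (𝓝 (∫ x, h x * g x)) := by
    refine tendsto_integral_of_dominated_convergence _
      (fun k => hh.mul (hN k).integrable.1) (hi _ hχ).norm (fun k => ?_) ?_
    · refine Eventually.of_forall fun x => ?_
      rw [norm_mul, norm_mul]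
      refine mul_le_mul_of_nonneg_left ?_ (norm_nonneg _)
      by_cases hx : x ∈ closedBall (0 : E n) R
      · rw [indicator_of_mem hx, Real.norm_of_nonneg hB0]; exact hFB k x
      · rw [hFR k x (by simpa using hx), norm_zero]; exact norm_nonneg _
    · filter_upwards [hlim] with x hx
      exact hx.const_mul _
  refine le_of_tendsto hl.abs ?_
  filter_upwards [hev] with k hk
  exact ht _ t (hN k) ht0 hk

/-- A function whose pairings with the Lipschitz functions of compact support in the unit ball of
`L^{p(·)}` are at most `A` has norm at most `A` in `L^{p'(·)}`, here for measurable `h`. The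
extremal test functions are `sign(h) |h|^{p'-1}`, with `|h|` scaled and truncated in size and
support; note that `p' - 1 = (p - 1)⁻¹`. -/
lemma norm_conj_meas {n : ℕ} {p h : E n → ℝ} (hp : GoodExp p) {A : ℝ} (hA : 0 < A)
    (hh : Measurable h)
    (hi : ∀ g, MemLinftyC g → Integrable fun x => h x * g x)
    (ht : ∀ g t, Nice g → 0 < t → vNorm p g < ENNReal.ofReal t → |∫ x, h x * g x| ≤ A * t) :
    vNorm (conjExp p) h ≤ ENNReal.ofReal A := by
  refine ofReal_le_of_forall_lt fun A' hAA => ?_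
  have hA' : 0 < A' := hA.trans hAA
  have h1 := hp.2.2.1
  set c := (essInf p volume - 1)⁻¹ with hc
  have hc0 : 0 < c := inv_pos.2 (by linarith)
  set hm : ℕ → E n → ℝ := fun m x => if ‖x‖ ≤ m then min (|h x| / A') m else 0 with hhm
  have hm0 : ∀ m x, 0 ≤ hm m x := by
    intro m x; rw [hhm]; simp only
    split_ifs
    · positivity
    · exact le_rfl
  have hmle : ∀ m x, hm m x ≤ m := by
    intro m x; rw [hhm]; simp only
    split_ifs
    · exact min_le_right _ _
    · positivity
  have hmle' : ∀ m x, A' * hm m x ≤ |h x| := by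
    intro m x
    rw [mul_comm, ← le_div_iff₀ hA']
    rw [hhm]; simp only
    split_ifs
    · exact min_le_left _ _
    · positivity
  have hmm : ∀ m, Measurable (hm m) := fun m =>
    Measurable.ite (measurableSet_le measurable_norm measurable_const)
      ((hh.abs.div_const _).min measurable_const) measurable_const
  have hmz : ∀ (m : ℕ) x, (m : ℝ) < ‖x‖ → hm m x = 0 := by
    intro m x hx; rw [hhm]; simp only
    rw [if_neg (not_le.2 hx)]
  have hcm := hp.isExp_conj
  have hlim : ∀ x, Tendsto (fun m => A' * hm m x) atTop (𝓝 |h x|) := by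
    intro x
    refine tendsto_const_nhds.congr' ?_
    filter_upwards [tendsto_natCast_atTop_atTop.eventually_ge_atTop (max ‖x‖ (|h x| / A'))]
      with m hmx
    rw [hhm]; simp only
    rw [if_pos ((le_max_left _ _).trans hmx), min_eq_left ((le_max_right _ _).trans hmx)]
    field_simp
  have key : ∀ m, modu (conjExp p) A' (fun x => A' * hm m x) ≤ 1 := by
    intro m
    rw [modu_eq hcm.nonneg hA']
    set J : E n → ℝ := fun x => hm m x ^ conjExp p x with hJ
    have e0 : ∀ x, |A' * hm m x| / A' = hm m x := fun x => by
      rw [abs_of_nonneg (mul_nonneg hA'.le (hm0 m x))]; field_simp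
    simp only [e0]
    have hJ0 : ∀ x, 0 ≤ J x := fun x => Real.rpow_nonneg (hm0 m x) _
    have hJm : Measurable J := (hmm m).pow hcm.meas
    -- The exponent `(p - 1)⁻¹` of the test function is bounded by `c` only where `p` is at least its
    -- essential infimum; the test function is set to zero on the exceptional null set.
    set S : Set (E n) := {x | essInf p volume ≤ p x} with hS
    have hSm : MeasurableSet S := measurableSet_le measurable_const hp.1
    set sg : E n → ℝ := fun x => if 0 ≤ h x then 1 else -1 with hsg
    have hsgm : Measurable sg :=
      Measurable.ite (measurableSet_le measurable_const hh) measurable_const measurable_const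
    set g : E n → ℝ := S.indicator fun x => sg x * hm m x ^ (p x - 1)⁻¹ with hg
    have hsga : ∀ x, |sg x| = 1 := by
      intro x; rw [hsg]; simp only
      split_ifs <;> simp
    have hhsg : ∀ x, h x * sg x = |h x| := by
      intro x; rw [hsg]; simp only
      split_ifs with hx
      · rw [abs_of_nonneg hx, mul_one]
      · rw [abs_of_neg (not_le.1 hx)]; ring
    have hexp : ∀ x ∈ S, 0 < (p x - 1)⁻¹ ∧ (p x - 1)⁻¹ ≤ c := by
      intro x hx
      have hx' : essInf p volume ≤ p x := hx
      exact ⟨inv_pos.2 (by linarith), inv_anti₀ (by linarith) (by linarith)⟩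
    have hgM : MemLinftyC g := by
      refine ⟨(hsgm.mul ((hmm m).pow (hp.1.sub_const 1).inv)).indicator hSm,
        ⟨(max (m : ℝ) 1) ^ c, fun x => ?_⟩,
        HasCompactSupport.intro (isCompact_closedBall (0 : E n) m) fun x hx => ?_⟩
      · by_cases hx : x ∈ S
        · rw [hg, indicator_of_mem hx, abs_mul, hsga, one_mul,
            abs_of_nonneg (Real.rpow_nonneg (hm0 m x) _)]
          calc _ ≤ (max (m : ℝ) 1) ^ (p x - 1)⁻¹ :=
                Real.rpow_le_rpow (hm0 m x) (le_max_of_le_left (hmle m x)) (hexp x hx).1.le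
            _ ≤ _ := Real.rpow_le_rpow_of_exponent_le (le_max_right _ _) (hexp x hx).2
        · rw [hg, indicator_of_notMem hx, abs_zero]; positivity
      · by_cases hxS : x ∈ S
        · rw [hg, indicator_of_mem hxS, hmz m x (by simpa using hx),
            Real.zero_rpow (hexp x hxS).1.ne', mul_zero]
        · rw [hg, indicator_of_notMem hxS]
    have hSae : ∀ᵐ x, x ∈ S := hp.ae_inf
    have hpt : ∀ x ∈ S, A' * J x ≤ h x * g x := by
      intro x hx
      have hx' : essInf p volume ≤ p x := hx
      have hne : p x - 1 ≠ 0 := by linarith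
      have hce : conjExp p x = 1 + (p x - 1)⁻¹ := by unfold conjExp; field_simp; ring
      rw [hg, indicator_of_mem hx, ← mul_assoc, hhsg, hJ]; simp only
      have hpos : 0 < 1 + (p x - 1)⁻¹ := by linarith [(hexp x hx).1]
      rw [hce, Real.rpow_add' (hm0 m x) hpos.ne', Real.rpow_one, ← mul_assoc]
      exact mul_le_mul_of_nonneg_right (hmle' m x) (Real.rpow_nonneg (hm0 m x) _)
    have hgi := hi g hgM
    have hJi : Integrable J := by
      have : Integrable fun x => A' * J x := by
        refine hgi.mono' (hJm.const_mul A').aestronglyMeasurable ?_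
        filter_upwards [hSae] with x hx
        rw [Real.norm_of_nonneg (mul_nonneg hA'.le (hJ0 x))]
        exact hpt x hx
      exact (integrable_const_mul_iff (isUnit_iff_ne_zero.2 hA'.ne') J).1 this
    rw [← ofReal_integral_eq_lintegral_ofReal hJi (Eventually.of_forall hJ0), ENNReal.ofReal_le_one]
    by_contra hcon
    rw [not_le] at hcon
    set I := ∫ x, J x with hI
    have hI0 : 0 < I := one_pos.trans hcon
    have low : A' * I ≤ ∫ x, h x * g x := by
      rw [hI, ← integral_const_mul]
      exact integral_mono_ae (hJi.const_mul A') hgi (hSae.mono hpt)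
    have hng : vNorm p g ≤ ENNReal.ofReal I := by
      refine vNorm_le_of_modu hI0 ?_
      rw [modu_eq hp.isExp.nonneg hI0]
      calc ∫⁻ x, ENNReal.ofReal ((|g x| / I) ^ p x)
          ≤ ∫⁻ x, ENNReal.ofReal (J x / I) := by
            refine lintegral_mono_ae ?_
            filter_upwards [hSae] with x hx
            have hx' : essInf p volume ≤ p x := hx
            refine ENNReal.ofReal_le_ofReal ?_
            rw [hg, indicator_of_mem hx, abs_mul, hsga, one_mul,
              abs_of_nonneg (Real.rpow_nonneg (hm0 m x) _),
              Real.div_rpow (Real.rpow_nonneg (hm0 m x) _) hI0.le, ← Real.rpow_mul (hm0 m x)]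
            have hce : (p x - 1)⁻¹ * p x = conjExp p x := by
              unfold conjExp; rw [div_eq_inv_mul]
            rw [hce]
            refine div_le_div_of_nonneg_left (hJ0 x) hI0 ?_
            calc I = I ^ (1 : ℝ) := (Real.rpow_one _).symm
              _ ≤ _ := Real.rpow_le_rpow_of_exponent_le hcon.le (by linarith)
        _ = 1 := by
            rw [← ofReal_integral_eq_lintegral_ofReal (hJi.div_const I)
              (Eventually.of_forall fun x => div_nonneg (hJ0 x) hI0.le), integral_div, ← hI,
              div_self hI0.ne', ENNReal.ofReal_one]
    -- any `t` strictly between `I` and `(A' / A) * I` contradicts the test hypothesis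
    set t := (A' / A + 1) / 2 * I with htd
    have hr : 1 < A' / A := (one_lt_div hA).2 hAA
    have hIt : I < t := by
      rw [htd]; nlinarith
    have := test_extend hp.isExp hh.aestronglyMeasurable hi ht hgM (hI0.trans hIt)
      (hng.trans_lt ((ENNReal.ofReal_lt_ofReal_iff (hI0.trans hIt)).2 hIt))
    have h3 : A' * I ≤ A * t := low.trans ((le_abs_self _).trans this)
    have h4 : A * t = (A' + A) / 2 * I := by rw [htd]; field_simp
    rw [h4] at h3
    nlinarith
  have hfin := vNorm_fatou (f := fun x => |h x|) hcm hA'.le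
    (fun m => ((hmm m).const_mul A').aestronglyMeasurable)
    (Eventually.of_forall fun m => vNorm_le_of_modu hA' (key m)) (Eventually.of_forall hlim)
  rwa [vNorm_congr (g := h) (Eventually.of_forall fun x => abs_abs _)] at hfin

/-- Norm conjugation for a.e. strongly measurable `h`, through a measurable representative. -/
lemma norm_conj {n : ℕ} {p h : E n → ℝ} (hp : GoodExp p) {A : ℝ} (hA : 0 < A)
    (hh : AEStronglyMeasurable h)
    (hi : ∀ g, MemLinftyC g → Integrable fun x => h x * g x)
    (ht : ∀ g t, Nice g → 0 < t → vNorm p g < ENNReal.ofReal t → |∫ x, h x * g x| ≤ A * t) :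
    vNorm (conjExp p) h ≤ ENNReal.ofReal A := by
  have e := hh.ae_eq_mk
  have e' : ∀ g : E n → ℝ, (fun x => h x * g x) =ᵐ[volume] fun x => hh.mk h x * g x := fun g =>
    e.mono fun x hx => by simp only [hx]
  rw [vNorm_congr (g := hh.mk h) (e.mono fun x hx => by rw [hx])]
  refine norm_conj_meas hp hA hh.stronglyMeasurable_mk.measurable
    (fun g hg => (hi g hg).congr (e' g)) fun g t hg ht0 hgt => ?_
  rw [← integral_congr_ae (e' g)]
  exact ht g t hg ht0 hgt

/-! ### From Lipschitz to bounded functions -/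

lemma Tsing_aesm {n : ℕ} (hn : 0 < n) {Ω : E n → ℝ} (hK : IsCZKernel Ω)
    (hodd : ∀ x, Ω (-x) = -Ω x) {h : E n → ℝ} (hh : Integrable h) {R : ℝ}
    (hs : ∀ y, R < ‖y‖ → h y = 0) : AEStronglyMeasurable (Tsing Ω h) :=
  aestronglyMeasurable_of_tendsto_ae atTop (fun k => Teps_aesm hK hh.1 (eps k))
    ((Tsing_ae hn hK hodd hh hs).mono fun _ hx => hx.comp eps_tendsto)

/-- Rapid `L¹` convergence gives a.e. convergence of the singular integrals, by the weak type
(1,1) inequality and Borel–Cantelli. -/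
lemma Tsing_conv {n : ℕ} (hn : 0 < n) {Ω : E n → ℝ} (hK : IsCZKernel Ω)
    (hodd : ∀ x, Ω (-x) = -Ω x) {h : E n → ℝ} {H : ℕ → E n → ℝ} {R : ℝ} (hR : 0 < R)
    (hh : Integrable h) (hs : ∀ y, R < ‖y‖ → h y = 0)
    (hH : ∀ k, Integrable (H k)) (hHs : ∀ k y, R < ‖y‖ → H k y = 0)
    (hd : ∀ k : ℕ, ∫⁻ y, ‖h y - H k y‖ₑ ≤ ENNReal.ofReal ((1 / 4) ^ k)) :
    ∀ᵐ x, Tendsto (fun k => Tsing Ω (H k) x) atTop (𝓝 (Tsing Ω h x)) := by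
  obtain ⟨A, hA, hw⟩ := Tst_weak1 hn hK hodd
  have hball : ∀ m : ℕ, ∀ᵐ x, ∀ᶠ k : ℕ in atTop,
      x ∉ {x | ENNReal.ofReal ((1 / 2) ^ k) < Tst Ω (fun y => h y - H k y) x} ∩
        closedBall (0 : E n) (R + m) := by
    intro m
    refine ae_eventually_notMem (ne_top_of_le_ne_top ?_ (ENNReal.tsum_le_tsum fun k =>
      (hw (R + m) ((1 / 2) ^ k) (fun y => h y - H k y) (by positivity) (by positivity)
        (hh.sub (hH k)) fun y hy => ?_).trans (mul_le_mul_right (hd k) _)))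
    · have e : ∀ k : ℕ, ENNReal.ofReal (A / (1 / 2) ^ k) * ENNReal.ofReal ((1 / 4) ^ k) =
          ENNReal.ofReal (A * (1 / 2) ^ k) := by
        intro k
        rw [← ENNReal.ofReal_mul (by positivity)]
        congr 1
        have : (1 / 4 : ℝ) ^ k = (1 / 2) ^ k * (1 / 2) ^ k := by rw [← mul_pow]; norm_num
        rw [this]; field_simp
      simp only [e]
      exact (((summable_geometric_of_lt_one (by norm_num) (by norm_num :
        (1 / 2 : ℝ) < 1)).mul_left A).tsum_ofReal_ne_top)
    · have hy' : R < ‖y‖ := by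
        have : (0 : ℝ) ≤ m := by positivity
        linarith
      rw [hs y hy', hHs k y hy', sub_zero]
  filter_upwards [ae_all_iff.2 hball, Tsing_ae hn hK hodd hh hs,
    ae_all_iff.2 fun k => Tsing_ae hn hK hodd (hH k) (hHs k)] with x h1 h2 h3
  obtain ⟨m, hm⟩ := exists_nat_ge ‖x‖
  have hxm : x ∈ closedBall (0 : E n) (R + m) := by
    simp only [mem_closedBall, dist_zero_right]; linarith
  rw [tendsto_iff_norm_sub_tendsto_zero]
  have hz : Tendsto (fun k : ℕ => (1 / 2 : ℝ) ^ k) atTop (𝓝 0) :=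
    tendsto_pow_atTop_nhds_zero_of_lt_one (by norm_num) (by norm_num)
  refine squeeze_zero' (Eventually.of_forall fun k => norm_nonneg _) ?_ hz
  filter_upwards [h1 m] with k hk
  have hk' : Tst Ω (fun y => h y - H k y) x ≤ ENNReal.ofReal ((1 / 2) ^ k) :=
    not_lt.1 fun hc => hk ⟨hc, hxm⟩
  rw [norm_sub_rev]
  refine le_of_tendsto (h2.sub (h3 k)).norm ?_
  filter_upwards [self_mem_nhdsWithin] with ε hε
  rw [← Teps_sub hK hh (hH k) hε]
  have := (le_Tst Ω (fun y => h y - H k y) x hε).trans hk'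
  rw [← ofReal_norm] at this
  exact (ENNReal.ofReal_le_ofReal_iff (by positivity)).1 this

/-- Every bounded `f` of compact support is approximated by Lipschitz functions along which the
commutators converge a.e. -/
lemma commutator_seq {n : ℕ} (hn : 0 < n) {Ω : E n → ℝ} (hK : IsCZKernel Ω)
    (hodd : ∀ x, Ω (-x) = -Ω x) {b : E n → ℝ} (hb : LocallyIntegrable b volume)
    {f : E n → ℝ} (hf : MemLinftyC f) :
    ∃ (F : ℕ → E n → ℝ) (B R : ℝ), (∀ k, Nice (F k)) ∧ (∀ k x, |F k x| ≤ B) ∧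
      (∀ k y, R < ‖y‖ → F k y = 0) ∧
      (∀ᵐ x, Tendsto (fun k => F k x) atTop (𝓝 (f x))) ∧
      ∀ᵐ x, Tendsto (fun k => commutator b Ω (F k) x) atTop (𝓝 (commutator b Ω f x)) := by
  obtain ⟨F, B, R, hR, hN, hFB, hfB, hFR, hfR, hlim⟩ := nice_seq hf
  have hB0 : 0 ≤ B := (abs_nonneg _).trans (hfB 0)
  have hbi : IntegrableOn b (closedBall (0 : E n) R) :=
    hb.integrableOn_isCompact (isCompact_closedBall _ _)
  have hint : ∀ {u g : E n → ℝ}, IntegrableOn u (closedBall (0 : E n) R) → Measurable g →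
      (∀ x, |g x| ≤ B) → (∀ y, R < ‖y‖ → g y = 0) → Integrable fun y => u y * g y := by
    intro u g hu hg hgB hgR
    have e : (fun y => u y * g y) = (closedBall (0 : E n) R).indicator (fun y => g y * u y) := by
      ext y
      by_cases hy : y ∈ closedBall (0 : E n) R
      · rw [indicator_of_mem hy, mul_comm]
      · rw [indicator_of_notMem hy, hgR y (by simpa using hy), mul_zero]
    rw [e, integrable_indicator_iff isClosed_closedBall.measurableSet]
    exact hu.bdd_mul hg.aestronglyMeasurable (Eventually.of_forall fun y => hgB y)
  -- `L¹` convergence of `u F_k` for `u = 1` and `u = b`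
  have hconv : ∀ u : E n → ℝ, IntegrableOn u (closedBall (0 : E n) R) →
      AEStronglyMeasurable u volume →
      Tendsto (fun k => ∫⁻ y, ‖u y * f y - u y * F k y‖ₑ) atTop (𝓝 0) := by
    intro u hu hum
    have hD : ∫⁻ y, (closedBall (0 : E n) R).indicator
        (fun y => ENNReal.ofReal (2 * B) * ‖u y‖ₑ) y ≠ ⊤ := by
      rw [lintegral_indicator isClosed_closedBall.measurableSet,
        lintegral_const_mul' _ _ ENNReal.ofReal_ne_top]
      exact ENNReal.mul_ne_top ENNReal.ofReal_ne_top hu.2.ne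
    have := tendsto_lintegral_of_dominated_convergence' (μ := (volume : Measure (E n)))
      (F := fun k y => ‖u y * f y - u y * F k y‖ₑ) (f := fun _ => 0) _
      (fun k => ((hum.mul hf.1.aestronglyMeasurable).sub
        (hum.mul (hN k).cont.aestronglyMeasurable)).enorm)
      (fun k => Eventually.of_forall fun y => ?_) hD ?_
    · simpa using this
    · by_cases hy : y ∈ closedBall (0 : E n) R
      · rw [indicator_of_mem hy]; simp only
        rw [← mul_sub, enorm_mul, mul_comm]
        gcongr
        rw [Real.enorm_eq_ofReal_abs]
        refine ENNReal.ofReal_le_ofReal ((abs_sub _ _).trans ?_)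
        linarith [hfB y, hFB k y]
      · have hy' : R < ‖y‖ := by simpa using hy
        simp only
        rw [hfR y hy', hFR k y hy']; simp
    · filter_upwards [hlim] with y hy
      have h1 : Tendsto (fun k => u y * f y - u y * F k y) atTop (𝓝 (u y * f y - u y * f y)) :=
        (hy.const_mul _).const_sub _
      rw [sub_self] at h1
      simpa using h1.enorm
  have c1 := hconv (fun _ => 1) (integrableOn_const measure_closedBall_lt_top.ne)
    aestronglyMeasurable_const
  simp only [one_mul] at c1
  have c2 := hconv b hbi hb.aestronglyMeasurable
  have hex : ∀ k : ℕ, ∃ j, k ≤ j ∧ ∫⁻ y, ‖f y - F j y‖ₑ ≤ ENNReal.ofReal ((1 / 4) ^ k) ∧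
      ∫⁻ y, ‖b y * f y - b y * F j y‖ₑ ≤ ENNReal.ofReal ((1 / 4) ^ k) := by
    intro k
    have hpos : (0 : ℝ≥0∞) < ENNReal.ofReal ((1 / 4) ^ k) := ENNReal.ofReal_pos.2 (by positivity)
    obtain ⟨j, h1, h2, h3⟩ := ((eventually_ge_atTop k).and
      ((c1.eventually (gt_mem_nhds hpos)).and (c2.eventually (gt_mem_nhds hpos)))).exists
    exact ⟨j, h1, h2.le, h3.le⟩
  choose φ hφ1 hφ2 hφ3 using hex
  have hφ : Tendsto φ atTop atTop := tendsto_atTop_mono hφ1 tendsto_id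
  refine ⟨fun k => F (φ k), B, R, fun k => hN _, fun k => hFB _, fun k => hFR _,
    hlim.mono fun x hx => hx.comp hφ, ?_⟩
  have t1 := Tsing_conv hn hK hodd hR hf.integrable hfR (fun k => (hN (φ k)).integrable)
    (fun k => hFR (φ k)) hφ2
  have t2 := Tsing_conv hn hK hodd hR (hint hbi hf.1 hfB hfR)
    (fun y hy => by rw [hfR y hy, mul_zero])
    (fun k => hint hbi (hN (φ k)).cont.measurable (hFB (φ k)) (hFR (φ k)))
    (fun k y hy => by rw [hFR (φ k) y hy, mul_zero]) hφ3
  filter_upwards [t1, t2] with x h1 h2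
  exact (h1.const_mul _).sub h2

lemma commutator_aesm {n : ℕ} (hn : 0 < n) {Ω : E n → ℝ} (hK : IsCZKernel Ω)
    (hodd : ∀ x, Ω (-x) = -Ω x) {b : E n → ℝ} (hb : LocallyIntegrable b volume)
    (hbll : ∀ Q : Set (E n), IsCube Q → MemLlogL Q b) {f : E n → ℝ} (hf : Nice f) :
    AEStronglyMeasurable (commutator b Ω f) := by
  obtain ⟨R, hR, hs⟩ := hcs_radius hf.hcs
  obtain ⟨B, hB0, hB⟩ := hf.bdd
  obtain ⟨ib, -⟩ := mul_llogl hb hbll hf.cont.measurable hR hB hs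
  exact (hb.aestronglyMeasurable.mul (hf.Tsing_aesm hn hK hodd)).sub
    (Tsing_aesm hn hK hodd ib (R := R) fun y hy => by rw [hs y hy, mul_zero])

/-- The estimate for Lipschitz `f`: Hölder's inequality applied to `∫ f [b,T]g`, followed by norm
conjugation. -/
lemma commutator_nice {n : ℕ} (hn : 0 < n) {p Ω : E n → ℝ} (hp : GoodExp p) (hK : IsCZKernel Ω)
    (hodd : ∀ x, Ω (-x) = -Ω x) {b : E n → ℝ} (hb : LocallyIntegrable b volume)
    (hbll : ∀ Q : Set (E n), IsCube Q → MemLlogL Q b) {C : ℝ} (hC : 0 < C)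
    (hbd : ∀ f : E n → ℝ, MemLinftyC f →
      vNorm p (commutator b Ω f) ≤ ENNReal.ofReal C * vNorm p f)
    {f : E n → ℝ} (hf : Nice f) {s : ℝ} (hs : 0 < s)
    (hfs : vNorm (conjExp p) f < ENNReal.ofReal s) :
    vNorm (conjExp p) (commutator b Ω f) ≤ ENNReal.ofReal (rp p * C * s) := by
  have hr := hp.one_le_rp
  refine norm_conj hp (by positivity) (commutator_aesm hn hK hodd hb hbll hf)
    (fun g hg => commutator_pair_integrable hn hK hodd hb hbll hf hg) fun g t hg ht hgt => ?_
  have h1 : vNorm p (commutator b Ω g) < ENNReal.ofReal (C * t) := by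
    refine (hbd g hg.memLinftyC).trans_lt ?_
    rw [ENNReal.ofReal_mul hC.le]
    exact ENNReal.mul_lt_mul_right (ENNReal.ofReal_pos.2 hC).ne' ENNReal.ofReal_ne_top hgt
  have h2 := holder_rp hp hs (mul_pos hC ht) hf.integrable.1
    (modu_le_of_vNorm hp.isExp_conj.nonneg hfs) (modu_le_of_vNorm hp.isExp.nonneg h1)
  rw [commutator_symm hn hK hodd hb hbll hf hg]
  have h3 : ‖∫ x, commutator b Ω g x * f x‖ₑ ≤ ENNReal.ofReal (rp p * (s * (C * t))) := by
    refine (enorm_integral_le_lintegral_enorm _).trans (le_trans (le_of_eq ?_) h2)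
    exact lintegral_congr fun x => by rw [mul_comm]
  rw [← ofReal_norm] at h3
  have h4 := (ENNReal.ofReal_le_ofReal_iff (by positivity)).1 h3
  rw [Real.norm_eq_abs] at h4
  refine h4.trans (le_of_eq (by ring))

end

/-- transference of boundedness of `[b,T]` to the conjugate exponent:
for `p` satisfying (*), an odd kernel and `b` locally in `L log L`, if
`‖[b,T]f‖_{L^{p(·)}} ≤ C‖f‖_{L^{p(·)}}` on `L^∞_c`, then
`‖[b,T]f‖_{L^{p'(·)}} ≤ r_p C ‖f‖_{L^{p'(·)}}` on `L^∞_c`. -/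
theorem statement17 {n : ℕ} (hn : 0 < n) (p Ω : E n → ℝ) (hp : GoodExp p)
    (hK : IsCZKernel Ω) (hodd : ∀ x, Ω (-x) = -Ω x)
    (b : E n → ℝ) (hb : LocallyIntegrable b volume)
    (hbll : ∀ Q : Set (E n), IsCube Q → MemLlogL Q b)
    (C : ℝ) (hC : 0 ≤ C)
    (hbd : ∀ f : E n → ℝ, MemLinftyC f →
      vNorm p (commutator b Ω f) ≤ ENNReal.ofReal C * vNorm p f) :
    ∀ f : E n → ℝ, MemLinftyC f →
      vNorm (conjExp p) (commutator b Ω f) ≤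
        ENNReal.ofReal (rp p * C) * vNorm (conjExp p) f := by
  intro f hf
  have hr := hp.one_le_rp
  have hfin := (vNorm_lt_top hp.isExp_conj hf).ne
  set S := (vNorm (conjExp p) f).toReal with hS
  have hS0 : 0 ≤ S := toReal_nonneg
  have hSe : vNorm (conjExp p) f = ENNReal.ofReal S := (ENNReal.ofReal_toReal hfin).symm
  -- Replacing `C` and the norm `S` of `f` by `C + δ` and `S + δ` makes both strictly positive and
  -- the second strictly larger than the norm of `f`, as the estimate for Lipschitz functions needs.
  have key : ∀ δ : ℝ, 0 < δ → vNorm (conjExp p) (commutator b Ω f) ≤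
      ENNReal.ofReal (rp p * (C + δ) * (S + δ)) := by
    intro δ hδ
    obtain ⟨F, B, R, hN, hFB, hFR, hlim, hclim⟩ := commutator_seq hn hK hodd hb hf
    have hlt : vNorm (conjExp p) f < ENNReal.ofReal (S + δ) := by
      rw [hSe, ENNReal.ofReal_lt_ofReal_iff (by positivity)]; linarith
    refine vNorm_fatou hp.isExp_conj (by positivity)
      (fun k => commutator_aesm hn hK hodd hb hbll (hN k)) ?_ hclim
    filter_upwards [vNorm_lt_eventually hp.isExp_conj (fun k => (hN k).integrable.1) hFB hFR hlim
      hlt] with k hk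
    refine commutator_nice hn hp hK hodd hb hbll (by positivity) (fun g hg => ?_) (hN k)
      (by positivity) hk
    exact (hbd g hg).trans (mul_le_mul_left (ENNReal.ofReal_le_ofReal (by linarith)) _)
  rw [hSe, ← ENNReal.ofReal_mul (by positivity)]
  have hcont : Continuous fun δ : ℝ => ENNReal.ofReal (rp p * (C + δ) * (S + δ)) := by
    exact ENNReal.continuous_ofReal.comp (by fun_prop)
  have hl : Tendsto (fun δ : ℝ => ENNReal.ofReal (rp p * (C + δ) * (S + δ))) (𝓝[>] 0)
      (𝓝 (ENNReal.ofReal (rp p * C * S))) := by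
    have := (hcont.tendsto 0).mono_left (nhdsWithin_le_nhds (s := Ioi 0))
    simpa using this
  exact ge_of_tendsto hl (eventually_mem_nhdsWithin.mono fun δ hδ => key δ hδ)

end VarExp
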